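/- arXiv:1708.08599 — 7 statements merged into one kernel-verified Lean document; each statement's English description precedes it below -/
import Mathlib

section
/- Let r be a positive integer and ε > 0. Then there exists a strictly increasing sequence (a_n)_{n≥1} of positive integers with E(A_N) = Θ( (log_r N)^{−ε} · N³ / ( log(N) · log₂(N) · … · log_r(N) ) ) such that NPPC((a_n)_n) has Hausdorff dimension 1 (full Hausdorff dimension). Here log_r denotes the r-fold iterated logarithm, log_r(x) := log_{r−1}(log x) and log₁(x) := log x. -/
open Filter MeasureTheory
open scoped Classical

/-- Distance from a real number to the nearest integer. -/
noncomputable def dni (x : ℝ) : ℝ := |x - round x|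

/-- Additive energy of a finite set of naturals:
`#{(a,b,c,d) ∈ I⁴ : a + b = c + d}`. -/
def addEnergy (A : Finset ℕ) : ℕ :=
  (((A ×ˢ A) ×ˢ (A ×ˢ A)).filter fun q => q.1.1 + q.1.2 = q.2.1 + q.2.2).card

/-- The truncation `A_N = {a_n : 1 ≤ n ≤ N}`. -/
def trunc (a : ℕ → ℕ) (N : ℕ) : Finset ℕ := (Finset.Icc 1 N).image a

/-- Pair correlation function `R([-s,s], α, N)`. -/
noncomputable def pcf (a : ℕ → ℕ) (s α : ℝ) (N : ℕ) : ℝ :=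
  (((Finset.Icc 1 N ×ˢ Finset.Icc 1 N).filter fun p =>
      p.1 ≠ p.2 ∧ dni (α * (a p.1 : ℝ) - α * (a p.2 : ℝ)) ≤ s / N).card : ℝ) / N

/-- `(α a_n)_n` has Poissonian pair correlations. -/
def hasPPC (a : ℕ → ℕ) (α : ℝ) : Prop :=
  ∀ s : ℝ, 0 ≤ s → Tendsto (fun N => pcf a s α N) atTop (nhds (2 * s))

/-- The exceptional set `NPPC((a_n)_n)` of `α ∈ (0,1)` without PPC. -/
def NPPC (a : ℕ → ℕ) : Set ℝ := {α | α ∈ Set.Ioo (0 : ℝ) 1 ∧ ¬ hasPPC a α}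

/-- `iterLog r x` is the `r`-fold iterated logarithm `log_r(x)`;
`iterLog 0 x = x`, `iterLog 1 x = log x`, `iterLog (r+1) x = iterLog r (log x)`. -/
noncomputable def iterLog : ℕ → ℝ → ℝ
  | 0, x => x
  | n + 1, x => iterLog n (Real.log x)

/-- The rapidly growing base points of the sequence. -/
def basePoint (i : ℕ) : ℕ := 2 ^ (i * (i + 8))

lemma basePoint_pos (i : ℕ) : 0 < basePoint i := by unfold basePoint; positivity

lemma basePoint_succ (i : ℕ) : basePoint (i + 1) = 2 ^ (2 * i + 9) * basePoint i := by
  unfold basePoint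
  rw [← pow_add]
  congr 1
  ring

lemma two_mul_add_one_lt_two_pow (i : ℕ) : 2 * i + 1 < 2 ^ (2 * i + 9) := by
  have h : 2 * i + 9 < 2 ^ (2 * i + 9) := Nat.lt_two_pow_self
  omega

lemma basePoint_strictMono : StrictMono basePoint := by
  refine strictMono_nat_of_lt_succ fun i => ?_
  rw [basePoint_succ]
  have := two_mul_add_one_lt_two_pow i
  have := basePoint_pos i
  nlinarith

lemma sum_mul_basePoint_lt (κ : ℕ → ℕ) (hκ : ∀ i, κ i ≤ 2 * i) (n : ℕ) :
    ∑ i ∈ Finset.range n, κ i * basePoint i < basePoint n := by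
  induction n with
  | zero => simp [basePoint]
  | succ n ih =>
    rw [Finset.sum_range_succ, basePoint_succ]
    have := two_mul_add_one_lt_two_pow n
    have := basePoint_pos n
    have := hκ n
    nlinarith

lemma coeff_eq_of_sum_mul_basePoint_eq (κ κ' : ℕ → ℕ) (hκ : ∀ i, κ i ≤ 2 * i)
    (hκ' : ∀ i, κ' i ≤ 2 * i) (n : ℕ)
    (h : ∑ i ∈ Finset.range n, κ i * basePoint i = ∑ i ∈ Finset.range n, κ' i * basePoint i) :
    ∀ i < n, κ i = κ' i := by
  induction n with
  | zero => simp
  | succ n ih =>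
    rw [Finset.sum_range_succ, Finset.sum_range_succ] at h
    have h1 := sum_mul_basePoint_lt κ hκ n
    have h2 := sum_mul_basePoint_lt κ' hκ' n
    have hn : κ n = κ' n := by
      have e1 := congrArg (· / basePoint n) h
      simpa [Nat.add_mul_div_right _ _ (basePoint_pos n), Nat.div_eq_of_lt h1,
        Nat.div_eq_of_lt h2] using e1
    rw [hn] at h
    intro i hi
    rcases Nat.lt_succ_iff_lt_or_eq.1 hi with hi | rfl
    · exact ih (Nat.add_right_cancel h) i hi
    · exact hn

/-- Two-term sums of small multiples of base points coincide only for trivial reasons. -/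
lemma add_mul_basePoint_eq {i₁ i₂ i₃ i₄ c₁ c₂ c₃ c₄ : ℕ}
    (h₁ : 1 ≤ c₁ ∧ c₁ ≤ i₁) (h₂ : 1 ≤ c₂ ∧ c₂ ≤ i₂) (h₃ : 1 ≤ c₃ ∧ c₃ ≤ i₃)
    (h₄ : 1 ≤ c₄ ∧ c₄ ≤ i₄)
    (h : c₁ * basePoint i₁ + c₂ * basePoint i₂ = c₃ * basePoint i₃ + c₄ * basePoint i₄) :
    (i₁ = i₃ ∧ c₁ = c₃ ∧ i₂ = i₄ ∧ c₂ = c₄) ∨ (i₁ = i₄ ∧ c₁ = c₄ ∧ i₂ = i₃ ∧ c₂ = c₃) ∨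
      (i₁ = i₂ ∧ i₁ = i₃ ∧ i₁ = i₄ ∧ c₁ + c₂ = c₃ + c₄) := by
  set n := i₁ + i₂ + i₃ + i₄ + 1 with hn
  have key := coeff_eq_of_sum_mul_basePoint_eq
    (fun i => (if i = i₁ then c₁ else 0) + (if i = i₂ then c₂ else 0))
    (fun i => (if i = i₃ then c₃ else 0) + (if i = i₄ then c₄ else 0))
    (fun i => by split_ifs <;> omega) (fun i => by split_ifs <;> omega) n
    (by
      have l₁ : i₁ < n := by omega
      have l₂ : i₂ < n := by omega
      have l₃ : i₃ < n := by omega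
      have l₄ : i₄ < n := by omega
      simpa [add_mul, ite_mul, Finset.sum_add_distrib, Finset.sum_ite_eq', l₁, l₂, l₃, l₄] using h)
  have k₁ := key i₁ (by omega)
  have k₂ := key i₂ (by omega)
  have k₃ := key i₃ (by omega)
  have k₄ := key i₄ (by omega)
  clear key h hn
  by_cases e₂ : i₁ = i₂ <;> by_cases e₃ : i₁ = i₃ <;> by_cases e₄ : i₁ = i₄ <;> grind

/-- Index of the base point used by the `n`-th term: in the dyadic block `[2 ^ k, 2 ^ (k + 1))`
the first `m k` terms share one base point, all others have their own. -/
def baseIndex (m : ℕ → ℕ) (n : ℕ) : ℕ :=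
  if n < 2 ^ Nat.log 2 n + m (Nat.log 2 n) then 2 ^ Nat.log 2 n else n

/-- In every dyadic block an arithmetic progression of length `m k`, followed by a very sparse
sequence. -/
def clusterSeq (m : ℕ → ℕ) (n : ℕ) : ℕ :=
  (n - baseIndex m n + 1) * basePoint (baseIndex m n)

lemma baseIndex_le (m : ℕ → ℕ) {n : ℕ} (hn : 1 ≤ n) : baseIndex m n ≤ n := by
  unfold baseIndex
  have := Nat.pow_log_le_self 2 (x := n) (by omega)
  split_ifs <;> omega

lemma coeff_le_baseIndex (m : ℕ → ℕ) {n : ℕ} (hn : 1 ≤ n) :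
    n - baseIndex m n + 1 ≤ baseIndex m n := by
  unfold baseIndex
  have h1 := Nat.pow_log_le_self 2 (x := n) (by omega)
  have h2 := Nat.lt_pow_succ_log_self (b := 2) (by norm_num) n
  rw [pow_succ] at h2
  split_ifs <;> omega

lemma baseIndex_of_mem {m : ℕ → ℕ} (hm : ∀ k, 2 * m k ≤ 2 ^ k) {k x : ℕ} (hx : x < m k) :
    baseIndex m (2 ^ k + x) = 2 ^ k := by
  have hk := hm k
  have : Nat.log 2 (2 ^ k + x) = k := by
    rw [Nat.log_eq_iff (by right; constructor <;> norm_num)]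
    rw [pow_succ]
    omega
  unfold baseIndex
  rw [this, if_pos (by omega)]

lemma clusterSeq_of_mem {m : ℕ → ℕ} (hm : ∀ k, 2 * m k ≤ 2 ^ k) {k x : ℕ} (hx : x < m k) :
    clusterSeq m (2 ^ k + x) = (x + 1) * basePoint (2 ^ k) := by
  unfold clusterSeq
  rw [baseIndex_of_mem hm hx, Nat.add_sub_cancel_left]

lemma clusterSeq_lt_succ (m : ℕ → ℕ) {n : ℕ} (hn : 1 ≤ n) :
    clusterSeq m n < clusterSeq m (n + 1) := by
  have hle := baseIndex_le m hn
  by_cases h : baseIndex m (n + 1) = n + 1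
  · have h1 : clusterSeq m n ≤ (n + 1) * basePoint n := by
      unfold clusterSeq
      exact Nat.mul_le_mul (by omega) (basePoint_strictMono.monotone hle)
    have h2 : clusterSeq m (n + 1) = basePoint (n + 1) := by
      unfold clusterSeq
      rw [h]; simp
    rw [h2, basePoint_succ]
    refine h1.trans_lt (Nat.mul_lt_mul_of_pos_right ?_ (basePoint_pos n))
    have := two_mul_add_one_lt_two_pow n
    omega
  · have e1 : baseIndex m (n + 1) = baseIndex m n := by
      have h0 : n + 1 < 2 ^ Nat.log 2 (n + 1) + m (Nat.log 2 (n + 1)) := by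
        by_contra hc
        exact h (by unfold baseIndex; rw [if_neg hc])
      have h1 := Nat.pow_log_le_self 2 (x := n + 1) (by omega)
      have h2 := Nat.lt_pow_succ_log_self (b := 2) (by norm_num) (n + 1)
      have h3 : 2 ^ Nat.log 2 (n + 1) ≠ n + 1 := by
        intro hc
        exact h (by unfold baseIndex; rw [if_pos h0, hc])
      have hlog : Nat.log 2 n = Nat.log 2 (n + 1) := by
        rw [Nat.log_eq_iff (by right; constructor <;> omega)]
        omega
      unfold baseIndex
      rw [hlog, if_pos h0, if_pos (by omega)]
    unfold clusterSeq
    rw [e1]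
    exact Nat.mul_lt_mul_of_pos_right (by omega) (basePoint_pos _)

lemma clusterSeq_pos (m : ℕ → ℕ) (n : ℕ) : 0 < clusterSeq m n :=
  Nat.mul_pos (Nat.succ_pos _) (basePoint_pos _)

lemma exists_eq_two_pow_add {m : ℕ → ℕ} {n i : ℕ} (hn : 1 ≤ n) (h : baseIndex m n = i)
    (hi : i < n) : ∃ x < m (Nat.log 2 n), i = 2 ^ Nat.log 2 n ∧ n = 2 ^ Nat.log 2 n + x := by
  have h1 := Nat.pow_log_le_self 2 (x := n) (by omega)
  unfold baseIndex at h
  split_ifs at h with h0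
  · exact ⟨n - 2 ^ Nat.log 2 n, by omega, by omega, by omega⟩
  · omega

lemma exists_cluster_of_baseIndex_eq {m : ℕ → ℕ} {n i : ℕ} {k : ℕ} (hn : 1 ≤ n)
    (h : baseIndex m n = i) (hik : i = 2 ^ k) (hk : 0 < m k) : ∃ x < m k, n = 2 ^ k + x := by
  rcases (h ▸ baseIndex_le m hn : i ≤ n).lt_or_eq with hi | hi
  · obtain ⟨x, hx, h1, h2⟩ := exists_eq_two_pow_add hn h hi
    have : Nat.log 2 n = k := Nat.pow_right_injective le_rfl (h1.symm.trans hik)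
    rw [this] at hx h2
    exact ⟨x, hx, h2⟩
  · exact ⟨0, hk, by omega⟩

lemma clusterSeq_add_eq {m : ℕ → ℕ} {n₁ n₂ n₃ n₄ : ℕ} (h₁ : 1 ≤ n₁) (h₂ : 1 ≤ n₂)
    (h₃ : 1 ≤ n₃) (h₄ : 1 ≤ n₄)
    (h : clusterSeq m n₁ + clusterSeq m n₂ = clusterSeq m n₃ + clusterSeq m n₄) :
    (n₁ = n₃ ∧ n₂ = n₄) ∨ (n₁ = n₄ ∧ n₂ = n₃) ∨
      ∃ k x y z, 2 ^ k ≤ n₁ ∧ x < m k ∧ y < m k ∧ z < m k ∧ n₁ = 2 ^ k + x ∧ n₂ = 2 ^ k + y ∧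
        n₃ = 2 ^ k + z ∧ n₄ = 2 ^ k + (x + y - z) := by
  have b₁ := baseIndex_le m h₁
  have b₂ := baseIndex_le m h₂
  have b₃ := baseIndex_le m h₃
  have b₄ := baseIndex_le m h₄
  rcases add_mul_basePoint_eq ⟨by omega, coeff_le_baseIndex m h₁⟩
    ⟨by omega, coeff_le_baseIndex m h₂⟩ ⟨by omega, coeff_le_baseIndex m h₃⟩
    ⟨by omega, coeff_le_baseIndex m h₄⟩ h with h | h | ⟨e₂, e₃, e₄, hc⟩
  · left; omega
  · right; left; omega
  · by_cases hall : n₁ = n₃ ∧ n₂ = n₄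
    · exact Or.inl hall
    · obtain ⟨k, hik, hk⟩ : ∃ k, baseIndex m n₁ = 2 ^ k ∧ 0 < m k := by
        by_cases c₁ : baseIndex m n₁ < n₁
        · obtain ⟨x, hx, h1, -⟩ := exists_eq_two_pow_add h₁ rfl c₁
          exact ⟨_, h1, by omega⟩
        · have c₂ : baseIndex m n₂ < n₂ := by omega
          obtain ⟨x, hx, h1, -⟩ := exists_eq_two_pow_add h₂ rfl c₂
          exact ⟨_, e₂.trans h1, by omega⟩
      obtain ⟨x, hx, hx'⟩ := exists_cluster_of_baseIndex_eq h₁ rfl hik hk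
      obtain ⟨y, hy, hy'⟩ := exists_cluster_of_baseIndex_eq h₂ e₂.symm hik hk
      obtain ⟨z, hz, hz'⟩ := exists_cluster_of_baseIndex_eq h₃ e₃.symm hik hk
      right; right
      exact ⟨k, x, y, z, by omega, hx, hy, hz, hx', hy', hz', by omega⟩

lemma addEnergy_clusterSeq_le (m : ℕ → ℕ) (N : ℕ) :
    addEnergy (trunc (clusterSeq m) N) ≤
      2 * N ^ 2 + ∑ k ∈ Finset.range (Nat.log 2 N + 1), m k ^ 3 := by
  set a := clusterSeq m
  set I := Finset.Icc 1 N
  set T₁ := (I ×ˢ I).image fun p => ((a p.1, a p.2), (a p.1, a p.2))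
  set T₂ := (I ×ˢ I).image fun p => ((a p.1, a p.2), (a p.2, a p.1))
  set S : ℕ → Finset ((ℕ × ℕ) × (ℕ × ℕ)) := fun k =>
    (Finset.range (m k) ×ˢ Finset.range (m k) ×ˢ Finset.range (m k)).image fun p =>
      ((a (2 ^ k + p.1), a (2 ^ k + p.2.1)),
        (a (2 ^ k + p.2.2), a (2 ^ k + (p.1 + p.2.1 - p.2.2))))
  have hsub : ((trunc a N ×ˢ trunc a N) ×ˢ (trunc a N ×ˢ trunc a N)).filter
      (fun q => q.1.1 + q.1.2 = q.2.1 + q.2.2) ⊆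
      (T₁ ∪ T₂) ∪ (Finset.range (Nat.log 2 N + 1)).biUnion S := by
    rintro ⟨⟨w₁, w₂⟩, w₃, w₄⟩ hq
    simp only [trunc, Finset.mem_filter, Finset.mem_product, Finset.mem_image,
      Finset.mem_Icc] at hq
    obtain ⟨⟨⟨⟨n₁, h₁, rfl⟩, n₂, h₂, rfl⟩, ⟨n₃, h₃, rfl⟩, n₄, h₄, rfl⟩, h⟩ := hq
    rw [Finset.mem_union, Finset.mem_union]
    rcases clusterSeq_add_eq h₁.1 h₂.1 h₃.1 h₄.1 h with ⟨rfl, rfl⟩ | ⟨rfl, rfl⟩ |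
      ⟨k, x, y, z, hk, hx, hy, hz, rfl, rfl, rfl, rfl⟩
    · left; left
      exact Finset.mem_image.2 ⟨(n₁, n₂), by simp [I, h₁, h₂], rfl⟩
    · left; right
      exact Finset.mem_image.2 ⟨(n₁, n₂), by simp [I, h₁, h₂], rfl⟩
    · right
      refine Finset.mem_biUnion.2 ⟨k, ?_, Finset.mem_image.2 ⟨(x, y, z), by simp [hx, hy, hz], rfl⟩⟩
      rw [Finset.mem_range, Nat.lt_succ_iff]
      exact Nat.le_log_of_pow_le (by norm_num) (hk.trans h₁.2)
  have hI : (I ×ˢ I).card = N ^ 2 := by simp [I, sq]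
  have c₁ : T₁.card ≤ N ^ 2 := Finset.card_image_le.trans hI.le
  have c₂ : T₂.card ≤ N ^ 2 := Finset.card_image_le.trans hI.le
  have c₃ : ((Finset.range (Nat.log 2 N + 1)).biUnion S).card ≤
      ∑ k ∈ Finset.range (Nat.log 2 N + 1), m k ^ 3 := by
    refine Finset.card_biUnion_le.trans (Finset.sum_le_sum fun k _ => ?_)
    refine Finset.card_image_le.trans ?_
    simp only [Finset.card_product, Finset.card_range]
    exact le_of_eq (by ring)
  unfold addEnergy
  refine (Finset.card_le_card hsub).trans ?_
  have u₁ := Finset.card_union_le (T₁ ∪ T₂) ((Finset.range (Nat.log 2 N + 1)).biUnion S)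
  have u₂ := Finset.card_union_le T₁ T₂
  omega

lemma clusterSeq_strictMonoOn (m : ℕ → ℕ) : StrictMonoOn (clusterSeq m) (Set.Ici 1) :=
  strictMonoOn_of_lt_add_one Set.ordConnected_Ici fun _ _ hn _ => clusterSeq_lt_succ m hn

lemma le_addEnergy_clusterSeq {m : ℕ → ℕ} (hm : ∀ k, 2 * m k ≤ 2 ^ k) {k N : ℕ}
    (hN : 2 ^ (k + 1) ≤ N) : (m k / 2) ^ 3 ≤ addEnergy (trunc (clusterSeq m) N) := by
  set h := m k / 2 with hh
  have hmk := hm k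
  have hk : 1 ≤ 2 ^ k := Nat.one_le_two_pow
  rw [pow_succ] at hN
  have hcard : (Finset.range h ×ˢ Finset.range h ×ˢ Finset.range h).card = h ^ 3 := by
    simp only [Finset.card_product, Finset.card_range]; ring
  rw [← hcard]
  refine Finset.card_le_card_of_injOn (fun p =>
    ((clusterSeq m (2 ^ k + (p.1 + p.2.2)), clusterSeq m (2 ^ k + p.2.1)),
      (clusterSeq m (2 ^ k + p.1), clusterSeq m (2 ^ k + (p.2.1 + p.2.2))))) ?_ ?_
  · rintro ⟨x, y, z⟩ hp
    simp only [Finset.coe_product, Finset.coe_range, Set.mem_prod, Set.mem_Iio] at hp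
    have hmem : ∀ w < m k, clusterSeq m (2 ^ k + w) ∈ trunc (clusterSeq m) N := fun w hw =>
      Finset.mem_image_of_mem _ (Finset.mem_Icc.2 ⟨by omega, by omega⟩)
    simp only [Finset.coe_filter, Finset.mem_product, Set.mem_ofPred_eq]
    refine ⟨⟨⟨hmem _ (by omega), hmem _ (by omega)⟩, hmem _ (by omega), hmem _ (by omega)⟩, ?_⟩
    rw [clusterSeq_of_mem hm (by omega), clusterSeq_of_mem hm (by omega),
      clusterSeq_of_mem hm (by omega), clusterSeq_of_mem hm (by omega)]
    ring
  · rintro ⟨x, y, z⟩ - ⟨x', y', z'⟩ - heq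
    have hinj := (clusterSeq_strictMonoOn m).injOn
    simp only [Prod.mk.injEq] at heq
    have e₁ := hinj (Set.mem_Ici.2 (by omega)) (Set.mem_Ici.2 (by omega)) heq.1.1
    have e₂ := hinj (Set.mem_Ici.2 (by omega)) (Set.mem_Ici.2 (by omega)) heq.1.2
    have e₃ := hinj (Set.mem_Ici.2 (by omega)) (Set.mem_Ici.2 (by omega)) heq.2.1
    simp only [Prod.mk.injEq]
    omega

lemma iterLog_succ (k : ℕ) (x : ℝ) : iterLog (k + 1) x = Real.log (iterLog k x) := by
  induction k generalizing x with
  | zero => rfl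
  | succ k ih => exact ih (Real.log x)

lemma tendsto_iterLog (k : ℕ) : Tendsto (iterLog k) atTop atTop := by
  induction k with
  | zero => exact tendsto_id
  | succ k ih => exact ih.comp Real.tendsto_log_atTop

lemma eventually_monotoneOn_iterLog (k : ℕ) :
    ∀ᶠ x₀ : ℝ in atTop, MonotoneOn (iterLog k) (Set.Ici x₀) := by
  induction k with
  | zero => exact Eventually.of_forall fun _ _ _ _ _ h => h
  | succ k ih =>
    filter_upwards [ih, (tendsto_iterLog k).eventually_gt_atTop 0] with x₀ h₀ h₁
    intro x hx y hy hxy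
    have hx' : 0 < iterLog k x := h₁.trans_le (h₀ Set.self_mem_Ici hx hx)
    rw [iterLog_succ, iterLog_succ]
    exact Real.log_le_log hx' (h₀ hx hy hxy)

lemma eventually_iterLog_two_mul_le (k : ℕ) :
    ∀ᶠ x : ℝ in atTop, iterLog (k + 1) (2 * x) ≤ iterLog (k + 1) x + 1 := by
  induction k with
  | zero =>
    filter_upwards [eventually_gt_atTop (0 : ℝ)] with x hx
    change Real.log (2 * x) ≤ Real.log x + 1
    rw [Real.log_mul (by norm_num) hx.ne']
    have := Real.log_le_sub_one_of_pos (show (0 : ℝ) < 2 by norm_num)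
    linarith
  | succ k ih =>
    have h2 : Tendsto (fun x : ℝ => 2 * x) atTop atTop := tendsto_id.const_mul_atTop (by norm_num)
    filter_upwards [ih, (tendsto_iterLog (k + 1)).eventually_ge_atTop 1,
      ((tendsto_iterLog (k + 1)).comp h2).eventually_ge_atTop 1] with x h hx hx2
    rw [iterLog_succ (k + 1), iterLog_succ (k + 1)]
    set u := iterLog (k + 1) x
    set v := iterLog (k + 1) (2 * x)
    have hv : (1 : ℝ) ≤ v := hx2
    have h1 := Real.log_le_sub_one_of_pos (show 0 < v / u by positivity)
    rw [Real.log_div (by positivity) (by positivity)] at h1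
    have h3 : v / u ≤ 2 := by rw [div_le_iff₀ (by positivity)]; linarith
    linarith

lemma tendsto_iterLog_two_mul_div (k : ℕ) :
    Tendsto (fun x => iterLog (k + 1) (2 * x) / iterLog (k + 1) x) atTop (nhds 1) := by
  have hlim : Tendsto (fun x => 1 + (iterLog (k + 1) x)⁻¹) atTop (nhds (1 + 0)) :=
    tendsto_const_nhds.add (tendsto_inv_atTop_zero.comp (tendsto_iterLog (k + 1)))
  rw [add_zero] at hlim
  obtain ⟨x₀, hx₀⟩ := (eventually_monotoneOn_iterLog (k + 1)).exists
  refine tendsto_of_tendsto_of_tendsto_of_le_of_le' tendsto_const_nhds hlim ?_ ?_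
  · filter_upwards [eventually_ge_atTop x₀, eventually_ge_atTop 0,
      (tendsto_iterLog (k + 1)).eventually_gt_atTop 0] with x h1 h2 h3
    rw [le_div_iff₀ h3, one_mul]
    exact hx₀ h1 (Set.mem_Ici.2 (by linarith)) (by linarith)
  · filter_upwards [eventually_iterLog_two_mul_le k,
      (tendsto_iterLog (k + 1)).eventually_gt_atTop 0] with x h1 h3
    rw [div_le_iff₀ h3, add_mul, inv_mul_cancel₀ h3.ne']
    linarith

/-- The prescribed energy density `E(A_N) / N ^ 3`. -/
noncomputable def energyDensity (r : ℕ) (ε x : ℝ) : ℝ :=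
  iterLog r x ^ (-ε) / ∏ k ∈ Finset.Icc 1 r, iterLog k x

lemma eventually_one_le_iterLog (r : ℕ) :
    ∀ᶠ x : ℝ in atTop, ∀ k ∈ Finset.Icc 1 r, 1 ≤ iterLog k x :=
  (Finset.eventually_all _).2 fun k _ => (tendsto_iterLog k).eventually_ge_atTop 1

lemma energyDensity_pos {r : ℕ} (hr : 1 ≤ r) {ε x : ℝ}
    (hx : ∀ k ∈ Finset.Icc 1 r, 1 ≤ iterLog k x) : 0 < energyDensity r ε x :=
  div_pos (Real.rpow_pos_of_pos (zero_lt_one.trans_le (hx r (Finset.mem_Icc.2 ⟨hr, le_rfl⟩))) _)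
    (Finset.prod_pos fun k hk => zero_lt_one.trans_le (hx k hk))

lemma eventually_energyDensity_antitoneOn {r : ℕ} (hr : 1 ≤ r) {ε : ℝ} (hε : 0 < ε) :
    ∀ᶠ x₀ : ℝ in atTop, AntitoneOn (energyDensity r ε) (Set.Ici x₀) := by
  have hmon : ∀ᶠ x₀ : ℝ in atTop, ∀ k ∈ Finset.Icc 1 r, MonotoneOn (iterLog k) (Set.Ici x₀) :=
    (Finset.eventually_all _).2 fun k _ => eventually_monotoneOn_iterLog k
  filter_upwards [hmon, eventually_one_le_iterLog r] with x₀ h₀ h₁ x hx y hy hxy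
  have hrr : r ∈ Finset.Icc 1 r := Finset.mem_Icc.2 ⟨hr, le_rfl⟩
  have hpos : ∀ k ∈ Finset.Icc 1 r, 0 < iterLog k x := fun k hk =>
    zero_lt_one.trans_le ((h₁ k hk).trans (h₀ k hk Set.self_mem_Ici hx hx))
  have hle : ∀ k ∈ Finset.Icc 1 r, iterLog k x ≤ iterLog k y := fun k hk => h₀ k hk hx hy hxy
  unfold energyDensity
  exact div_le_div₀ (Real.rpow_nonneg (hpos r hrr).le _)
    (Real.rpow_le_rpow_of_nonpos (hpos r hrr) (hle r hrr) (by linarith))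
    (Finset.prod_pos hpos) (Finset.prod_le_prod (fun k hk => (hpos k hk).le) hle)

lemma eventually_energyDensity_le_two_mul {r : ℕ} (hr : 1 ≤ r) (ε : ℝ) :
    ∀ᶠ x : ℝ in atTop, energyDensity r ε x ≤ 2 * energyDensity r ε (2 * x) := by
  have hdiv : ∀ k ∈ Finset.Icc 1 r,
      Tendsto (fun x => iterLog k (2 * x) / iterLog k x) atTop (nhds 1) := by
    intro k hk
    obtain ⟨j, rfl⟩ := Nat.exists_eq_add_of_le' (Finset.mem_Icc.1 hk).1
    exact tendsto_iterLog_two_mul_div j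
  have hrr : r ∈ Finset.Icc 1 r := Finset.mem_Icc.2 ⟨hr, le_rfl⟩
  have hlim : Tendsto (fun x => (iterLog r (2 * x) / iterLog r x) ^ ε *
      ∏ k ∈ Finset.Icc 1 r, (iterLog k (2 * x) / iterLog k x)) atTop (nhds 1) := by
    have := ((hdiv r hrr).rpow_const (p := ε) (Or.inl one_ne_zero)).mul
      (tendsto_finsetProd (Finset.Icc 1 r) hdiv)
    simpa using this
  have h2 : Tendsto (fun x : ℝ => 2 * x) atTop atTop := tendsto_id.const_mul_atTop (by norm_num)
  filter_upwards [hlim.eventually_lt_const (by norm_num : (1 : ℝ) < 2),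
    eventually_one_le_iterLog r, h2.eventually (eventually_one_le_iterLog r)] with x h hx hx2
  have p1 : 0 < iterLog r x := zero_lt_one.trans_le (hx r hrr)
  have p2 : 0 < iterLog r (2 * x) := zero_lt_one.trans_le (hx2 r hrr)
  have q1 : 0 < ∏ k ∈ Finset.Icc 1 r, iterLog k x :=
    Finset.prod_pos fun k hk => zero_lt_one.trans_le (hx k hk)
  have q2 : 0 < ∏ k ∈ Finset.Icc 1 r, iterLog k (2 * x) :=
    Finset.prod_pos fun k hk => zero_lt_one.trans_le (hx2 k hk)
  rw [Finset.prod_div_distrib, Real.div_rpow p2.le p1.le] at h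
  unfold energyDensity
  rw [Real.rpow_neg p1.le, Real.rpow_neg p2.le]
  have s1 := Real.rpow_pos_of_pos p1 ε
  have s2 := Real.rpow_pos_of_pos p2 ε
  rw [div_mul_div_comm, div_lt_iff₀ (by positivity)] at h
  rw [inv_eq_one_div, inv_eq_one_div, div_div, div_div, mul_one_div,
    div_le_div_iff₀ (by positivity) (by positivity)]
  linarith

lemma tendsto_energyDensity {r : ℕ} (hr : 1 ≤ r) {ε : ℝ} (hε : 0 < ε) :
    Tendsto (energyDensity r ε) atTop (nhds 0) := by
  have h0 : Tendsto (fun x => iterLog r x ^ (-ε)) atTop (nhds 0) :=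
    (tendsto_rpow_neg_atTop hε).comp (tendsto_iterLog r)
  refine squeeze_zero' ?_ ?_ h0
  · filter_upwards [eventually_one_le_iterLog r] with x hx
    exact (energyDensity_pos hr hx).le
  · filter_upwards [eventually_one_le_iterLog r] with x hx
    refine div_le_self (Real.rpow_nonneg ?_ _) ?_
    · exact zero_le_one.trans (hx r (Finset.mem_Icc.2 ⟨hr, le_rfl⟩))
    · exact Finset.prod_const_one.symm.trans_le
        (Finset.prod_le_prod (fun _ _ => zero_le_one) hx)

lemma clusterSeq_energy_bounds {ψ : ℝ → ℝ} {k₀ : ℕ}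
    (hanti : AntitoneOn ψ (Set.Ici (2 ^ k₀)))
    (hpos : ∀ x : ℝ, 2 ^ k₀ ≤ x → 0 < ψ x) (hdouble : ∀ x : ℝ, 2 ^ k₀ ≤ x → ψ x ≤ 2 * ψ (2 * x))
    (hsmall : ∀ x : ℝ, 2 ^ k₀ ≤ x → ψ x ≤ 1 / 8) :
    ∃ m : ℕ → ℕ, (∀ k, 2 * m k ≤ 2 ^ k) ∧ ∃ C₁ : ℝ, 0 < C₁ ∧ ∃ C₂ : ℝ, 0 < C₂ ∧
      ∀ᶠ N : ℕ in atTop,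
        C₁ * (ψ N * (N : ℝ) ^ 3) ≤ (addEnergy (trunc (clusterSeq m) N) : ℝ) ∧
        (addEnergy (trunc (clusterSeq m) N) : ℝ) ≤ C₂ * (ψ N * (N : ℝ) ^ 3) := by
  have hle : ∀ {k : ℕ}, k₀ ≤ k → (2 : ℝ) ^ k₀ ≤ 2 ^ k := fun h => pow_le_pow_right₀ one_le_two h
  set p : ℕ → ℝ := fun k => if k₀ ≤ k then 8 ^ k * ψ (2 ^ k) else 0 with hp
  have p_of_le : ∀ k, k₀ ≤ k → p k = 8 ^ k * ψ (2 ^ k) := fun k hk => if_pos hk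
  have p_nonneg : ∀ k, 0 ≤ p k := by
    intro k
    by_cases hk : k₀ ≤ k
    · rw [p_of_le k hk]
      have := hpos _ (hle hk)
      positivity
    · exact (if_neg hk).ge
  have p_succ : ∀ k, 4 * p k ≤ p (k + 1) := by
    intro k
    by_cases hk : k₀ ≤ k
    · rw [p_of_le k hk, p_of_le (k + 1) (by omega)]
      have h := hdouble _ (hle hk)
      rw [← pow_succ'] at h
      have h8 : (0 : ℝ) < 8 ^ k := by positivity
      rw [pow_succ (8 : ℝ)]
      nlinarith
    · have : p k = 0 := if_neg hk
      rw [this, mul_zero]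
      exact p_nonneg _
  have p_sum : ∀ K, ∑ k ∈ Finset.range (K + 1), p k ≤ 2 * p K := by
    intro K
    induction K with
    | zero =>
      have := p_nonneg 0
      simp only [zero_add, Finset.sum_range_one]
      linarith
    | succ K ih =>
      rw [Finset.sum_range_succ]
      have := p_succ K
      linarith [p_nonneg (K + 1)]
  have p_grow : ∀ j, 4 ^ j * p k₀ ≤ p (k₀ + j) := by
    intro j
    induction j with
    | zero => simp
    | succ j ih =>
      have := p_succ (k₀ + j)
      rw [pow_succ, ← add_assoc]
      linarith
  have hp₀ : 0 < p k₀ := by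
    rw [p_of_le k₀ le_rfl]
    have := hpos _ (le_refl ((2 : ℝ) ^ k₀))
    positivity
  have cube_root : ∀ k, (p k ^ (1 / 3 : ℝ)) ^ 3 = p k := by
    intro k
    rw [← Real.rpow_natCast, ← Real.rpow_mul (p_nonneg k)]
    norm_num
  have root_nonneg : ∀ k, 0 ≤ p k ^ (1 / 3 : ℝ) := fun k => Real.rpow_nonneg (p_nonneg k) _
  set m : ℕ → ℕ := fun k => ⌊p k ^ (1 / 3 : ℝ)⌋₊ with hm
  have m_le : ∀ k, (m k : ℝ) ≤ p k ^ (1 / 3 : ℝ) := fun k => Nat.floor_le (root_nonneg k)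
  have m_cube : ∀ k, (m k : ℝ) ^ 3 ≤ p k := fun k =>
    (pow_le_pow_left₀ (Nat.cast_nonneg _) (m_le k) 3).trans (cube_root k).le
  have hm2 : ∀ k, 2 * m k ≤ 2 ^ k := by
    intro k
    have h1 : p k ≤ 8 ^ k / 8 := by
      by_cases hk : k₀ ≤ k
      · rw [p_of_le k hk]
        have := hsmall _ (hle hk)
        have h8 : (0 : ℝ) < 8 ^ k := by positivity
        nlinarith
      · have : p k = 0 := if_neg hk
        rw [this]
        positivity
    have h2 : (2 * m k : ℝ) ^ 3 ≤ (2 ^ k) ^ 3 := by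
      rw [mul_pow, ← pow_mul, mul_comm k 3, pow_mul]
      norm_num
      linarith [m_cube k]
    exact_mod_cast le_of_pow_le_pow_left₀ (by norm_num) (by positivity) h2
  refine ⟨m, hm2, 1 / 4096, by norm_num, 2 * (4 ^ (k₀ + 2) / p k₀ + 2), by positivity, ?_⟩
  have h4 : Tendsto (fun j : ℕ => (4 : ℝ) ^ j * p k₀) atTop atTop :=
    (tendsto_pow_atTop_atTop_of_one_lt (by norm_num)).atTop_mul_const hp₀
  obtain ⟨j₀, hj₀⟩ := (h4.eventually_ge_atTop 64).exists_forall_of_atTop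
  filter_upwards [eventually_ge_atTop (2 ^ (k₀ + j₀ + 1))] with N hN
  set K := Nat.log 2 N with hK
  have hN0 : N ≠ 0 := by
    have : 0 < 2 ^ (k₀ + j₀ + 1) := by positivity
    omega
  have hKk : k₀ + j₀ + 1 ≤ K := Nat.le_log_of_pow_le (by norm_num) hN
  have hKle : 2 ^ K ≤ N := Nat.pow_log_le_self 2 hN0
  have hKlt : N < 2 ^ (K + 1) := Nat.lt_pow_succ_log_self (by norm_num) N
  have hKleR : (2 : ℝ) ^ K ≤ N := by exact_mod_cast hKle
  have hKltR : (N : ℝ) ≤ 2 ^ (K + 1) := by exact_mod_cast hKlt.le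
  have hψN : 0 < ψ N := hpos _ ((hle (by omega)).trans hKleR)
  have hNpos : (0 : ℝ) < N := by positivity
  constructor
  · obtain ⟨L, hL⟩ : ∃ L, K = L + 1 := ⟨K - 1, by omega⟩
    obtain ⟨j, hj⟩ : ∃ j, L = k₀ + j := ⟨L - k₀, by omega⟩
    have e1 : ((m L / 2 : ℕ) : ℝ) ^ 3 ≤ (addEnergy (trunc (clusterSeq m) N) : ℝ) := by
      exact_mod_cast le_addEnergy_clusterSeq hm2 (hL ▸ hKle)
    have e2 : 64 ≤ p L := by
      rw [hj]
      exact (hj₀ j (by omega)).trans (p_grow j)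
    set ρ := p L ^ (1 / 3 : ℝ) with hρ
    have e3 : (4 : ℝ) ≤ ρ := by
      refine le_of_pow_le_pow_left₀ (n := 3) (by norm_num) (root_nonneg L) ?_
      rw [hρ, cube_root]
      norm_num
      exact e2
    have e4 : ρ < m L + 1 := Nat.lt_floor_add_one _
    have e5 : (m L : ℝ) ≤ 2 * (m L / 2 : ℕ) + 1 := by
      have : m L ≤ 2 * (m L / 2) + 1 := by omega
      exact_mod_cast this
    have e6 : ρ / 4 ≤ (m L / 2 : ℕ) := by linarith
    have e7 : p L / 64 ≤ ((m L / 2 : ℕ) : ℝ) ^ 3 := by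
      have := pow_le_pow_left₀ (by positivity) e6 3
      rw [div_pow, hρ, cube_root] at this
      norm_num at this ⊢
      exact this
    have e8 : ψ N ≤ ψ (2 ^ L) := by
      refine hanti (Set.mem_Ici.2 (hle (by omega))) (Set.mem_Ici.2 ((hle (by omega)).trans hKleR))
        (le_trans ?_ hKleR)
      exact pow_le_pow_right₀ one_le_two (by omega)
    have e9 : (N : ℝ) ^ 3 ≤ 64 * 8 ^ L := by
      refine (pow_le_pow_left₀ hNpos.le hKltR 3).trans ?_
      rw [hL, ← pow_mul, mul_comm _ 3, pow_mul, pow_succ, pow_succ]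
      norm_num
      linarith
    have e10 : p L = 8 ^ L * ψ (2 ^ L) := p_of_le L (by omega)
    have e11 : ψ N * (N : ℝ) ^ 3 ≤ ψ (2 ^ L) * (64 * 8 ^ L) :=
      mul_le_mul e8 e9 (by positivity) (hψN.le.trans e8)
    linarith
  · have e1 : (addEnergy (trunc (clusterSeq m) N) : ℝ) ≤
        2 * (N : ℝ) ^ 2 + ∑ k ∈ Finset.range (K + 1), (m k : ℝ) ^ 3 := by
      exact_mod_cast addEnergy_clusterSeq_le m N
    have e2 : ∑ k ∈ Finset.range (K + 1), (m k : ℝ) ^ 3 ≤ 2 * p K :=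
      (Finset.sum_le_sum fun k _ => m_cube k).trans (p_sum K)
    obtain ⟨j, hj⟩ : ∃ j, K = k₀ + j := ⟨K - k₀, by omega⟩
    have e3 : (N : ℝ) ^ 2 ≤ 4 * 4 ^ K := by
      refine (pow_le_pow_left₀ hNpos.le hKltR 2).trans ?_
      rw [← pow_mul, mul_comm _ 2, pow_mul, pow_succ]
      norm_num
      linarith
    have e4 : (4 : ℝ) ^ K * p k₀ ≤ 4 ^ k₀ * p K := by
      rw [hj, pow_add, mul_assoc]
      exact mul_le_mul_of_nonneg_left (p_grow j) (by positivity)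
    have e5 : 2 * (N : ℝ) ^ 2 ≤ 4 ^ (k₀ + 2) / p k₀ * p K := by
      rw [div_mul_eq_mul_div, le_div_iff₀ hp₀, pow_add]
      nlinarith [p_nonneg K, mul_le_mul_of_nonneg_right e3 hp₀.le,
        mul_nonneg (pow_nonneg (by norm_num : (0 : ℝ) ≤ 4) k₀) (p_nonneg K)]
    have e6 : p K ≤ 2 * (ψ N * (N : ℝ) ^ 3) := by
      rw [p_of_le K (by omega)]
      have h1 : ψ (2 ^ K) ≤ 2 * ψ N := by
        refine (hdouble _ (hle (by omega))).trans ?_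
        rw [← pow_succ']
        have := hanti (Set.mem_Ici.2 ((hle (by omega)).trans hKleR))
          (Set.mem_Ici.2 (hle (show k₀ ≤ K + 1 by omega))) hKltR
        linarith
      have h2 : (8 : ℝ) ^ K ≤ (N : ℝ) ^ 3 := by
        refine le_trans (le_of_eq ?_) (pow_le_pow_left₀ (by positivity) hKleR 3)
        rw [← pow_mul, mul_comm K 3, pow_mul]
        norm_num
      calc (8 : ℝ) ^ K * ψ (2 ^ K) ≤ (N : ℝ) ^ 3 * (2 * ψ N) :=
            mul_le_mul h2 h1 (hpos _ (hle (by omega))).le (by positivity)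
        _ = _ := by ring
    have hc : 0 ≤ 4 ^ (k₀ + 2) / p k₀ := by positivity
    calc (addEnergy (trunc (clusterSeq m) N) : ℝ)
        ≤ (4 ^ (k₀ + 2) / p k₀ + 2) * p K := by linarith
      _ ≤ (4 ^ (k₀ + 2) / p k₀ + 2) * (2 * (ψ N * (N : ℝ) ^ 3)) :=
          mul_le_mul_of_nonneg_left e6 (by positivity)
      _ = _ := by ring

lemma exists_clusterSeq_energy {r : ℕ} (hr : 1 ≤ r) {ε : ℝ} (hε : 0 < ε) :
    ∃ m : ℕ → ℕ, (∀ k, 2 * m k ≤ 2 ^ k) ∧ ∃ C₁ : ℝ, 0 < C₁ ∧ ∃ C₂ : ℝ, 0 < C₂ ∧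
      ∀ᶠ N : ℕ in atTop,
        C₁ * (energyDensity r ε N * (N : ℝ) ^ 3) ≤ (addEnergy (trunc (clusterSeq m) N) : ℝ) ∧
        (addEnergy (trunc (clusterSeq m) N) : ℝ) ≤
          C₂ * (energyDensity r ε N * (N : ℝ) ^ 3) := by
  have hev : ∀ᶠ x₀ : ℝ in atTop, ∀ x, x₀ ≤ x → 0 < energyDensity r ε x ∧
      energyDensity r ε x ≤ 2 * energyDensity r ε (2 * x) ∧ energyDensity r ε x ≤ 1 / 8 := by
    refine eventually_forall_ge_atTop.2 ?_
    filter_upwards [eventually_one_le_iterLog r, eventually_energyDensity_le_two_mul hr ε,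
      (tendsto_energyDensity hr hε).eventually_le_const (by norm_num : (0 : ℝ) < 1 / 8)]
      with x h1 h2 h3
    exact ⟨energyDensity_pos hr h1, h2, h3⟩
  obtain ⟨k₀, h1, h2⟩ := ((tendsto_pow_atTop_atTop_of_one_lt (one_lt_two (α := ℝ))).eventually
    ((eventually_energyDensity_antitoneOn hr hε).and hev)).exists
  exact clusterSeq_energy_bounds h1 (fun x hx => (h2 x hx).1) (fun x hx => (h2 x hx).2.1)
    (fun x hx => (h2 x hx).2.2)

lemma card_sq_le_card_mul_card_filter_eq {ι β : Type*} [DecidableEq β] (s : Finset ι) (t : Finset β) (f : ι → β)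
    (hf : (s : Set ι).MapsTo f t) :
    s.card ^ 2 ≤ t.card * ((s ×ˢ s).filter fun p => f p.1 = f p.2).card := by
  have h1 : ((s ×ˢ s).filter fun p => f p.1 = f p.2).card =
      ∑ b ∈ t, (s.filter fun i => f i = b).card ^ 2 := by
    rw [Finset.card_eq_sum_card_fiberwise (f := fun p => f p.1) (t := t)]
    · refine Finset.sum_congr rfl fun b _ => ?_
      rw [sq, ← Finset.card_product]
      congr 1
      ext ⟨x, y⟩
      simp only [Finset.mem_filter, Finset.mem_product]
      constructor
      · rintro ⟨⟨⟨hx, hy⟩, h⟩, hb⟩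
        exact ⟨⟨hx, hb⟩, hy, h ▸ hb⟩
      · rintro ⟨⟨hx, hb⟩, hy, hb'⟩
        exact ⟨⟨⟨hx, hy⟩, hb.trans hb'.symm⟩, hb⟩
    · intro p hp
      exact hf (Finset.mem_product.1 (Finset.mem_filter.1 hp).1).1
  rw [h1, Finset.card_eq_sum_card_fiberwise hf]
  exact sq_sum_le_card_mul_sum_sq

lemma dni_sub_le (x y : ℝ) : dni (x - y) ≤ |Int.fract x - Int.fract y| := by
  refine (round_le (x - y) (⌊x⌋ - ⌊y⌋)).trans_eq ?_
  congr 1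
  push_cast
  unfold Int.fract
  ring

lemma abs_sub_le_of_floor_mul_eq {N : ℕ} (hN : 0 < N) {x y : ℝ} (hx : 0 ≤ x) (hy : 0 ≤ y)
    (h : ⌊N * x⌋₊ = ⌊N * y⌋₊) : |x - y| ≤ 1 / N := by
  have hN' : (0 : ℝ) < N := by exact_mod_cast hN
  have x1 := Nat.floor_le (mul_nonneg hN'.le hx)
  have x2 := Nat.lt_floor_add_one (N * x)
  have y1 := Nat.floor_le (mul_nonneg hN'.le hy)
  have y2 := Nat.lt_floor_add_one (N * y)
  rw [h] at x1 x2
  rw [le_div_iff₀ hN', ← abs_of_pos hN', ← abs_mul, abs_le]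
  constructor <;> linarith

lemma clusterSeq_eq_basePoint {m : ℕ → ℕ} {k n : ℕ} (h₁ : 2 ^ k + m k ≤ n)
    (h₂ : n < 2 ^ (k + 1)) : clusterSeq m n = basePoint n := by
  have hlog : Nat.log 2 n = k := by
    rw [Nat.log_eq_iff (by right; have := Nat.one_le_two_pow (n := k); constructor <;> omega)]
    omega
  have : baseIndex m n = n := by
    unfold baseIndex
    rw [hlog, if_neg (by omega)]
  unfold clusterSeq
  rw [this]
  simp

lemma seven_le_pcf {m : ℕ → ℕ} (hm : ∀ k, 2 * m k ≤ 2 ^ k) {α : ℝ}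
    (hα : ∀ n, Int.fract (α * basePoint n) ≤ 1 / 256) {k : ℕ} (hk : 7 ≤ k) :
    7 ≤ pcf (clusterSeq m) 1 α (2 ^ (k + 1)) := by
  set N := 2 ^ (k + 1) with hN
  set a := clusterSeq m
  set J := Finset.Ico (2 ^ k + m k) N with hJ
  obtain ⟨j, rfl⟩ := Nat.exists_eq_add_of_le hk
  have hNj : N = 256 * 2 ^ j := by rw [hN]; ring
  have hkj : 2 ^ (7 + j) = 128 * 2 ^ j := by ring
  have hjpos : 1 ≤ 2 ^ j := Nat.one_le_two_pow
  have hmk := hm (7 + j)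
  have hJcard : 64 * 2 ^ j ≤ J.card := by
    rw [hJ, Nat.card_Ico]
    omega
  set f : ℕ → ℕ := fun n => ⌊(N : ℝ) * Int.fract (α * a n)⌋₊ with hf
  have hmaps : (J : Set ℕ).MapsTo f (Finset.range (2 ^ j + 1) : Finset ℕ) := by
    intro n hn
    rw [Finset.mem_coe, Finset.mem_Ico] at hn
    rw [Finset.mem_coe, Finset.mem_range, Nat.lt_succ_iff]
    refine Nat.floor_le_of_le ?_
    rw [show a n = basePoint n from clusterSeq_eq_basePoint hn.1 hn.2, hNj]
    have := hα n
    push_cast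
    have h2 : (0 : ℝ) < 2 ^ j := by positivity
    nlinarith
  have hcs := card_sq_le_card_mul_card_filter_eq J _ f hmaps
  rw [Finset.card_range] at hcs
  set T := (J ×ˢ J).filter fun p => f p.1 = f p.2
  have hT : 8 * N ≤ T.card := by
    have h1 : (64 * 2 ^ j) ^ 2 ≤ (2 * 2 ^ j) * T.card := by
      have h2 : 2 ^ j + 1 ≤ 2 * 2 ^ j := by omega
      exact (Nat.pow_le_pow_left hJcard 2).trans (hcs.trans (Nat.mul_le_mul_right T.card h2))
    refine le_of_mul_le_mul_left (a := 2 * 2 ^ j) ?_ (by positivity)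
    rw [hNj]
    nlinarith
  set S := (Finset.Icc 1 N ×ˢ Finset.Icc 1 N).filter fun p =>
      p.1 ≠ p.2 ∧ dni (α * (a p.1 : ℝ) - α * (a p.2 : ℝ)) ≤ 1 / N
  have hsub : T ⊆ S ∪ (Finset.Icc 1 N).image fun n => (n, n) := by
    rintro ⟨x, y⟩ hxy
    simp only [T, Finset.mem_filter, Finset.mem_product, hJ, Finset.mem_Ico] at hxy
    obtain ⟨⟨hx, hy⟩, h⟩ := hxy
    have hx' : x ∈ Finset.Icc 1 N := Finset.mem_Icc.2 ⟨by omega, by omega⟩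
    have hy' : y ∈ Finset.Icc 1 N := Finset.mem_Icc.2 ⟨by omega, by omega⟩
    rw [Finset.mem_union]
    by_cases hne : x = y
    · subst hne
      exact Or.inr (Finset.mem_image_of_mem (fun n => (n, n)) hx')
    · left
      refine Finset.mem_filter.2 ⟨Finset.mem_product.2 ⟨hx', hy'⟩, hne, ?_⟩
      exact (dni_sub_le _ _).trans (abs_sub_le_of_floor_mul_eq (by omega) (Int.fract_nonneg _)
        (Int.fract_nonneg _) h)
  have hS : 7 * N ≤ S.card := by
    have h1 := (Finset.card_le_card hsub).trans (Finset.card_union_le _ _)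
    have h2 : ((Finset.Icc 1 N).image fun n => (n, n)).card ≤ N :=
      Finset.card_image_le.trans (by simp)
    omega
  have hNpos : (0 : ℝ) < N := by rw [hNj]; positivity
  change 7 ≤ (S.card : ℝ) / N
  rw [le_div_iff₀ hNpos]
  exact_mod_cast hS

lemma not_hasPPC_clusterSeq {m : ℕ → ℕ} (hm : ∀ k, 2 * m k ≤ 2 ^ k) {α : ℝ}
    (hα : ∀ n, Int.fract (α * basePoint n) ≤ 1 / 256) : ¬ hasPPC (clusterSeq m) α := by
  intro h
  have hpow : Tendsto (fun k : ℕ => 2 ^ (k + 1)) atTop (atTop : Filter ℕ) :=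
    (tendsto_pow_atTop_atTop_of_one_lt one_lt_two).comp (tendsto_add_atTop_nat 1)
  have h7 : (7 : ℝ) ≤ 2 * 1 := by
    refine ge_of_tendsto ((h 1 zero_le_one).comp hpow) ?_
    filter_upwards [eventually_ge_atTop 7] with k hk using seven_le_pcf hm hα hk
  norm_num at h7

/-- Spread out the binary digits of `u`, inserting eight zeros after the digits at positions
`n ^ 2`; this is the integer formed by the first `n` blocks. -/
noncomputable def spreadDigits (u : ℝ) : ℕ → ℕ
  | 0 => 0
  | n + 1 => 2 ^ (2 * n + 9) * spreadDigits u n + ⌊2 ^ (n + 1) ^ 2 * u⌋₊ % 2 ^ (2 * n + 1)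

/-- The real number whose binary digits are those of `u` with the inserted zeros. -/
noncomputable def spread (u : ℝ) : ℝ := ⨆ n, (spreadDigits u n : ℝ) / basePoint n

lemma floor_eq_of_spreadDigits_eq {u v : ℝ} (hu : u ∈ Set.Ico (0 : ℝ) 1)
    (hv : v ∈ Set.Ico (0 : ℝ) 1) (n : ℕ) (h : spreadDigits u n = spreadDigits v n) :
    ⌊2 ^ n ^ 2 * u⌋₊ = ⌊2 ^ n ^ 2 * v⌋₊ := by
  induction n with
  | zero =>
    have h0 : ∀ w ∈ Set.Ico (0 : ℝ) 1, ⌊2 ^ 0 ^ 2 * w⌋₊ = 0 := by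
      intro w hw
      rw [Nat.floor_eq_zero]
      simpa using hw.2
    rw [h0 u hu, h0 v hv]
  | succ n ih =>
    have hdiv : ∀ w : ℝ, ⌊2 ^ (n + 1) ^ 2 * w⌋₊ / 2 ^ (2 * n + 1) = ⌊2 ^ n ^ 2 * w⌋₊ := by
      intro w
      rw [← Nat.floor_div_natCast]
      congr 1
      rw [show (n + 1) ^ 2 = n ^ 2 + (2 * n + 1) by ring, pow_add]
      push_cast
      field_simp
    have hlt : ∀ w : ℕ, w % 2 ^ (2 * n + 1) < 2 ^ (2 * n + 9) := fun w =>
      (Nat.mod_lt _ (by positivity)).trans (Nat.pow_lt_pow_right (by norm_num) (by omega))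
    simp only [spreadDigits] at h
    have hq := congrArg (· / 2 ^ (2 * n + 9)) h
    simp only [Nat.mul_add_div (show 0 < 2 ^ (2 * n + 9) by positivity),
      Nat.div_eq_of_lt (hlt _), add_zero] at hq
    rw [hq] at h
    rw [← Nat.div_add_mod ⌊2 ^ (n + 1) ^ 2 * u⌋₊ (2 ^ (2 * n + 1)),
      ← Nat.div_add_mod ⌊2 ^ (n + 1) ^ 2 * v⌋₊ (2 ^ (2 * n + 1)), hdiv, hdiv, ih hq,
      Nat.add_left_cancel h]

lemma spread_mem_Icc (u : ℝ) (n : ℕ) :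
    (spreadDigits u n : ℝ) ≤ spread u * basePoint n ∧
      spread u * basePoint n ≤ spreadDigits u n + 1 / 256 := by
  have hB : ∀ n, (0 : ℝ) < basePoint n := fun n => by exact_mod_cast basePoint_pos n
  have hs : ∀ n, ((spreadDigits u (n + 1) : ℕ) : ℝ) =
      2 ^ (2 * n + 9) * spreadDigits u n + (⌊2 ^ (n + 1) ^ 2 * u⌋₊ % 2 ^ (2 * n + 1) : ℕ) := by
    intro n
    simp only [spreadDigits]
    push_cast
    rfl
  have hBs : ∀ n, (basePoint (n + 1) : ℝ) = 2 ^ (2 * n + 9) * basePoint n := by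
    intro n
    rw [basePoint_succ]
    push_cast
    rfl
  have hmono : Monotone fun n => (spreadDigits u n : ℝ) / basePoint n := by
    refine monotone_nat_of_le_succ fun n => ?_
    rw [div_le_div_iff₀ (hB n) (hB (n + 1)), hs, hBs]
    have : (0 : ℝ) ≤ (⌊2 ^ (n + 1) ^ 2 * u⌋₊ % 2 ^ (2 * n + 1) : ℕ) * basePoint n := by
      positivity
    linarith
  have hanti : Antitone fun n => ((spreadDigits u n : ℝ) + 1 / 256) / basePoint n := by
    refine antitone_nat_of_succ_le fun n => ?_
    rw [div_le_div_iff₀ (hB (n + 1)) (hB n), hs, hBs]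
    have h1 : ((⌊2 ^ (n + 1) ^ 2 * u⌋₊ % 2 ^ (2 * n + 1) : ℕ) : ℝ) + 1 ≤ 2 ^ (2 * n + 1) := by
      generalize ⌊2 ^ (n + 1) ^ 2 * u⌋₊ = w
      exact_mod_cast Nat.succ_le_of_lt (Nat.mod_lt w (show 0 < 2 ^ (2 * n + 1) by positivity))
    have h2 : (2 : ℝ) ^ (2 * n + 9) = 256 * 2 ^ (2 * n + 1) := by ring
    have h3 := mul_le_mul_of_nonneg_right h1 (hB n).le
    rw [h2]
    linarith [hB n]
  have hmem := Set.mem_iInter.1 (hmono.ciSup_mem_iInter_Icc_of_antitone hanti fun n => by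
    dsimp only
    have := hB n
    gcongr
    linarith) n
  exact ⟨(div_le_iff₀ (hB n)).1 hmem.1, (le_div_iff₀ (hB n)).1 hmem.2⟩

lemma fract_spread_mul_basePoint_le (u : ℝ) (n : ℕ) :
    Int.fract (spread u * basePoint n) ≤ 1 / 256 := by
  obtain ⟨h1, h2⟩ := spread_mem_Icc u n
  have : ⌊spread u * basePoint n⌋ = (spreadDigits u n : ℤ) := by
    rw [Int.floor_eq_iff]
    push_cast
    constructor <;> linarith
  unfold Int.fract
  rw [this]
  push_cast
  linarith

lemma spread_mem_Icc_zero (u : ℝ) : spread u ∈ Set.Icc (0 : ℝ) (1 / 256) := by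
  simpa [spreadDigits, basePoint] using spread_mem_Icc u 0

lemma abs_sub_le_of_abs_spread_sub_lt {u v : ℝ} (hu : u ∈ Set.Ico (0 : ℝ) 1)
    (hv : v ∈ Set.Ico (0 : ℝ) 1) {n : ℕ} (h : |spread u - spread v| * basePoint n < 1 / 2) :
    |u - v| ≤ 1 / 2 ^ n ^ 2 := by
  obtain ⟨u1, u2⟩ := spread_mem_Icc u n
  obtain ⟨v1, v2⟩ := spread_mem_Icc v n
  have hB : (0 : ℝ) < basePoint n := by exact_mod_cast basePoint_pos n
  rw [← abs_of_pos hB, ← abs_mul, abs_lt] at h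
  have heq : spreadDigits u n = spreadDigits v n := by
    have h1 : (spreadDigits u n : ℝ) < spreadDigits v n + 1 := by linarith
    have h2 : (spreadDigits v n : ℝ) < spreadDigits u n + 1 := by linarith
    norm_cast at h1 h2
    omega
  have := abs_sub_le_of_floor_mul_eq (N := 2 ^ n ^ 2) (by positivity) hu.1 hv.1
    (by push_cast; exact floor_eq_of_spreadDigits_eq hu hv n heq)
  push_cast at this
  exact this

lemma eq_of_spread_eq {u v : ℝ} (hu : u ∈ Set.Ico (0 : ℝ) 1) (hv : v ∈ Set.Ico (0 : ℝ) 1)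
    (h : spread u = spread v) : u = v := by
  have hlim : Tendsto (fun n : ℕ => (1 : ℝ) / 2 ^ n ^ 2) atTop (nhds 0) := by
    have h1 : Tendsto (fun n : ℕ => n ^ 2) atTop atTop := tendsto_pow_atTop (by norm_num)
    have h2 := (tendsto_pow_atTop_nhds_zero_of_lt_one (r := (1 / 2 : ℝ)) (by norm_num)
      (by norm_num)).comp h1
    refine h2.congr fun n => ?_
    simp
  have h0 : |u - v| ≤ 0 := ge_of_tendsto' hlim fun n =>
    abs_sub_le_of_abs_spread_sub_lt hu hv (by rw [h]; simp)
  exact sub_eq_zero.1 (abs_nonpos_iff.1 h0)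

lemma spread_holder {δ : ℝ} (hδ : 0 < δ) (hδ1 : δ < 1) {u v : ℝ} (hu : u ∈ Set.Ico (0 : ℝ) 1)
    (hv : v ∈ Set.Ico (0 : ℝ) 1) :
    |u - v| ≤ 2 ^ (10 + 25 / δ) * |spread u - spread v| ^ (1 - δ) := by
  by_cases hne : spread u = spread v
  · rw [eq_of_spread_eq hu hv hne, sub_self, abs_zero]
    positivity
  set d := |spread u - spread v| with hd
  have hdpos : 0 < d := abs_pos.2 (sub_ne_zero.2 hne)
  have hex : ∃ n, ¬ d * basePoint n < 1 / 2 := by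
    obtain ⟨n, hn⟩ := exists_nat_gt (1 / 2 / d)
    refine ⟨n, not_lt.2 ?_⟩
    have h1 : (n : ℝ) ≤ basePoint n := by exact_mod_cast basePoint_strictMono.le_apply
    rw [div_lt_iff₀ hdpos] at hn
    nlinarith
  obtain ⟨n, hn, hn'⟩ : ∃ n, d * basePoint n < 1 / 2 ∧ ¬ d * basePoint (n + 1) < 1 / 2 := by
    have h0 : Nat.find hex ≠ 0 := by
      intro h0
      have hspec := Nat.find_spec hex
      rw [h0] at hspec
      apply hspec
      have h1 := spread_mem_Icc_zero u
      have h2 := spread_mem_Icc_zero v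
      have h3 : d ≤ 1 / 256 := abs_le.2 ⟨by linarith [h1.1, h2.2], by linarith [h1.2, h2.1]⟩
      simp only [basePoint, zero_mul, pow_zero, Nat.cast_one, mul_one]
      linarith
    obtain ⟨n, hn⟩ := Nat.exists_eq_succ_of_ne_zero h0
    exact ⟨n, not_not.1 (Nat.find_min hex (m := n) (by omega)), by
      have := Nat.find_spec hex
      rwa [hn] at this⟩
  have hlow : (2 : ℝ) ^ (-((n : ℝ) ^ 2 + 10 * n + 10)) ≤ d := by
    rw [not_lt] at hn'
    have hB : (basePoint (n + 1) : ℝ) * 2 = 2 ^ ((n : ℝ) ^ 2 + 10 * n + 10) := by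
      have : basePoint (n + 1) * 2 = 2 ^ (n ^ 2 + 10 * n + 10) := by
        unfold basePoint
        rw [← pow_succ]
        congr 1
        ring
      rw [show (n : ℝ) ^ 2 + 10 * n + 10 = ((n ^ 2 + 10 * n + 10 : ℕ) : ℝ) by push_cast; rfl,
        Real.rpow_natCast]
      exact_mod_cast this
    rw [Real.rpow_neg (by norm_num), ← hB, inv_le_iff_one_le_mul₀ (by
      have := basePoint_pos (n + 1)
      positivity)]
    linarith
  have hup := abs_sub_le_of_abs_spread_sub_lt hu hv hn
  calc |u - v| ≤ 1 / 2 ^ n ^ 2 := hup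
    _ = (2 : ℝ) ^ (-(n : ℝ) ^ 2) := by
      rw [Real.rpow_neg (by norm_num), one_div,
        show (n : ℝ) ^ 2 = ((n ^ 2 : ℕ) : ℝ) by push_cast; rfl, Real.rpow_natCast]
    _ ≤ (2 : ℝ) ^ (10 + 25 / δ + -((n : ℝ) ^ 2 + 10 * n + 10) * (1 - δ)) := by
      refine Real.rpow_le_rpow_of_exponent_le one_le_two ?_
      have h1 : 0 ≤ δ * ((n : ℝ) - 5 / δ) ^ 2 := by positivity
      have h2 : δ * ((n : ℝ) - 5 / δ) ^ 2 = δ * (n : ℝ) ^ 2 - 10 * n + 25 / δ := by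
        field_simp
        ring
      have h3 : 0 ≤ δ * n := by positivity
      nlinarith
    _ = 2 ^ (10 + 25 / δ) * ((2 : ℝ) ^ (-((n : ℝ) ^ 2 + 10 * n + 10))) ^ (1 - δ) := by
      rw [Real.rpow_add (by norm_num), Real.rpow_mul (by norm_num)]
    _ ≤ _ := by
      refine mul_le_mul_of_nonneg_left ?_ (by positivity)
      exact Real.rpow_le_rpow (by positivity) hlow (by linarith)

lemma one_le_dimH_image_spread : 1 ≤ dimH (spread '' Set.Ioo 0 1) := by
  have hsub : Set.Ioo (0 : ℝ) 1 ⊆ Set.Ico 0 1 := Set.Ioo_subset_Ico_self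
  have hinj : Set.InjOn spread (Set.Ioo 0 1) := fun u hu v hv h =>
    eq_of_spread_eq (hsub hu) (hsub hv) h
  set g := Function.invFunOn spread (Set.Ioo 0 1)
  have hg : ∀ u ∈ Set.Ioo (0 : ℝ) 1, g (spread u) = u := fun u hu => hinj.leftInvOn_invFunOn hu
  have himage : g '' (spread '' Set.Ioo 0 1) = Set.Ioo 0 1 := by
    rw [Set.image_image]
    exact (Set.image_congr hg).trans (Set.image_id' _)
  have hdim : dimH (Set.Ioo (0 : ℝ) 1) = 1 := by
    rw [Real.dimH_of_nonempty_interior (by rw [interior_Ioo]; exact Set.nonempty_Ioo.2 one_pos)]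
    simp
  refine le_of_forall_lt fun c hc => ?_
  obtain ⟨t, hct, ht1⟩ := ENNReal.lt_iff_exists_nnreal_btwn.1 hc
  have ht1' : (t : ℝ) < 1 := by exact_mod_cast ht1
  have htpos : 0 < t := by
    have := zero_le.trans_lt hct
    exact_mod_cast this
  have hδ : (1 : ℝ) - (1 - t) = t := by ring
  have hholder : HolderOnWith (Real.toNNReal (2 ^ (10 + 25 / (1 - (t : ℝ))))) t g
      (spread '' Set.Ioo 0 1) := by
    rintro _ ⟨u, hu, rfl⟩ _ ⟨v, hv, rfl⟩
    rw [hg u hu, hg v hv]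
    have hmain := spread_holder (δ := 1 - t) (by linarith) (by
      have : (0 : ℝ) < t := by exact_mod_cast htpos
      linarith) (hsub hu) (hsub hv)
    rw [hδ] at hmain
    rw [edist_dist, edist_dist, Real.dist_eq, Real.dist_eq,
      ENNReal.ofReal_rpow_of_nonneg (abs_nonneg _) t.coe_nonneg]
    change _ ≤ ENNReal.ofReal _ * _
    rw [← ENNReal.ofReal_mul (by positivity)]
    exact ENNReal.ofReal_le_ofReal hmain
  have h := hholder.dimH_image_le htpos
  rw [himage, hdim, ENNReal.le_div_iff_mul_le (Or.inl (by exact_mod_cast htpos.ne'))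
    (Or.inl ENNReal.coe_ne_top), one_mul] at h
  exact hct.trans_le h

lemma image_spread_subset_NPPC {m : ℕ → ℕ} (hm : ∀ k, 2 * m k ≤ 2 ^ k) :
    spread '' Set.Ioo 0 1 ⊆ NPPC (clusterSeq m) := by
  rintro _ ⟨u, hu, rfl⟩
  have h := spread_mem_Icc_zero u
  refine ⟨⟨h.1.lt_of_ne fun h0 => ?_, by linarith [h.2]⟩,
    not_hasPPC_clusterSeq hm (fract_spread_mul_basePoint_le u)⟩
  have hz : spread 0 = 0 := by
    have : ∀ n, spreadDigits 0 n = 0 := by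
      intro n
      induction n with
      | zero => rfl
      | succ n ih => simp [spreadDigits, ih]
    simp [spread, this]
  exact hu.1.ne (eq_of_spread_eq ⟨le_rfl, one_pos⟩ ⟨hu.1.le, hu.2⟩ (hz.trans h0))

lemma dimH_NPPC_clusterSeq {m : ℕ → ℕ} (hm : ∀ k, 2 * m k ≤ 2 ^ k) :
    dimH (NPPC (clusterSeq m)) = 1 := by
  refine le_antisymm ?_ (one_le_dimH_image_spread.trans (dimH_mono (image_spread_subset_NPPC hm)))
  exact (dimH_mono (Set.subset_univ _)).trans_eq Real.dimH_univ

theorem full_hausdorff_dimension_with_iterated_log_energy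
    (r : ℕ) (hr : 1 ≤ r) (ε : ℝ) (hε : 0 < ε) :
    ∃ a : ℕ → ℕ, (∀ n, 1 ≤ n → a n < a (n + 1)) ∧ 0 < a 1 ∧
      (∃ C₁ : ℝ, 0 < C₁ ∧ ∃ C₂ : ℝ, 0 < C₂ ∧ ∀ᶠ N : ℕ in atTop,
        C₁ * ((iterLog r (N : ℝ)) ^ (-ε) * (N : ℝ) ^ 3 /
            ∏ k ∈ Finset.Icc 1 r, iterLog k (N : ℝ)) ≤
            (addEnergy (trunc a N) : ℝ) ∧
        (addEnergy (trunc a N) : ℝ) ≤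
            C₂ * ((iterLog r (N : ℝ)) ^ (-ε) * (N : ℝ) ^ 3 /
            ∏ k ∈ Finset.Icc 1 r, iterLog k (N : ℝ))) ∧
      dimH (NPPC a) = 1 := by
  obtain ⟨m, hm, C₁, hC₁, C₂, hC₂, hE⟩ := exists_clusterSeq_energy hr hε
  refine ⟨clusterSeq m, fun n hn => clusterSeq_lt_succ m hn, clusterSeq_pos m 1,
    ⟨C₁, hC₁, C₂, hC₂, ?_⟩, dimH_NPPC_clusterSeq hm⟩
  filter_upwards [hE] with N hN
  rwa [energyDensity, div_mul_eq_mul_div] at hN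
end

section
/- (Erdős–Rényi Borel–Cantelli lemma) Let (A_n)_{n≥1} be a sequence of Lebesgue measurable subsets of [0,1] satisfying Σ_{n≥1} λ(A_n) = ∞. Then λ( limsup_{n→∞} A_n ) ≥ limsup_{N→∞} ( Σ_{n≤N} λ(A_n) )² / ( Σ_{m,n≤N} λ(A_n ∩ A_m) ). -/
open Filter MeasureTheory

section FiniteMeasure

variable {Ω : Type*} [MeasurableSpace Ω] {μ : Measure Ω} [IsFiniteMeasure μ]

/-- Cauchy–Schwarz for a sum of indicators supported in `U`. -/
theorem sq_sum_measureReal_le {ι : Type*} (s : Finset ι) {A : ι → Set Ω} {U : Set Ω}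
    (hA : ∀ i ∈ s, MeasurableSet (A i)) (hU : MeasurableSet U) (hAU : ∀ i ∈ s, A i ⊆ U) :
    (∑ i ∈ s, μ.real (A i)) ^ 2 ≤
      μ.real U * ∑ i ∈ s, ∑ j ∈ s, μ.real (A j ∩ A i) := by
  have hint : ∀ {B : Set Ω}, MeasurableSet B →
      Integrable (B.indicator (1 : Ω → ℝ)) μ := fun hB ↦
    (integrable_const (1 : ℝ)).indicator hB
  have hquad : ∀ t : ℝ, 0 ≤ μ.real U * (t * t) + (-2 * ∑ i ∈ s, μ.real (A i)) * t +
      ∑ i ∈ s, ∑ j ∈ s, μ.real (A j ∩ A i) := by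
    intro t
    have hnonneg : 0 ≤ ∫ x, (∑ i ∈ s, (A i).indicator (1 : Ω → ℝ) x -
        t * U.indicator (1 : Ω → ℝ) x) ^ 2 ∂μ := integral_nonneg fun x ↦ sq_nonneg _
    have hexpand : ∀ x, (∑ i ∈ s, (A i).indicator (1 : Ω → ℝ) x -
        t * U.indicator (1 : Ω → ℝ) x) ^ 2 =
        (t * t) * U.indicator (1 : Ω → ℝ) x +
          (-2 * t) * ∑ i ∈ s, (A i).indicator (1 : Ω → ℝ) x +
          ∑ i ∈ s, ∑ j ∈ s, (A j ∩ A i).indicator (1 : Ω → ℝ) x := by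
      intro x
      have hprod : ∑ i ∈ s, ∑ j ∈ s, (A j ∩ A i).indicator (1 : Ω → ℝ) x =
          (∑ i ∈ s, (A i).indicator (1 : Ω → ℝ) x) ^ 2 := by
        rw [sq, Finset.sum_mul_sum]
        refine Finset.sum_congr rfl fun i _ ↦ Finset.sum_congr rfl fun j _ ↦ ?_
        rw [Set.inter_indicator_one, Pi.mul_apply, mul_comm]
      rw [hprod]
      by_cases hx : x ∈ U
      · simp only [Set.indicator_of_mem hx, Pi.one_apply]
        ring
      · have hzero : ∑ i ∈ s, (A i).indicator (1 : Ω → ℝ) x = 0 :=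
          Finset.sum_eq_zero fun i hi ↦ Set.indicator_of_notMem (fun h ↦ hx (hAU i hi h)) _
        simp [Set.indicator_of_notMem hx, hzero]
    have hintA : Integrable (fun x ↦ ∑ i ∈ s, (A i).indicator (1 : Ω → ℝ) x) μ :=
      integrable_finsetSum _ fun i hi ↦ hint (hA i hi)
    have hintAA : ∀ i ∈ s,
        Integrable (fun x ↦ ∑ j ∈ s, (A j ∩ A i).indicator (1 : Ω → ℝ) x) μ :=
      fun i hi ↦ integrable_finsetSum _ fun j hj ↦ hint ((hA j hj).inter (hA i hi))
    have hsumA : ∫ x, ∑ i ∈ s, (A i).indicator (1 : Ω → ℝ) x ∂μ = ∑ i ∈ s, μ.real (A i) := by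
      rw [integral_finsetSum _ fun i hi ↦ hint (hA i hi)]
      exact Finset.sum_congr rfl fun i hi ↦ integral_indicator_one (hA i hi)
    have hsumAA : ∫ x, ∑ i ∈ s, ∑ j ∈ s, (A j ∩ A i).indicator (1 : Ω → ℝ) x ∂μ =
        ∑ i ∈ s, ∑ j ∈ s, μ.real (A j ∩ A i) := by
      rw [integral_finsetSum _ hintAA]
      refine Finset.sum_congr rfl fun i hi ↦ ?_
      rw [integral_finsetSum _ fun j hj ↦ hint ((hA j hj).inter (hA i hi))]
      exact Finset.sum_congr rfl fun j hj ↦ integral_indicator_one ((hA j hj).inter (hA i hi))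
    simp_rw [hexpand] at hnonneg
    rw [integral_add (by exact ((hint hU).const_mul _).add (hintA.const_mul _))
      (integrable_finsetSum _ hintAA), integral_add ((hint hU).const_mul _) (hintA.const_mul _),
      integral_const_mul, integral_const_mul, integral_indicator_one hU, hsumA, hsumAA] at hnonneg
    linarith
  have hdiscrim := discrim_le_zero hquad
  rw [discrim] at hdiscrim
  linarith

/-- The measures of the tail unions of a sequence of sets tend to that of its limsup. -/
theorem tendsto_measureReal_iUnion_add {A : ℕ → Set Ω} (hA : ∀ n, MeasurableSet (A n)) :
    Tendsto (fun k ↦ μ.real (⋃ i, A (i + k))) atTop (nhds (μ.real (limsup A atTop))) := by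
  have hanti : Antitone fun k ↦ ⋃ i, A (i + k) := by
    intro k l hkl
    refine Set.iUnion_subset fun i ↦ ?_
    have h := Set.subset_iUnion (fun j ↦ A (j + k)) (i + (l - k))
    rwa [show i + (l - k) + k = i + l by omega] at h
  have h := tendsto_measure_iInter_atTop (μ := μ)
    (fun k ↦ (MeasurableSet.iUnion fun i ↦ hA (i + k)).nullMeasurableSet) hanti
    ⟨0, measure_ne_top _ _⟩
  have hlim : limsup A atTop = ⋂ k, ⋃ i, A (i + k) := limsup_eq_iInf_iSup_of_nat'
  rw [hlim]
  exact (ENNReal.tendsto_toReal (measure_ne_top _ _)).comp h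

/-- The Erdős–Rényi form of the second Borel–Cantelli lemma, for a finite measure. -/
theorem limsup_sq_sum_div_le_measureReal_limsup {A : ℕ → Set Ω}
    (hA : ∀ n, MeasurableSet (A n)) (hdiv : ∑' n, μ (A n) = ⊤) :
    limsup (fun N : ℕ ↦ (∑ n ∈ Finset.range N, μ.real (A n)) ^ 2 /
        ∑ m ∈ Finset.range N, ∑ n ∈ Finset.range N, μ.real (A n ∩ A m)) atTop ≤
      μ.real (limsup A atTop) := by
  set S : ℕ → ℝ := fun N ↦ ∑ n ∈ Finset.range N, μ.real (A n) with hS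
  set Q : ℕ → ℝ := fun N ↦
    ∑ m ∈ Finset.range N, ∑ n ∈ Finset.range N, μ.real (A n ∩ A m) with hQ
  have hQ_nonneg : ∀ N, 0 ≤ Q N := fun N ↦
    Finset.sum_nonneg fun _ _ ↦ Finset.sum_nonneg fun _ _ ↦ measureReal_nonneg
  have hS_top : Tendsto S atTop atTop := by
    refine (not_summable_iff_tendsto_nat_atTop_of_nonneg fun _ ↦ measureReal_nonneg).1 fun h ↦ ?_
    apply h.tsum_ofReal_ne_top
    simpa [ofReal_measureReal] using hdiv
  refine ge_of_tendsto' (tendsto_measureReal_iUnion_add hA) fun k ↦ ?_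
  set L := μ.real (⋃ i, A (i + k))
  have hkey : ∀ N, k ≤ N → (S N - S k) ^ 2 ≤ L * Q N := by
    intro N hkN
    have hsub : Finset.Ico k N ⊆ Finset.range N := fun n hn ↦
      Finset.mem_range.2 (Finset.mem_Ico.1 hn).2
    rw [hS, ← Finset.sum_Ico_eq_sub _ hkN]
    refine (sq_sum_measureReal_le (μ := μ) (Finset.Ico k N) (fun n _ ↦ hA n)
      (MeasurableSet.iUnion fun i ↦ hA (i + k)) fun n hn ↦ ?_).trans ?_
    · have h := Set.subset_iUnion (fun j ↦ A (j + k)) (n - k)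
      rwa [Nat.sub_add_cancel (Finset.mem_Ico.1 hn).1] at h
    · refine mul_le_mul_of_nonneg_left ?_ measureReal_nonneg
      refine (Finset.sum_le_sum fun m _ ↦ Finset.sum_le_sum_of_subset_of_nonneg hsub
        fun _ _ _ ↦ measureReal_nonneg).trans ?_
      exact Finset.sum_le_sum_of_subset_of_nonneg hsub
        fun _ _ _ ↦ Finset.sum_nonneg fun _ _ ↦ measureReal_nonneg
  have hbound : Tendsto (fun N ↦ L / (1 - S k / S N) ^ 2) atTop (nhds L) := by
    have h := (tendsto_const_nhds (x := L)).div
      ((tendsto_const_nhds (x := (1 : ℝ))).sub (hS_top.const_div_atTop (S k)) |>.pow 2)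
      (by norm_num)
    simpa [Pi.div_def] using h
  have hle : ∀ᶠ N in atTop, S N ^ 2 / Q N ≤ L / (1 - S k / S N) ^ 2 := by
    filter_upwards [eventually_ge_atTop k, hS_top.eventually_gt_atTop (S k),
      hS_top.eventually_gt_atTop 0] with N hkN hSk hS0
    have hpos : 0 < 1 - S k / S N := sub_pos.2 ((div_lt_one hS0).2 hSk)
    have heq : S N * (1 - S k / S N) = S N - S k := by field_simp
    rw [le_div_iff₀ (by positivity), div_mul_eq_mul_div, ← mul_pow, heq]
    exact div_le_of_le_mul₀ (hQ_nonneg N) measureReal_nonneg (hkey N hkN)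
  rw [← hbound.limsup_eq]
  refine limsup_le_limsup hle ?_ hbound.isBoundedUnder_le
  exact (isBoundedUnder_of ⟨0, fun N ↦ div_nonneg (sq_nonneg _) (hQ_nonneg N)⟩ :
    IsBoundedUnder (· ≥ ·) atTop fun N ↦ S N ^ 2 / Q N).isCoboundedUnder_le

end FiniteMeasure

theorem erdos_renyi_borel_cantelli
    (A : ℕ → Set ℝ) (hmeas : ∀ n, MeasurableSet (A n))
    (hsub : ∀ n, A n ⊆ Set.Icc (0 : ℝ) 1)
    (hdiv : ∑' n : ℕ, volume (A n) = ⊤) :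
    Filter.limsup (fun N : ℕ =>
        (∑ n ∈ Finset.range N, (volume (A n)).toReal) ^ 2 /
          ∑ m ∈ Finset.range N, ∑ n ∈ Finset.range N, (volume (A n ∩ A m)).toReal)
      atTop ≤ (volume (Filter.limsup A atTop)).toReal := by
  have hrestrict : ∀ {B : Set ℝ}, B ⊆ Set.Icc 0 1 →
      volume.restrict (Set.Icc (0 : ℝ) 1) B = volume B := Measure.restrict_eq_self _
  have hlim : limsup A atTop ⊆ Set.Icc 0 1 := limsup_le_of_le (h := .of_forall hsub)
  have h := limsup_sq_sum_div_le_measureReal_limsup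
    (μ := volume.restrict (Set.Icc (0 : ℝ) 1)) hmeas (by simpa only [hrestrict (hsub _)] using hdiv)
  simpa only [Measure.real, hrestrict hlim, hrestrict (hsub _),
    hrestrict (Set.inter_subset_left.trans (hsub _))] using h
end

section
/- Let f : ℝ_{>0} → ℝ_{>2} be a function increasing monotonically to ∞ satisfying f(x) = O((log x)^{−7/3} x^{1/3}), and suppose either (a) Σ_{n≥1} 1/(n f(n)) diverges and the sequence j ↦ f(2^j)/f(2^{j+1}) is non-decreasing, or (b) Σ_{n≥1} 1/(n f(n)) converges and sup{ f(2x)/f(x) : x ≥ x₀ } < 2 for some x₀ > 0. Then for any fixed parameters 0 < γ < β < 3/4 there exists a strictly increasing sequence (a_n)_{n≥1} of positive integers with E(A_N) = Θ( N³ · f(N)^{−3(β−γ)} ). -/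
open Filter MeasureTheory
open scoped Classical

section Combinatorics

variable {ι : Type*}

lemma card_le_card_pow_three {P : Finset ℕ} (Q : Finset ι) (u v x y : ι → ℕ)
    (hinj : ∀ q ∈ Q, ∀ r ∈ Q, u q = u r → v q = v r → x q = x r → y q = y r → q = r)
    (heq : ∀ q ∈ Q, u q + v q = x q + y q)
    (hu : ∀ q ∈ Q, u q ∈ P) (hv : ∀ q ∈ Q, v q ∈ P) (hx : ∀ q ∈ Q, x q ∈ P) :
    Q.card ≤ P.card ^ 3 := by
  have h : Q.card ≤ (P ×ˢ P ×ˢ P).card := by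
    refine Finset.card_le_card_of_injOn (fun q => (u q, v q, x q)) ?_ ?_
    · intro q hq
      have hq' : q ∈ Q := hq
      simp [hu q hq', hv q hq', hx q hq']
    · intro q hq r hr h
      simp only [Prod.mk.injEq] at h
      obtain ⟨h1, h2, h3⟩ := h
      have e1 := heq q hq
      have e2 := heq r hr
      exact hinj q hq r hr h1 h2 h3 (by omega)
  simpa [Finset.card_product, pow_succ, mul_assoc] using h

/-- A set of naturals is Sidon if sums of pairs determine the pair up to order. -/
def IsSidonSet (S : Finset ℕ) : Prop :=
  ∀ s ∈ S, ∀ t ∈ S, ∀ s' ∈ S, ∀ t' ∈ S, s + t = s' + t' → s = s' ∧ t = t' ∨ s = t' ∧ t = s'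

lemma IsSidonSet.of_lacunary {S : Finset ℕ} (h : ∀ s ∈ S, ∀ t ∈ S, s < t → 2 * s < t) :
    IsSidonSet S := by
  intro s hs t ht s' hs' t' ht' e
  have h1 := h s hs s' hs'
  have h2 := h s hs t' ht'
  have h3 := h t ht s' hs'
  have h4 := h t ht t' ht'
  have h5 := h s' hs' s hs
  have h6 := h t' ht' s hs
  have h7 := h s' hs' t ht
  have h8 := h t' ht' t ht
  omega

lemma IsSidonSet.card_sum_le {S A : Finset ℕ} (hS : IsSidonSet S) (Q : Finset ι)
    (u v x y : ι → ℕ)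
    (hinj : ∀ q ∈ Q, ∀ r ∈ Q, u q = u r → v q = v r → x q = x r → y q = y r → q = r)
    (heq : ∀ q ∈ Q, u q + v q = x q + y q)
    (hu : ∀ q ∈ Q, u q ∈ S) (hv : ∀ q ∈ Q, v q ∈ S)
    (hx : ∀ q ∈ Q, x q ∈ A) (hy : ∀ q ∈ Q, y q ∈ A) :
    Q.card ≤ 2 * A.card ^ 2 := by
  have h : Q.card ≤ ((Finset.univ : Finset Bool) ×ˢ A ×ˢ A).card := by
    refine Finset.card_le_card_of_injOn (fun q => (decide (u q ≤ v q), x q, y q)) ?_ ?_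
    · intro q hq
      have hq' : q ∈ Q := hq
      simp [hx q hq', hy q hq', le_or_gt]
    · intro q hq r hr h
      simp only [Prod.mk.injEq, decide_eq_decide] at h
      obtain ⟨h1, h2, h3⟩ := h
      have e1 := heq q hq
      have e2 := heq r hr
      have e3 := hS _ (hu q hq) _ (hv q hq) _ (hu r hr) _ (hv r hr) (by omega)
      exact hinj q hq r hr (by omega) (by omega) h2 h3
  simpa [Finset.card_product, pow_succ, mul_assoc] using h

lemma IsSidonSet.card_diff_le {S A : Finset ℕ} (hS : IsSidonSet S) (Q : Finset ι)
    (u v x y : ι → ℕ)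
    (hinj : ∀ q ∈ Q, ∀ r ∈ Q, u q = u r → v q = v r → x q = x r → y q = y r → q = r)
    (heq : ∀ q ∈ Q, u q + x q = v q + y q)
    (hu : ∀ q ∈ Q, u q ∈ S) (hv : ∀ q ∈ Q, v q ∈ S)
    (hx : ∀ q ∈ Q, x q ∈ A) (hy : ∀ q ∈ Q, y q ∈ A) (hSA : S ⊆ A) :
    Q.card ≤ 2 * A.card ^ 2 := by
  have h : Q.card ≤ ((Finset.univ : Finset Bool) ×ˢ A ×ˢ A).card := by
    refine Finset.card_le_card_of_injOn
      (fun q => (decide (u q = v q), x q, if u q = v q then u q else y q)) ?_ ?_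
    · intro q hq
      have hq' : q ∈ Q := hq
      by_cases huv : u q = v q
      · simp [hx q hq', huv, hSA (hv q hq')]
      · simp [hx q hq', huv, hy q hq']
    · intro q hq r hr h
      simp only [Prod.mk.injEq, decide_eq_decide] at h
      obtain ⟨h1, h2, h3⟩ := h
      have e1 := heq q hq
      have e2 := heq r hr
      by_cases huv : u q = v q
      · have hr' := h1.1 huv
        rw [if_pos huv, if_pos hr'] at h3
        exact hinj q hq r hr h3 (by omega) h2 (by omega)
      · have hr' : ¬ u r = v r := fun h => huv (h1.2 h)
        rw [if_neg huv, if_neg hr'] at h3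
        have e3 := hS _ (hu q hq) _ (hv r hr) _ (hu r hr) _ (hv q hq) (by omega)
        exact hinj q hq r hr (by omega) (by omega) h2 h3
  simpa [Finset.card_product, pow_succ, mul_assoc] using h

end Combinatorics

lemma addEnergy_mono {A B : Finset ℕ} (h : A ⊆ B) : addEnergy A ≤ addEnergy B :=
  Finset.card_le_card (Finset.filter_subset_filter _
    (Finset.product_subset_product (Finset.product_subset_product h h)
      (Finset.product_subset_product h h)))

set_option maxHeartbeats 1000000 in
/-- Adjoining a Sidon set to `P` costs only a quadratic amount of additive energy. -/
lemma addEnergy_union_le {P S : Finset ℕ} (hS : IsSidonSet S) :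
    addEnergy (P ∪ S) ≤ 4 * P.card ^ 3 + 12 * (P ∪ S).card ^ 2 := by
  set A := P ∪ S with hA
  have hSA : S ⊆ A := Finset.subset_union_right
  set Q := ((A ×ˢ A) ×ˢ (A ×ˢ A)).filter fun q => q.1.1 + q.1.2 = q.2.1 + q.2.2 with hQ
  have mem : ∀ q ∈ Q, q.1.1 ∈ A ∧ q.1.2 ∈ A ∧ q.2.1 ∈ A ∧ q.2.2 ∈ A ∧
      q.1.1 + q.1.2 = q.2.1 + q.2.2 := by
    intro q hq
    simpa [hQ, Finset.mem_filter, Finset.mem_product, and_assoc] using hq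
  have pA : ∀ z ∈ A, z ∈ P ∨ z ∈ S := fun z hz => Finset.mem_union.1 hz
  have p1 : (Q.filter fun q => q.1.1 ∈ P ∧ q.1.2 ∈ P ∧ q.2.1 ∈ P).card ≤ P.card ^ 3 := by
    apply card_le_card_pow_three _ (fun q => q.1.1) (fun q => q.1.2) (fun q => q.2.1)
      (fun q => q.2.2) <;> grind
  have p2 : (Q.filter fun q => q.1.1 ∈ P ∧ q.1.2 ∈ P ∧ q.2.2 ∈ P).card ≤ P.card ^ 3 := by
    apply card_le_card_pow_three _ (fun q => q.1.1) (fun q => q.1.2) (fun q => q.2.2)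
      (fun q => q.2.1) <;> grind
  have p3 : (Q.filter fun q => q.1.1 ∈ P ∧ q.2.1 ∈ P ∧ q.2.2 ∈ P).card ≤ P.card ^ 3 := by
    apply card_le_card_pow_three _ (fun q => q.2.1) (fun q => q.2.2) (fun q => q.1.1)
      (fun q => q.1.2) <;> grind
  have p4 : (Q.filter fun q => q.1.2 ∈ P ∧ q.2.1 ∈ P ∧ q.2.2 ∈ P).card ≤ P.card ^ 3 := by
    apply card_le_card_pow_three _ (fun q => q.2.1) (fun q => q.2.2) (fun q => q.1.2)
      (fun q => q.1.1) <;> grind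
  have s1 : (Q.filter fun q => q.1.1 ∈ S ∧ q.1.2 ∈ S).card ≤ 2 * A.card ^ 2 := by
    apply hS.card_sum_le _ (fun q => q.1.1) (fun q => q.1.2) (fun q => q.2.1)
      (fun q => q.2.2) <;> grind
  have s2 : (Q.filter fun q => q.2.1 ∈ S ∧ q.2.2 ∈ S).card ≤ 2 * A.card ^ 2 := by
    apply hS.card_sum_le _ (fun q => q.2.1) (fun q => q.2.2) (fun q => q.1.1)
      (fun q => q.1.2) <;> grind
  have d1 : (Q.filter fun q => q.1.1 ∈ S ∧ q.2.1 ∈ S).card ≤ 2 * A.card ^ 2 := by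
    apply hS.card_diff_le _ (fun q => q.1.1) (fun q => q.2.1) (fun q => q.1.2)
      (fun q => q.2.2) <;> grind
  have d2 : (Q.filter fun q => q.1.1 ∈ S ∧ q.2.2 ∈ S).card ≤ 2 * A.card ^ 2 := by
    apply hS.card_diff_le _ (fun q => q.1.1) (fun q => q.2.2) (fun q => q.1.2)
      (fun q => q.2.1) <;> grind
  have d3 : (Q.filter fun q => q.1.2 ∈ S ∧ q.2.1 ∈ S).card ≤ 2 * A.card ^ 2 := by
    apply hS.card_diff_le _ (fun q => q.1.2) (fun q => q.2.1) (fun q => q.1.1)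
      (fun q => q.2.2) <;> grind
  have d4 : (Q.filter fun q => q.1.2 ∈ S ∧ q.2.2 ∈ S).card ≤ 2 * A.card ^ 2 := by
    apply hS.card_diff_le _ (fun q => q.1.2) (fun q => q.2.2) (fun q => q.1.1)
      (fun q => q.2.1) <;> grind
  have cover : Q ⊆ (Q.filter fun q => q.1.1 ∈ P ∧ q.1.2 ∈ P ∧ q.2.1 ∈ P) ∪
      ((Q.filter fun q => q.1.1 ∈ P ∧ q.1.2 ∈ P ∧ q.2.2 ∈ P) ∪
      ((Q.filter fun q => q.1.1 ∈ P ∧ q.2.1 ∈ P ∧ q.2.2 ∈ P) ∪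
      ((Q.filter fun q => q.1.2 ∈ P ∧ q.2.1 ∈ P ∧ q.2.2 ∈ P) ∪
      ((Q.filter fun q => q.1.1 ∈ S ∧ q.1.2 ∈ S) ∪
      ((Q.filter fun q => q.2.1 ∈ S ∧ q.2.2 ∈ S) ∪
      ((Q.filter fun q => q.1.1 ∈ S ∧ q.2.1 ∈ S) ∪
      ((Q.filter fun q => q.1.1 ∈ S ∧ q.2.2 ∈ S) ∪
      ((Q.filter fun q => q.1.2 ∈ S ∧ q.2.1 ∈ S) ∪
      (Q.filter fun q => q.1.2 ∈ S ∧ q.2.2 ∈ S))))))))) := by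
    intro q hq
    obtain ⟨h1, h2, h3, h4, -⟩ := mem q hq
    have h1 := pA _ h1
    have h2 := pA _ h2
    have h3 := pA _ h3
    have h4 := pA _ h4
    simp only [Finset.mem_union, Finset.mem_filter, hq, true_and]
    rcases h1 with h1 | h1 <;> rcases h2 with h2 | h2 <;> rcases h3 with h3 | h3 <;>
      rcases h4 with h4 | h4 <;> simp only [h1, h2, h3, h4, and_self, true_or, or_true]
  have hc := Finset.card_le_card cover
  have hE : addEnergy A = Q.card := rfl
  rw [hE]
  clear_value A
  grw [hc, Finset.card_union_le, Finset.card_union_le, Finset.card_union_le,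
    Finset.card_union_le, Finset.card_union_le, Finset.card_union_le, Finset.card_union_le,
    Finset.card_union_le, Finset.card_union_le, p1, p2, p3, p4, s1, s2, d1, d2, d3, d4]
  apply le_of_eq
  ring

lemma addEnergy_interval_ge {A : Finset ℕ} {m L : ℕ} (h : ∀ k < L, m + k ∈ A) :
    ((L : ℝ) / 2) ^ 3 ≤ addEnergy A := by
  set r := (L + 1) / 2 with hr
  have hcard : (Finset.range r ×ˢ Finset.range r ×ˢ Finset.range r).card ≤ addEnergy A := by
    refine Finset.card_le_card_of_injOn
      (fun t => ((m + (t.1 + t.2.2), m + t.2.1), (m + t.1, m + (t.2.1 + t.2.2)))) ?_ ?_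
    · rintro ⟨a, b, c⟩ ht
      simp only [Finset.coe_product, Set.mem_prod, Finset.coe_range, Set.mem_Iio] at ht
      obtain ⟨ha, hb, hc⟩ := ht
      simp only [Finset.coe_filter, Finset.mem_product, Set.mem_ofPred_eq]
      exact ⟨⟨⟨h _ (by omega), h _ (by omega)⟩, h _ (by omega), h _ (by omega)⟩, by omega⟩
    · rintro ⟨a, b, c⟩ - ⟨a', b', c'⟩ - ht
      simp only [Prod.mk.injEq] at ht ⊢
      omega
  have h2 : (L : ℝ) / 2 ≤ r := by
    have : L ≤ 2 * r := by omega
    have : (L : ℝ) ≤ 2 * r := by exact_mod_cast this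
    linarith
  calc ((L : ℝ) / 2) ^ 3 ≤ (r : ℝ) ^ 3 := by gcongr
    _ ≤ (addEnergy A : ℝ) := by
      have : r ^ 3 ≤ addEnergy A := by
        simpa [Finset.card_product, pow_succ, mul_assoc] using hcard
      exact_mod_cast this

/-- The sequence that steps by one at indices satisfying `p` and more than doubles elsewhere. -/
noncomputable def stepSeq (p : ℕ → Prop) : ℕ → ℕ
  | 0 => 0
  | n + 1 => if p (n + 1) then stepSeq p n + 1 else 2 * stepSeq p n + 1

lemma stepSeq_strictMono (p : ℕ → Prop) : StrictMono (stepSeq p) := by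
  refine strictMono_nat_of_lt_succ fun n => ?_
  rw [stepSeq]
  split_ifs <;> omega

lemma addEnergy_stepSeq_le (p : ℕ → Prop) (N : ℕ) :
    addEnergy (trunc (stepSeq p) N) ≤
      4 * ((Finset.Icc 1 N).filter p).card ^ 3 + 12 * N ^ 2 := by
  have hsplit : trunc (stepSeq p) N = ((Finset.Icc 1 N).filter p).image (stepSeq p) ∪
      ((Finset.Icc 1 N).filter fun n => ¬ p n).image (stepSeq p) := by
    rw [← Finset.image_union, Finset.filter_union_filter_not_eq, trunc]
  have hS : IsSidonSet (((Finset.Icc 1 N).filter fun n => ¬ p n).image (stepSeq p)) := by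
    apply IsSidonSet.of_lacunary
    intro s hs t ht hst
    simp only [Finset.mem_image, Finset.mem_filter, Finset.mem_Icc] at hs ht
    obtain ⟨m, -, rfl⟩ := hs
    obtain ⟨n, ⟨⟨hn1, -⟩, hn⟩, rfl⟩ := ht
    obtain ⟨n, rfl⟩ : ∃ k, n = k + 1 := ⟨n - 1, by omega⟩
    have hmn := (stepSeq_strictMono p).lt_iff_lt.1 hst
    have hle := (stepSeq_strictMono p).monotone (Nat.lt_succ_iff.1 hmn)
    rw [stepSeq, if_neg hn]
    omega
  have h := addEnergy_union_le (P := ((Finset.Icc 1 N).filter p).image (stepSeq p)) hS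
  rw [← hsplit] at h
  have hN : (trunc (stepSeq p) N).card ≤ N := by
    simpa [trunc] using Finset.card_image_le (s := Finset.Icc 1 N) (f := stepSeq p)
  have hP : (((Finset.Icc 1 N).filter p).image (stepSeq p)).card ≤
      ((Finset.Icc 1 N).filter p).card := Finset.card_image_le
  refine h.trans ?_
  gcongr

lemma stepSeq_add {p : ℕ → Prop} {m L : ℕ} (h : ∀ k < L, p (m + k)) :
    ∀ k < L, stepSeq p (m + k) = stepSeq p m + k := by
  intro k
  induction k with
  | zero => simp
  | succ k ih =>
    intro hk
    rw [← add_assoc, stepSeq, if_pos (by simpa [add_assoc] using h (k + 1) hk),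
      ih (by omega), add_assoc]

lemma addEnergy_stepSeq_ge {p : ℕ → Prop} {m L N : ℕ} (hm : 1 ≤ m) (hN : m + L ≤ N + 1)
    (h : ∀ k < L, p (m + k)) :
    ((L : ℝ) / 2) ^ 3 ≤ addEnergy (trunc (stepSeq p) N) := by
  refine addEnergy_interval_ge (m := stepSeq p m) fun k hk => ?_
  rw [← stepSeq_add h k hk]
  exact Finset.mem_image_of_mem _ (Finset.mem_Icc.2 ⟨by omega, by omega⟩)

/-- `n` lies in one of the initial dyadic segments `[2 ^ i, 2 ^ i + L i)`. -/
def InDyadicHead (L : ℕ → ℕ) (n : ℕ) : Prop := ∃ i, 2 ^ i ≤ n ∧ n < 2 ^ i + L i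

lemma card_inDyadicHead_le (L : ℕ → ℕ) {N j : ℕ} (hN : N < 2 ^ (j + 1)) :
    ((Finset.Icc 1 N).filter (InDyadicHead L)).card ≤ ∑ i ∈ Finset.range (j + 1), L i := by
  have hsub : (Finset.Icc 1 N).filter (InDyadicHead L) ⊆
      (Finset.range (j + 1)).biUnion fun i => Finset.Ico (2 ^ i) (2 ^ i + L i) := by
    intro n hn
    simp only [Finset.mem_filter, Finset.mem_Icc] at hn
    obtain ⟨⟨-, hnN⟩, i, hi, hi'⟩ := hn
    simp only [Finset.mem_biUnion, Finset.mem_range, Finset.mem_Ico]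
    exact ⟨i, (Nat.pow_lt_pow_iff_right one_lt_two).1 (by omega), hi, hi'⟩
  refine (Finset.card_le_card hsub).trans (Finset.card_biUnion_le.trans ?_)
  simp

/-- If `t` eventually grows at least geometrically and `L ≤ t + 1`, the partial sums of `L` are
bounded by a multiple of the last `t`. -/
lemma exists_sum_le_of_geometric {t : ℕ → ℝ} {L : ℕ → ℕ} {q : ℝ} {i₀ : ℕ} (hq : 1 < q)
    (ht : ∀ i, 0 < t i) (hgrow : ∀ i, i₀ ≤ i → q * t i ≤ t (i + 1))
    (hL : ∀ i, (L i : ℝ) ≤ t i + 1) :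
    ∃ C : ℝ, 0 < C ∧ ∀ j, i₀ ≤ j → ((∑ i ∈ Finset.range (j + 1), L i : ℕ) : ℝ) ≤ C * t j := by
  have hmono : ∀ j, i₀ ≤ j → t i₀ ≤ t j := by
    intro j hj
    induction j, hj using Nat.le_induction with
    | base => exact le_rfl
    | succ j hj ih => nlinarith [hgrow j hj, ht j]
  set M : ℝ := 1 + 1 / t i₀ with hM
  have hM0 : 0 < M := by have := ht i₀; positivity
  have hLM : ∀ j, i₀ ≤ j → (L j : ℝ) ≤ M * t j := by
    intro j hj
    have h1 : 1 ≤ 1 / t i₀ * t j := by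
      rw [div_mul_eq_mul_div, one_mul, one_le_div (ht _)]
      exact hmono j hj
    have := hL j
    rw [hM]
    linarith
  set c : ℝ := ((∑ i ∈ Finset.range (i₀ + 1), L i : ℕ) : ℝ) with hc
  have hc0 : 0 ≤ c := Nat.cast_nonneg _
  refine ⟨c / t i₀ + M * q / (q - 1), ?_, ?_⟩
  · have := ht i₀
    have : 0 < q - 1 := by linarith
    positivity
  set C := c / t i₀ + M * q / (q - 1) with hC
  have hCM : C + M * q ≤ C * q := by
    have h1 : 0 ≤ c / t i₀ := div_nonneg hc0 (ht _).le
    have h2 : M * q / (q - 1) * (q - 1) = M * q := div_mul_cancel₀ _ (by linarith)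
    have h3 : 0 ≤ c / t i₀ * (q - 1) := mul_nonneg h1 (by linarith)
    rw [hC]
    linarith
  intro j hj
  induction j, hj using Nat.le_induction with
  | base =>
    have h1 : c / t i₀ * t i₀ = c := div_mul_cancel₀ _ (ht _).ne'
    have h2 : 0 ≤ M * q / (q - 1) * t i₀ :=
      mul_nonneg (div_nonneg (by positivity) (by linarith)) (ht _).le
    rw [hC, add_mul, h1]
    linarith
  | succ j hj ih =>
    rw [Finset.sum_range_succ, Nat.cast_add]
    have h1 := hLM (j + 1) (by omega)
    have h2 := hgrow j hj
    have hC0 : 0 ≤ C := by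
      by_contra hneg
      nlinarith [mul_pos hM0 (by linarith : (0 : ℝ) < q)]
    have h3 : C * t j ≤ (C - M) * t (j + 1) := by
      have hq0 : (0 : ℝ) < q := by linarith
      have hCMnn : 0 ≤ C - M := by
        by_contra hneg
        nlinarith
      calc C * t j ≤ (C - M) * q * t j := by
            have := ht j
            gcongr
            linarith
        _ = (C - M) * (q * t j) := by ring
        _ ≤ _ := by gcongr
    linarith

lemma eventually_le_rpow_third {f : ℝ → ℝ}
    (hf_O : ∃ C : ℝ, 0 < C ∧ ∀ᶠ x : ℝ in atTop,
      f x ≤ C * x ^ ((1 : ℝ) / 3) / (Real.log x) ^ ((7 : ℝ) / 3)) :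
    ∃ C : ℝ, 0 < C ∧ ∀ᶠ x : ℝ in atTop, f x ≤ C * x ^ ((1 : ℝ) / 3) := by
  obtain ⟨C, hC, h⟩ := hf_O
  refine ⟨C, hC, ?_⟩
  filter_upwards [h, Real.tendsto_log_atTop.eventually_ge_atTop 1, eventually_ge_atTop 0]
    with x hx hlog hx0
  refine hx.trans (div_le_self (by positivity) (Real.one_le_rpow hlog (by norm_num)))

/-- A function of size `O(x ^ (1 / 3))` whose dyadic ratios are monotone eventually at most
doubles along powers of two. -/
lemma eventually_dyadic_doubling_of_monotone {f : ℝ → ℝ}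
    (hf_gt : ∀ x : ℝ, 0 < x → 2 < f x)
    (hO : ∃ C : ℝ, 0 < C ∧ ∀ᶠ x : ℝ in atTop, f x ≤ C * x ^ ((1 : ℝ) / 3))
    (hmono : Monotone fun j : ℕ => f ((2 : ℝ) ^ j) / f ((2 : ℝ) ^ (j + 1))) :
    ∃ i₀ : ℕ, ∀ i, i₀ ≤ i → f ((2 : ℝ) ^ (i + 1)) ≤ 2 * f ((2 : ℝ) ^ i) := by
  have hpos : ∀ i : ℕ, 0 < f ((2 : ℝ) ^ i) := fun i => by
    linarith [hf_gt ((2 : ℝ) ^ i) (by positivity)]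
  by_cases hex : ∃ i₀ : ℕ, f ((2 : ℝ) ^ (i₀ + 1)) ≤ 2 * f ((2 : ℝ) ^ i₀)
  · obtain ⟨i₀, h0⟩ := hex
    refine ⟨i₀, fun i hi => ?_⟩
    have h1 : 1 / 2 ≤ f ((2 : ℝ) ^ i₀) / f ((2 : ℝ) ^ (i₀ + 1)) := by
      rw [le_div_iff₀ (hpos _)]
      linarith
    have h2 := h1.trans (hmono hi)
    rw [le_div_iff₀ (hpos _)] at h2
    linarith
  · exfalso
    push Not at hex
    have hgrow : ∀ i : ℕ, (2 : ℝ) ^ i ≤ f ((2 : ℝ) ^ i) := by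
      intro i
      induction i with
      | zero => simpa using (by linarith [hf_gt 1 one_pos] : (1 : ℝ) ≤ f 1)
      | succ i ih => linarith [hex i, pow_succ (2 : ℝ) i]
    obtain ⟨C, hC, h⟩ := hO
    have h2 : Tendsto (fun i : ℕ => (2 : ℝ) ^ i) atTop atTop :=
      tendsto_pow_atTop_atTop_of_one_lt one_lt_two
    have h3 : ∀ᶠ x : ℝ in atTop, C < x ^ ((2 : ℝ) / 3) :=
      (tendsto_rpow_atTop (by norm_num)).eventually_gt_atTop C
    obtain ⟨i, hi1, hi2⟩ := ((h2.eventually h).and (h2.eventually h3)).exists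
    have hx : (0 : ℝ) < (2 : ℝ) ^ i := by positivity
    have h4 : ((2 : ℝ) ^ i) ^ ((2 : ℝ) / 3) * ((2 : ℝ) ^ i) ^ ((1 : ℝ) / 3) = (2 : ℝ) ^ i := by
      rw [← Real.rpow_add hx]
      norm_num
    have h5 := mul_lt_mul_of_pos_right hi2 (Real.rpow_pos_of_pos hx ((1 : ℝ) / 3))
    linarith [hgrow i]

lemma eventually_dyadic_doubling_of_le {f : ℝ → ℝ} {x₀ K : ℝ}
    (hf_gt : ∀ x : ℝ, 0 < x → 2 < f x) (hK : K < 2)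
    (h : ∀ x : ℝ, x₀ ≤ x → f (2 * x) / f x ≤ K) :
    ∃ i₀ : ℕ, ∀ i, i₀ ≤ i → f ((2 : ℝ) ^ (i + 1)) ≤ 2 * f ((2 : ℝ) ^ i) := by
  have h2 : Tendsto (fun i : ℕ => (2 : ℝ) ^ i) atTop atTop :=
    tendsto_pow_atTop_atTop_of_one_lt one_lt_two
  obtain ⟨i₀, h0⟩ := eventually_atTop.1 (h2.eventually_ge_atTop x₀)
  refine ⟨i₀, fun i hi => ?_⟩
  have hpos := hf_gt ((2 : ℝ) ^ i) (by positivity)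
  have h3 := h _ (h0 i hi)
  rw [div_le_iff₀ (by linarith), ← pow_succ'] at h3
  nlinarith

/-- The length of the arithmetic progression placed at the start of the `i`-th dyadic block. -/
noncomputable def headLength (f : ℝ → ℝ) (α : ℝ) (i : ℕ) : ℕ :=
  ⌈(2 : ℝ) ^ i * f ((2 : ℝ) ^ i) ^ (-α)⌉₊

lemma headLength_le_two_pow {f : ℝ → ℝ} (hf_gt : ∀ x : ℝ, 0 < x → 2 < f x) {α : ℝ} (hα : 0 ≤ α)
    (i : ℕ) : headLength f α i ≤ 2 ^ i := by
  have hf := hf_gt ((2 : ℝ) ^ i) (by positivity)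
  have h : f ((2 : ℝ) ^ i) ^ (-α) ≤ 1 :=
    Real.rpow_le_one_of_one_le_of_nonpos (by linarith) (by linarith)
  refine Nat.ceil_le.2 ?_
  push_cast
  exact mul_le_of_le_one_right (by positivity) h

lemma exists_sum_headLength_le {f : ℝ → ℝ} (hf_gt : ∀ x : ℝ, 0 < x → 2 < f x) {α : ℝ}
    (hα : 0 < α) (hα1 : α < 1) {i₀ : ℕ}
    (hdbl : ∀ i, i₀ ≤ i → f ((2 : ℝ) ^ (i + 1)) ≤ 2 * f ((2 : ℝ) ^ i)) :
    ∃ C : ℝ, 0 < C ∧ ∀ j, i₀ ≤ j →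
      ((∑ i ∈ Finset.range (j + 1), headLength f α i : ℕ) : ℝ) ≤
        C * ((2 : ℝ) ^ j * f ((2 : ℝ) ^ j) ^ (-α)) := by
  have hpos : ∀ i : ℕ, 0 < f ((2 : ℝ) ^ i) := fun i => by
    linarith [hf_gt ((2 : ℝ) ^ i) (by positivity)]
  have ht : ∀ i : ℕ, 0 < (2 : ℝ) ^ i * f ((2 : ℝ) ^ i) ^ (-α) := fun i =>
    mul_pos (by positivity) (Real.rpow_pos_of_pos (hpos i) _)
  refine exists_sum_le_of_geometric (q := 2 * 2 ^ (-α)) (i₀ := i₀) ?_ ht ?_ ?_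
  · have h : (2 : ℝ) * 2 ^ (-α) = 2 ^ (1 + -α) := by
      rw [Real.rpow_add two_pos, Real.rpow_one]
    rw [h]
    exact Real.one_lt_rpow one_lt_two (by linarith)
  · intro i hi
    have h1 : (2 * f ((2 : ℝ) ^ i)) ^ (-α) ≤ f ((2 : ℝ) ^ (i + 1)) ^ (-α) :=
      Real.rpow_le_rpow_of_nonpos (hpos _) (hdbl i hi) (by linarith)
    rw [Real.mul_rpow two_pos.le (hpos i).le] at h1
    calc (2 : ℝ) * 2 ^ (-α) * (2 ^ i * f (2 ^ i) ^ (-α))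
        = 2 ^ (i + 1) * (2 ^ (-α) * f (2 ^ i) ^ (-α)) := by ring
      _ ≤ _ := by gcongr
  · exact fun i => (Nat.ceil_lt_add_one (ht i).le).le

theorem energy_of_constructed_sequence
    (f : ℝ → ℝ)
    (hf_gt : ∀ x : ℝ, 0 < x → 2 < f x)
    (hf_mono : MonotoneOn f (Set.Ioi (0 : ℝ)))
    (hf_top : Tendsto f atTop atTop)
    (hf_O : ∃ C : ℝ, 0 < C ∧ ∀ᶠ x : ℝ in atTop,
      f x ≤ C * x ^ ((1 : ℝ) / 3) / (Real.log x) ^ ((7 : ℝ) / 3))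
    (hcase :
      ((¬ Summable fun n : ℕ => 1 / ((n : ℝ) * f n)) ∧
        Monotone fun j : ℕ => f ((2 : ℝ) ^ j) / f ((2 : ℝ) ^ (j + 1))) ∨
      ((Summable fun n : ℕ => 1 / ((n : ℝ) * f n)) ∧
        ∃ x₀ : ℝ, 0 < x₀ ∧ ∃ K : ℝ, K < 2 ∧ ∀ x : ℝ, x₀ ≤ x → f (2 * x) / f x ≤ K))
    (γ β : ℝ) (hγ : 0 < γ) (hγβ : γ < β) (hβ : β < 3 / 4) :
    ∃ a : ℕ → ℕ, (∀ n, 1 ≤ n → a n < a (n + 1)) ∧ 0 < a 1 ∧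
      ∃ C₁ : ℝ, 0 < C₁ ∧ ∃ C₂ : ℝ, 0 < C₂ ∧ ∀ᶠ N : ℕ in atTop,
        C₁ * ((N : ℝ) ^ 3 * f N ^ (-(3 * (β - γ)))) ≤ (addEnergy (trunc a N) : ℝ) ∧
        (addEnergy (trunc a N) : ℝ) ≤ C₂ * ((N : ℝ) ^ 3 * f N ^ (-(3 * (β - γ)))) := by
  have hO := eventually_le_rpow_third hf_O
  obtain ⟨i₀, hdbl⟩ : ∃ i₀ : ℕ, ∀ i, i₀ ≤ i → f ((2 : ℝ) ^ (i + 1)) ≤ 2 * f ((2 : ℝ) ^ i) := by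
    rcases hcase with ⟨-, hm⟩ | ⟨-, x₀, -, K, hK, h⟩
    · exact eventually_dyadic_doubling_of_monotone hf_gt hO hm
    · exact eventually_dyadic_doubling_of_le hf_gt hK h
  obtain ⟨α, rfl⟩ : ∃ α, β = γ + α := ⟨β - γ, by ring⟩
  have hα : 0 < α := by linarith
  have hα1 : α < 1 := by linarith
  rw [add_sub_cancel_left]
  obtain ⟨C, hC, hsum⟩ := exists_sum_headLength_le hf_gt hα hα1 hdbl
  obtain ⟨B, hB, hfB⟩ := hO
  set p := InDyadicHead (headLength f α) with hp
  have hmono := stepSeq_strictMono p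
  refine ⟨stepSeq p, fun n _ => hmono n.lt_succ_self, (Nat.zero_le _).trans_lt (hmono one_pos),
    1 / 512, by norm_num, 4 * (C * 2 ^ α) ^ 3 + 12 * B ^ (3 * α), by positivity, ?_⟩
  filter_upwards [eventually_ge_atTop 2, eventually_ge_atTop (2 ^ i₀),
    tendsto_natCast_atTop_atTop.eventually hfB] with N hN2 hNi hNB
  have hN0 : (0 : ℝ) < N := by positivity
  have hfN : 0 < f N := by linarith [hf_gt N hN0]
  have hcube : f N ^ (-(3 * α)) = (f N ^ (-α)) ^ 3 := by
    rw [← Real.rpow_natCast, ← Real.rpow_mul hfN.le]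
    congr 1
    push_cast
    ring
  obtain ⟨j, hj1, hj2⟩ : ∃ j, 2 ^ j ≤ N ∧ N < 2 ^ (j + 1) :=
    ⟨Nat.log 2 N, Nat.pow_log_le_self 2 (by omega), Nat.lt_pow_succ_log_self one_lt_two N⟩
  have hj1' : (2 : ℝ) ^ j ≤ N := by exact_mod_cast hj1
  have hj2' : (N : ℝ) ≤ 2 ^ (j + 1) := by exact_mod_cast hj2.le
  have hfj : 0 < f ((2 : ℝ) ^ j) := by linarith [hf_gt ((2 : ℝ) ^ j) (by positivity)]
  constructor
  · obtain ⟨i, rfl⟩ : ∃ i, j = i + 1 := by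
      refine ⟨j - 1, ?_⟩
      cases j <;> omega
    have hle := headLength_le_two_pow hf_gt hα.le i
    have hge := addEnergy_stepSeq_ge (p := p) (m := 2 ^ i) (L := headLength f α i) (N := N)
      Nat.one_le_two_pow (by rw [pow_succ] at hj1; omega)
      (fun k hk => ⟨i, by omega, by omega⟩)
    refine le_trans ?_ hge
    rw [hcube, ← mul_pow, show (1 / 512 : ℝ) = (1 / 8) ^ 3 by norm_num, ← mul_pow]
    have h1 : (2 : ℝ) ^ i * f ((2 : ℝ) ^ i) ^ (-α) ≤ headLength f α i := Nat.le_ceil _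
    have hi : (0 : ℝ) < 2 ^ i := by positivity
    have h2 : f N ^ (-α) ≤ f ((2 : ℝ) ^ i) ^ (-α) := by
      refine Real.rpow_le_rpow_of_nonpos (by linarith [hf_gt _ hi]) (hf_mono hi hN0 ?_)
        (by linarith)
      refine le_trans ?_ hj1'
      exact pow_le_pow_right₀ one_le_two (by omega)
    have h3 : (N : ℝ) ≤ 4 * 2 ^ i := by
      rw [pow_succ, pow_succ] at hj2'
      linarith
    have h4 : (N : ℝ) * f N ^ (-α) ≤ 4 * 2 ^ i * f ((2 : ℝ) ^ i) ^ (-α) := by gcongr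
    have h5 : 1 / 8 * ((N : ℝ) * f N ^ (-α)) ≤ (headLength f α i : ℝ) / 2 := by linarith
    gcongr
  · have hij : i₀ ≤ j := by
      have := (Nat.pow_lt_pow_iff_right one_lt_two).1 (hNi.trans_lt hj2)
      omega
    have hle := addEnergy_stepSeq_le p N
    set P := ((Finset.Icc 1 N).filter p).card
    have hP : (P : ℝ) ≤ C * 2 ^ α * (N * f N ^ (-α)) := by
      have h1 : (P : ℝ) ≤ _ :=
        (Nat.cast_le.2 (card_inDyadicHead_le (headLength f α) hj2)).trans (hsum j hij)
      have h2 : f ((2 : ℝ) ^ j) ^ (-α) ≤ 2 ^ α * f N ^ (-α) := by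
        have h3 : f N ≤ 2 * f ((2 : ℝ) ^ j) :=
          (hf_mono hN0 (by simp : (2 : ℝ) ^ (j + 1) ∈ Set.Ioi 0) hj2').trans (hdbl j hij)
        have h4 : (2 * f ((2 : ℝ) ^ j)) ^ (-α) ≤ f N ^ (-α) :=
          Real.rpow_le_rpow_of_nonpos hfN h3 (by linarith)
        rw [Real.mul_rpow two_pos.le hfj.le] at h4
        have h5 : (2 : ℝ) ^ α * 2 ^ (-α) = 1 := by
          rw [← Real.rpow_add two_pos]
          simp
        calc f ((2 : ℝ) ^ j) ^ (-α) = 2 ^ α * 2 ^ (-α) * f ((2 : ℝ) ^ j) ^ (-α) := by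
              rw [h5, one_mul]
          _ = 2 ^ α * (2 ^ (-α) * f ((2 : ℝ) ^ j) ^ (-α)) := by ring
          _ ≤ _ := by gcongr
      calc (P : ℝ) ≤ C * ((2 : ℝ) ^ j * f ((2 : ℝ) ^ j) ^ (-α)) := h1
        _ ≤ C * (N * (2 ^ α * f N ^ (-α))) := by gcongr
        _ = _ := by ring
    have hsq : (N : ℝ) ^ 2 ≤ B ^ (3 * α) * (N ^ 3 * f N ^ (-(3 * α))) := by
      have h1 : f N ^ (3 * α) ≤ B ^ (3 * α) * N := by
        calc f N ^ (3 * α) ≤ (B * (N : ℝ) ^ ((1 : ℝ) / 3)) ^ (3 * α) := by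
              gcongr
          _ = B ^ (3 * α) * (N : ℝ) ^ α := by
              rw [Real.mul_rpow hB.le (by positivity), ← Real.rpow_mul hN0.le]
              congr 2
              ring
          _ ≤ B ^ (3 * α) * (N : ℝ) ^ (1 : ℝ) := by
              gcongr
              exact_mod_cast (by omega : 1 ≤ N)
          _ = _ := by rw [Real.rpow_one]
      have h2 : f N ^ (3 * α) * f N ^ (-(3 * α)) = 1 := by
        rw [← Real.rpow_add hfN]
        simp
      calc (N : ℝ) ^ 2 = N ^ 2 * (f N ^ (3 * α) * f N ^ (-(3 * α))) := by rw [h2, mul_one]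
        _ ≤ N ^ 2 * (B ^ (3 * α) * N * f N ^ (-(3 * α))) := by gcongr
        _ = _ := by ring
    calc (addEnergy (trunc (stepSeq p) N) : ℝ) ≤ 4 * (P : ℝ) ^ 3 + 12 * (N : ℝ) ^ 2 := by
          exact_mod_cast hle
      _ ≤ 4 * (C * 2 ^ α * (N * f N ^ (-α))) ^ 3 +
          12 * (B ^ (3 * α) * (N ^ 3 * f N ^ (-(3 * α)))) := by gcongr
      _ = _ := by
          rw [hcube]
          ring
end

section
/- Let f : ℝ_{>0} → ℝ_{>2} be a function increasing monotonically to ∞ such that the series Σ_{n≥1} 1/(n f(n)) diverges and such that the sequence j ↦ f(2^j)/f(2^{j+1}) is non-decreasing. Then lim_{j→∞} f(2^j)/f(2^{j+1}) = 1. -/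
open Filter

/-- Cauchy condensation for `∑ 1 / (n f(n))`: it converges as soon as `∑ 1 / f(2 ^ k)` does. -/
theorem summable_one_div_mul_of_summable_dyadic {f : ℝ → ℝ}
    (hf_pos : ∀ x : ℝ, 0 < x → 0 < f x) (hf_mono : MonotoneOn f (Set.Ioi (0 : ℝ)))
    (hsum : Summable fun k : ℕ => (f ((2 : ℝ) ^ k))⁻¹) :
    Summable fun n : ℕ => 1 / ((n : ℝ) * f n) := by
  rw [← summable_condensed_iff_of_nonneg]
  · refine hsum.congr fun k => ?_
    have := hf_pos ((2 : ℝ) ^ k) (by positivity)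
    push_cast
    field_simp
  · intro n
    rcases n.eq_zero_or_pos with rfl | hn
    · simp
    · have := hf_pos n (by exact_mod_cast hn)
      positivity
  · intro m n hm hmn
    have hm' : (0 : ℝ) < m := by exact_mod_cast hm
    have hmn' : (m : ℝ) ≤ n := by exact_mod_cast hmn
    have hfm := hf_pos m hm'
    have hfmn : f m ≤ f n := hf_mono hm' (hm'.trans_le hmn') hmn'
    gcongr

theorem dyadic_ratio_tendsto_one
    (f : ℝ → ℝ)
    (hf_gt : ∀ x : ℝ, 0 < x → 2 < f x)
    (hf_mono : MonotoneOn f (Set.Ioi (0 : ℝ)))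
    (hf_top : Tendsto f atTop atTop)
    (hdiv : ¬ Summable fun n : ℕ => 1 / ((n : ℝ) * f n))
    (hrat : Monotone fun j : ℕ => f ((2 : ℝ) ^ j) / f ((2 : ℝ) ^ (j + 1))) :
    Tendsto (fun j : ℕ => f ((2 : ℝ) ^ j) / f ((2 : ℝ) ^ (j + 1))) atTop (nhds 1) := by
  have hf_pos (x : ℝ) (hx : 0 < x) : 0 < f x := two_pos.trans (hf_gt x hx)
  have hpos (j : ℕ) : 0 < f ((2 : ℝ) ^ j) := hf_pos _ (by positivity)
  have hle_one (j : ℕ) : f ((2 : ℝ) ^ j) / f ((2 : ℝ) ^ (j + 1)) ≤ 1 := by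
    rw [div_le_one (hpos _)]
    exact hf_mono (Set.mem_Ioi.2 (by positivity)) (Set.mem_Ioi.2 (by positivity))
      (pow_le_pow_right₀ one_le_two j.le_succ)
  have hlub : IsLUB (Set.range fun j : ℕ => f ((2 : ℝ) ^ j) / f ((2 : ℝ) ^ (j + 1))) 1 := by
    refine ⟨Set.forall_mem_range.2 hle_one, fun r hr => ?_⟩
    by_contra! hr_lt
    refine hdiv (summable_one_div_mul_of_summable_dyadic hf_pos hf_mono ?_)
    refine summable_of_ratio_norm_eventually_le hr_lt (Eventually.of_forall fun j => ?_)
    have hj : f ((2 : ℝ) ^ j) / f ((2 : ℝ) ^ (j + 1)) ≤ r := hr ⟨j, rfl⟩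
    rw [Real.norm_of_nonneg (inv_pos.2 (hpos _)).le, Real.norm_of_nonneg (inv_pos.2 (hpos _)).le,
      ← div_eq_mul_inv, le_div_iff₀ (hpos j), mul_comm, ← div_eq_mul_inv]
    exact hj
  exact tendsto_atTop_isLUB hrat hlub
end

section
/- Let δ ∈ (0,1) be fixed and let f : ℝ_{>0} → ℝ_{>2} be a function increasing monotonically to ∞ satisfying f(x) = O((log x)^{−7/3} x^{1/3}). Suppose either (a) Σ_{n≥1} 1/(n f(n)) diverges and the sequence j ↦ f(2^j)/f(2^{j+1}) is non-decreasing, or (b) there exist ε > 0 and x₀ > 0 such that f(2x) ≤ (2−ε) f(x) for all x ≥ x₀. Define F_j := 2^j · (f(2^j))^{−δ} for j ≥ 1. Then Σ_{i≤j} F_i = O(F_j) as j → ∞. -/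
open Filter

/-- The partial sums of a positive sequence that eventually grows at least geometrically are
dominated by their last term. -/
theorem sum_Icc_le_const_mul_of_eventually_geometric {F : ℕ → ℝ} (hF : ∀ j, 0 < F j)
    {r : ℝ} (hr : 1 < r) {J : ℕ} (hJ : ∀ j ≥ J, r * F j ≤ F (j + 1)) :
    ∃ C : ℝ, 0 < C ∧ ∀ᶠ j : ℕ in atTop, ∑ i ∈ Finset.Icc 1 j, F i ≤ C * F j := by
  have hr' : 0 < r - 1 := sub_pos.2 hr
  set C := max (r / (r - 1)) ((∑ i ∈ Finset.Icc 1 J, F i) / F J)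
  have hC : r ≤ C * (r - 1) := (div_le_iff₀ hr').1 (le_max_left _ _)
  have hC0 : 0 < C := lt_of_lt_of_le (by positivity) (le_max_left _ _)
  refine ⟨C, hC0, eventually_atTop.2 ⟨J, fun j hj => ?_⟩⟩
  induction j, hj using Nat.le_induction with
  | base => exact (div_le_iff₀ (hF J)).1 (le_max_right _ _)
  | succ j hj ih =>
    rw [Finset.sum_Icc_succ_top (by omega)]
    have h₁ : C * (r * F j) ≤ C * F (j + 1) := mul_le_mul_of_nonneg_left (hJ j hj) hC0.le
    have h₂ : r * F (j + 1) ≤ C * (r - 1) * F (j + 1) :=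
      mul_le_mul_of_nonneg_right hC (hF _).le
    have h₃ := mul_le_mul_of_nonneg_left ih (by linarith : (0 : ℝ) ≤ r)
    refine le_of_mul_le_mul_left ?_ (by linarith : (0 : ℝ) < r)
    linarith

/-- A sequence that at least doubles at each step is bounded below by a geometric sequence. -/
theorem two_pow_mul_le_of_two_mul_le_succ {a : ℕ → ℝ} (h : ∀ j, 2 * a j ≤ a (j + 1)) (j : ℕ) :
    2 ^ j * a 0 ≤ a j := by
  induction j with
  | zero => simp
  | succ j ih => rw [pow_succ]; linarith [h j]

/-- A function that is `O(x ^ (1/3) / (log x) ^ (7/3))` is eventually at most `x`. -/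
theorem eventually_le_self_of_le_rpow_div_log {f : ℝ → ℝ} {C : ℝ} (hC : 0 < C)
    (hf : ∀ᶠ x : ℝ in atTop, f x ≤ C * x ^ ((1 : ℝ) / 3) / (Real.log x) ^ ((7 : ℝ) / 3)) :
    ∀ᶠ x : ℝ in atTop, f x ≤ x := by
  filter_upwards [hf, Real.tendsto_log_atTop.eventually_ge_atTop 1, eventually_gt_atTop 0,
    (tendsto_rpow_atTop (by norm_num : (0 : ℝ) < 2 / 3)).eventually_ge_atTop C]
    with x hx hlog hx0 hxC
  calc f x ≤ C * x ^ ((1 : ℝ) / 3) / (Real.log x) ^ ((7 : ℝ) / 3) := hx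
    _ ≤ C * x ^ ((1 : ℝ) / 3) :=
      div_le_self (by positivity) (Real.one_le_rpow hlog (by norm_num))
    _ ≤ x ^ ((2 : ℝ) / 3) * x ^ ((1 : ℝ) / 3) := by gcongr
    _ = x := by rw [← Real.rpow_add hx0]; norm_num

theorem dyadic_partial_sums_dominated_by_last_term
    (δ : ℝ) (hδ : δ ∈ Set.Ioo (0 : ℝ) 1)
    (f : ℝ → ℝ)
    (hf_gt : ∀ x : ℝ, 0 < x → 2 < f x)
    (hf_mono : MonotoneOn f (Set.Ioi (0 : ℝ)))
    (hf_top : Tendsto f atTop atTop)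
    (hf_O : ∃ C : ℝ, 0 < C ∧ ∀ᶠ x : ℝ in atTop,
      f x ≤ C * x ^ ((1 : ℝ) / 3) / (Real.log x) ^ ((7 : ℝ) / 3))
    (hcase :
      ((¬ Summable fun n : ℕ => 1 / ((n : ℝ) * f n)) ∧
        Monotone fun j : ℕ => f ((2 : ℝ) ^ j) / f ((2 : ℝ) ^ (j + 1))) ∨
      (∃ ε : ℝ, 0 < ε ∧ ∃ x₀ : ℝ, 0 < x₀ ∧ ∀ x : ℝ, x₀ ≤ x → f (2 * x) ≤ (2 - ε) * f x)) :
    ∃ C : ℝ, 0 < C ∧ ∀ᶠ j : ℕ in atTop,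
      ∑ i ∈ Finset.Icc 1 j, (2 : ℝ) ^ i * f ((2 : ℝ) ^ i) ^ (-δ) ≤
        C * ((2 : ℝ) ^ j * f ((2 : ℝ) ^ j) ^ (-δ)) := by
  have hpos : ∀ j : ℕ, 0 < f ((2 : ℝ) ^ j) := fun j => by linarith [hf_gt (2 ^ j) (by positivity)]
  have htwo : Tendsto (fun j : ℕ => (2 : ℝ) ^ j) atTop atTop :=
    tendsto_pow_atTop_atTop_of_one_lt one_lt_two
  obtain ⟨J, hJ⟩ : ∃ J : ℕ, ∀ j ≥ J, f ((2 : ℝ) ^ (j + 1)) ≤ 2 * f ((2 : ℝ) ^ j) := by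
    rcases hcase with ⟨-, hmono⟩ | ⟨ε, hε, x₀, -, hx₀⟩
    · obtain ⟨J, hJ⟩ : ∃ J : ℕ, f ((2 : ℝ) ^ (J + 1)) ≤ 2 * f ((2 : ℝ) ^ J) := by
        by_contra! hdouble
        obtain ⟨C, hC, hfC⟩ := hf_O
        obtain ⟨j, hj⟩ := (htwo.eventually (eventually_le_self_of_le_rpow_div_log hC hfC)).exists
        have hgrow := two_pow_mul_le_of_two_mul_le_succ (a := fun j => f ((2 : ℝ) ^ j))
          (fun j => (hdouble j).le) j
        have hstart : 2 < f ((2 : ℝ) ^ 0) := hf_gt _ (by positivity)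
        have hj0 : (0 : ℝ) < 2 ^ j := by positivity
        nlinarith
      refine ⟨J, fun j hj => ?_⟩
      have hle := hmono hj
      have hhalf : 1 / 2 ≤ f ((2 : ℝ) ^ J) / f ((2 : ℝ) ^ (J + 1)) := by
        rw [le_div_iff₀ (hpos _)]; linarith
      have := (le_div_iff₀ (hpos (j + 1))).1 (hhalf.trans hle)
      linarith
    · obtain ⟨J, hJ⟩ := eventually_atTop.1 (htwo.eventually_ge_atTop x₀)
      refine ⟨J, fun j hj => ?_⟩
      have := hx₀ _ (hJ j hj)
      rw [pow_succ']
      nlinarith [hpos j]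
  refine sum_Icc_le_const_mul_of_eventually_geometric
    (F := fun j => (2 : ℝ) ^ j * f ((2 : ℝ) ^ j) ^ (-δ)) (r := 2 * 2 ^ (-δ)) (J := J)
    (fun j => mul_pos (by positivity) (Real.rpow_pos_of_pos (hpos j) _)) ?_ fun j hj => ?_
  · rw [← Real.rpow_one_add' zero_le_two (by linarith [hδ.2])]
    exact Real.one_lt_rpow one_lt_two (by linarith [hδ.2])
  · have hle : (2 * f ((2 : ℝ) ^ j)) ^ (-δ) ≤ f ((2 : ℝ) ^ (j + 1)) ^ (-δ) :=
      Real.rpow_le_rpow_of_nonpos (hpos _) (hJ j hj) (by linarith [hδ.1])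
    rw [Real.mul_rpow zero_le_two (hpos j).le] at hle
    calc 2 * (2 : ℝ) ^ (-δ) * (2 ^ j * f ((2 : ℝ) ^ j) ^ (-δ))
        = 2 ^ (j + 1) * (2 ^ (-δ) * f ((2 : ℝ) ^ j) ^ (-δ)) := by ring
      _ ≤ _ := by gcongr
end

section
/- Let f : ℝ_{>0} → ℝ_{>2} be a function increasing monotonically to ∞ satisfying f(x) = O((log x)^{−7/3} x^{1/3}), and let ϑ : ℝ_{>0} → ℝ_{>1} be monotonically increasing to ∞ with ϑ(x) = O(x^{1/4}) and ϑ(2^{j+1})/ϑ(2^j) → 1 as j → ∞. For each j ∈ ℕ set B_j := 2^j / ( f(2^j) · √(ϑ(2^j)) ) and b_j := (2/3)·B_j, and let M := ∪_{j≥1} { n ∈ ℕ : b_j ≤ n ≤ B_j }. Let S = (α_i)_{i≥1} be a sequence running through all rationals in (0,1) whose denominators (in lowest terms) lie in M, ordered so that i ↦ H(α_i) is non-decreasing. Then S is an optimal regular system in (0,1): there exist constants c₁, c₂, c₃ > 0 such that for every nonempty interval I ⊆ (0,1) there is Q₀ = Q₀(S,I) such that for every Q ≥ Q₀ there exist indices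 c₁Q ≤ i₁ < i₂ < … < i_t ≤ Q with α_{i_h} ∈ I for h = 1,…,t, with |α_{i_h} − α_{i_ℓ}| ≥ c₂/Q for all 1 ≤ h ≠ ℓ ≤ t, and with c₃ λ(I) Q ≤ t ≤ λ(I) Q. -/
open Filter MeasureTheory

/-- `B_j := 2^j / (f(2^j) √(ϑ(2^j)))`. -/
noncomputable def Bbig (f ϑ : ℝ → ℝ) (j : ℕ) : ℝ :=
  (2 : ℝ) ^ j / (f ((2 : ℝ) ^ j) * Real.sqrt (ϑ ((2 : ℝ) ^ j)))

/-- `b_j := (2/3) B_j`. -/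
noncomputable def bsmall (f ϑ : ℝ → ℝ) (j : ℕ) : ℝ := (2 / 3) * Bbig f ϑ j

/-- `M := ∪_{j ≥ 1} {n ∈ ℕ : b_j ≤ n ≤ B_j}`. -/
def Mset (f ϑ : ℝ → ℝ) : Set ℕ :=
  {n : ℕ | ∃ j : ℕ, 1 ≤ j ∧ bsmall f ϑ j ≤ (n : ℝ) ∧ (n : ℝ) ≤ Bbig f ϑ j}

/-- Naive height of a rational number (in lowest terms). -/
def height (q : ℚ) : ℕ := max q.num.natAbs q.den

section Counting

lemma card_Icc_ceil_floor_le {x y : ℝ} (hxy : x ≤ y + 1) (hy : 0 ≤ y) :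
    ((Finset.Icc ⌈x⌉₊ ⌊y⌋₊).card : ℝ) ≤ y - x + 1 := by
  rw [Nat.card_Icc]
  rcases le_total ⌈x⌉₊ (⌊y⌋₊ + 1) with h | h
  · rw [Nat.cast_sub h]
    push_cast
    linarith [Nat.floor_le hy, Nat.le_ceil x]
  · rw [Nat.sub_eq_zero_of_le h]
    push_cast
    linarith

lemma le_card_Icc_ceil_floor {x y : ℝ} (hx : 0 ≤ x) :
    y - x - 1 ≤ ((Finset.Icc ⌈x⌉₊ ⌊y⌋₊).card : ℝ) := by
  rw [Nat.card_Icc]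
  have h : ((⌊y⌋₊ + 1 : ℕ) : ℝ) - (⌈x⌉₊ : ℝ) ≤ ((⌊y⌋₊ + 1 - ⌈x⌉₊ : ℕ) : ℝ) := by
    rw [sub_le_iff_le_add]
    exact_mod_cast (by omega : ⌊y⌋₊ + 1 ≤ ⌊y⌋₊ + 1 - ⌈x⌉₊ + ⌈x⌉₊)
  push_cast at h
  linarith [Nat.lt_floor_add_one y, Nat.ceil_lt_add_one hx]

lemma le_card_Ioo_floor_ceil {x y : ℝ} (hx : 0 ≤ x) :
    y - x - 1 ≤ ((Finset.Ioo ⌊x⌋₊ ⌈y⌉₊).card : ℝ) := by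
  rw [Nat.card_Ioo]
  have h : (⌈y⌉₊ : ℝ) - ⌊x⌋₊ - 1 ≤ ((⌈y⌉₊ - ⌊x⌋₊ - 1 : ℕ) : ℝ) := by
    have : (⌈y⌉₊ : ℝ) ≤ ((⌈y⌉₊ - ⌊x⌋₊ - 1 + (⌊x⌋₊ + 1) : ℕ) : ℝ) := by
      exact_mod_cast (by omega : ⌈y⌉₊ ≤ ⌈y⌉₊ - ⌊x⌋₊ - 1 + (⌊x⌋₊ + 1))
    push_cast at this
    linarith
  linarith [Nat.le_ceil y, Nat.floor_le hx]

lemma card_multiples_le {x y : ℝ} (hxy : x ≤ y) (hy : 0 ≤ y) {d : ℕ} (hd : 0 < d)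
    (s : Finset ℕ) (hs : ∀ n ∈ s, d ∣ n ∧ x ≤ n ∧ (n : ℝ) ≤ y) :
    (s.card : ℝ) ≤ (y - x) / d + 1 := by
  have hd' : (0 : ℝ) < d := by exact_mod_cast hd
  have hsub : s ⊆ (Finset.Icc ⌈x / d⌉₊ ⌊y / d⌋₊).image (fun k => d * k) := by
    intro n hn
    obtain ⟨⟨k, rfl⟩, h1, h2⟩ := hs n hn
    push_cast at h1 h2
    refine Finset.mem_image.2 ⟨k, Finset.mem_Icc.2 ⟨Nat.ceil_le.2 ?_, Nat.le_floor ?_⟩, rfl⟩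
    · rw [div_le_iff₀ hd']; linarith
    · rw [le_div_iff₀ hd']; linarith
  have h1 : (s.card : ℝ) ≤ ((Finset.Icc ⌈x / d⌉₊ ⌊y / d⌋₊).card : ℝ) := by
    exact_mod_cast (Finset.card_le_card hsub).trans Finset.card_image_le
  have hle : x / d ≤ y / d := by gcongr
  have h2 := card_Icc_ceil_floor_le (x := x / d) (y := y / d) (by linarith) (by positivity)
  rw [sub_div]
  linarith

lemma sum_inv_sq_le (n : ℕ) :
    ∑ d ∈ Finset.Icc 2 n, 1 / (d : ℝ) ^ 2 ≤ 13 / 20 := by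
  rcases lt_or_ge n 2 with h | h
  · rw [Finset.Icc_eq_empty (by omega)]; norm_num
  · have key : ∑ d ∈ Finset.Icc 2 n, 1 / (d : ℝ) ^ 2 ≤ 13 / 20 - 1 / ((n : ℝ) + 1 / 2) := by
      induction n, h using Nat.le_induction with
      | base => norm_num
      | succ n hn ih =>
        rw [Finset.sum_Icc_succ_top (by omega)]
        push_cast
        have : 1 / ((n : ℝ) + 1) ^ 2 ≤ 1 / ((n : ℝ) + 1 / 2) - 1 / ((n : ℝ) + 1 + 1 / 2) := by
          rw [div_sub_div _ _ (by positivity) (by positivity),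
            div_le_div_iff₀ (by positivity) (by positivity)]
          nlinarith
        linarith
    have : 0 ≤ 1 / ((n : ℝ) + 1 / 2) := by positivity
    linarith

lemma sum_inv_le_sqrt {B : ℝ} (hB : 0 < B) :
    ∑ d ∈ Finset.Icc 2 ⌊B⌋₊, 1 / (d : ℝ) ≤ √B := by
  have hs : 0 < √B := Real.sqrt_pos.2 hB
  have hsq : √B * √B = B := Real.mul_self_sqrt hB.le
  have h : ∀ d ∈ Finset.Icc 2 ⌊B⌋₊,
      1 / (d : ℝ) ≤ 1 / (2 * √B) + √B / 2 * (1 / (d : ℝ) ^ 2) := by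
    intro d hd
    have hd0 : (0 : ℝ) < d := by
      exact_mod_cast (by have := (Finset.mem_Icc.1 hd).1; omega : 0 < d)
    have : 1 / (2 * √B) + √B / 2 * (1 / (d : ℝ) ^ 2) - 1 / (d : ℝ)
        = (d - √B) ^ 2 / (2 * √B * d ^ 2) := by
      field_simp
      ring
    have : 0 ≤ (d - √B) ^ 2 / (2 * √B * (d : ℝ) ^ 2) := by positivity
    linarith
  refine (Finset.sum_le_sum h).trans ?_
  rw [Finset.sum_add_distrib, ← Finset.mul_sum, Finset.sum_const, nsmul_eq_mul]
  have h1 := sum_inv_sq_le ⌊B⌋₊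
  have h2 : ((Finset.Icc 2 ⌊B⌋₊).card : ℝ) ≤ B := by
    rw [Nat.card_Icc]
    exact (Nat.cast_le.2 (by omega : ⌊B⌋₊ + 1 - 2 ≤ ⌊B⌋₊)).trans (Nat.floor_le hB.le)
  have h3 : ((Finset.Icc 2 ⌊B⌋₊).card : ℝ) * (1 / (2 * √B)) ≤ √B / 2 := by
    calc _ ≤ B * (1 / (2 * √B)) := by gcongr
      _ = √B / 2 := by
        field_simp
        linarith
  have h4 : √B / 2 * ∑ d ∈ Finset.Icc 2 ⌊B⌋₊, 1 / (d : ℝ) ^ 2 ≤ √B / 2 * (13 / 20) := by gcongr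
  linarith

/-- The pairs `(q, p)` with `2B/3 ≤ q ≤ B` and `u < p/q < v`. -/
noncomputable def fractionPairs (u v B : ℝ) : Finset (Σ _ : ℕ, ℕ) :=
  (Finset.Icc ⌈2 / 3 * B⌉₊ ⌊B⌋₊).sigma fun q => Finset.Ioo ⌊u * q⌋₊ ⌈v * q⌉₊

lemma mem_fractionPairs {u v B : ℝ} (hu : 0 ≤ u) (hB : 0 ≤ B) {x : Σ _ : ℕ, ℕ} :
    x ∈ fractionPairs u v B ↔ (2 / 3 * B ≤ x.1 ∧ (x.1 : ℝ) ≤ B) ∧ u * x.1 < x.2 ∧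
      (x.2 : ℝ) < v * x.1 := by
  rw [fractionPairs, Finset.mem_sigma, Finset.mem_Icc, Finset.mem_Ioo, Nat.ceil_le,
    Nat.le_floor_iff hB, Nat.floor_lt (by positivity), Nat.lt_ceil]

lemma le_card_fractionPairs {u v B : ℝ} (hu : 0 ≤ u) (huv : u < v) (hv : v ≤ 1) (hB : 3 ≤ B)
    (hδB : 3 / 2 ≤ (v - u) * B) :
    2 / 9 * (v - u) * B ^ 2 - B ≤ ((fractionPairs u v B).card : ℝ) := by
  rw [fractionPairs, Finset.card_sigma, Nat.cast_sum]
  have h1 : ∀ q ∈ Finset.Icc ⌈2 / 3 * B⌉₊ ⌊B⌋₊,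
      2 / 3 * ((v - u) * B) - 1 ≤ ((Finset.Ioo ⌊u * q⌋₊ ⌈v * q⌉₊).card : ℝ) := by
    intro q hq
    have hq1 : 2 / 3 * B ≤ q := Nat.ceil_le.1 (Finset.mem_Icc.1 hq).1
    have := le_card_Ioo_floor_ceil (x := u * q) (y := v * q) (by positivity)
    nlinarith
  have h2 := Finset.sum_le_sum h1
  rw [Finset.sum_const, nsmul_eq_mul] at h2
  have h3 := le_card_Icc_ceil_floor (x := 2 / 3 * B) (y := B) (by positivity)
  have h4 : (B / 3 - 1) * (2 / 3 * ((v - u) * B) - 1) ≤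
      ((Finset.Icc ⌈2 / 3 * B⌉₊ ⌊B⌋₊).card : ℝ) * (2 / 3 * ((v - u) * B) - 1) := by
    gcongr
    · linarith
    · linarith
  nlinarith

lemma card_fractionPairs_dvd_le {u v B : ℝ} (hu : 0 ≤ u) (huv : u < v) (hv : v ≤ 1) (hB : 3 ≤ B)
    {d : ℕ} (hd : 0 < d) :
    (((fractionPairs u v B).filter fun x => d ∣ x.1 ∧ d ∣ x.2).card : ℝ) ≤
      (v - u) * B ^ 2 / 3 * (1 / (d : ℝ) ^ 2) + 2 * B * (1 / (d : ℝ)) + 1 := by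
  have hd' : (0 : ℝ) < d := by exact_mod_cast hd
  have hB0 : 0 < B := by linarith
  have hsub : ((fractionPairs u v B).filter fun x => d ∣ x.1 ∧ d ∣ x.2) ⊆
      ((Finset.Icc ⌈2 / 3 * B⌉₊ ⌊B⌋₊).filter (d ∣ ·)).sigma
        fun q => (Finset.Ioo ⌊u * q⌋₊ ⌈v * q⌉₊).filter (d ∣ ·) := by
    intro x hx
    simp only [fractionPairs, Finset.mem_filter, Finset.mem_sigma] at hx ⊢
    tauto
  have h1 : ∀ q ∈ (Finset.Icc ⌈2 / 3 * B⌉₊ ⌊B⌋₊).filter (d ∣ ·),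
      (((Finset.Ioo ⌊u * q⌋₊ ⌈v * q⌉₊).filter (d ∣ ·)).card : ℝ) ≤ (v - u) * B / d + 1 := by
    intro q hq
    have hq1 : (q : ℝ) ≤ B :=
      (Nat.le_floor_iff hB0.le).1 (Finset.mem_Icc.1 (Finset.mem_filter.1 hq).1).2
    have hv0 : 0 ≤ v := by linarith
    have := card_multiples_le (x := u * q) (y := v * q) (by gcongr) (by positivity) hd
      ((Finset.Ioo ⌊u * q⌋₊ ⌈v * q⌉₊).filter (d ∣ ·)) (by
        intro n hn
        rw [Finset.mem_filter, Finset.mem_Ioo, Nat.floor_lt (by positivity), Nat.lt_ceil] at hn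
        exact ⟨hn.2, hn.1.1.le, hn.1.2.le⟩)
    refine this.trans ?_
    rw [← sub_mul]
    have : 0 ≤ v - u := by linarith
    gcongr
  have h2 : (((Finset.Icc ⌈2 / 3 * B⌉₊ ⌊B⌋₊).filter (d ∣ ·)).card : ℝ) ≤ B / 3 / d + 1 := by
    have := card_multiples_le (x := 2 / 3 * B) (y := B) (by linarith) hB0.le hd
      ((Finset.Icc ⌈2 / 3 * B⌉₊ ⌊B⌋₊).filter (d ∣ ·)) (by
        intro n hn
        rw [Finset.mem_filter, Finset.mem_Icc, Nat.ceil_le, Nat.le_floor_iff hB0.le] at hn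
        exact ⟨hn.2, hn.1.1, hn.1.2⟩)
    refine this.trans (le_of_eq ?_)
    ring
  have hδ : 0 ≤ v - u := by linarith
  calc _ ≤ ((((Finset.Icc ⌈2 / 3 * B⌉₊ ⌊B⌋₊).filter (d ∣ ·)).sigma
        fun q => (Finset.Ioo ⌊u * q⌋₊ ⌈v * q⌉₊).filter (d ∣ ·)).card : ℝ) := by
        exact_mod_cast Finset.card_le_card hsub
    _ ≤ (((Finset.Icc ⌈2 / 3 * B⌉₊ ⌊B⌋₊).filter (d ∣ ·)).card : ℝ) * ((v - u) * B / d + 1) := by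
        rw [Finset.card_sigma, Nat.cast_sum]
        refine (Finset.sum_le_sum h1).trans (le_of_eq ?_)
        rw [Finset.sum_const, nsmul_eq_mul]
    _ ≤ (B / 3 / d + 1) * ((v - u) * B / d + 1) := by gcongr
    _ = (v - u) * B ^ 2 / 3 * (1 / (d : ℝ) ^ 2) + (1 / 3 + (v - u)) * B * (1 / (d : ℝ)) + 1 := by
        field_simp
        ring
    _ ≤ _ := by
        gcongr
        linarith

lemma le_card_coprime_fractionPairs {u v B : ℝ} (hu : 0 ≤ u) (huv : u < v) (hv : v ≤ 1)
    (hB : (1440 / (v - u)) ^ 2 ≤ B) :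
    (v - u) * B ^ 2 / 360 ≤
      (((fractionPairs u v B).filter fun x => Nat.Coprime x.2 x.1).card : ℝ) := by
  have hδ : 0 < v - u := by linarith
  have hr : 1440 ≤ 1440 / (v - u) := by
    rw [le_div_iff₀ hδ]; linarith
  have hB3 : 1440 ≤ B := by nlinarith
  have hB0 : 0 < B := by linarith
  have hsB : 1440 / (v - u) ≤ √B := Real.le_sqrt_of_sq_le hB
  have hδs : 1440 ≤ (v - u) * √B := by
    rw [div_le_iff₀ hδ] at hsB; linarith
  have hsq : √B * √B = B := Real.mul_self_sqrt hB0.le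
  have hs1 : 1 ≤ √B := by linarith
  have hδB : 3 / 2 ≤ (v - u) * B := by
    rw [← hsq]; nlinarith
  have hsub : fractionPairs u v B ⊆
      ((fractionPairs u v B).filter fun x => Nat.Coprime x.2 x.1) ∪
        (Finset.Icc 2 ⌊B⌋₊).biUnion fun d =>
          (fractionPairs u v B).filter fun x => d ∣ x.1 ∧ d ∣ x.2 := by
    intro x hx
    obtain ⟨⟨hq1, hq2⟩, -⟩ := (mem_fractionPairs hu hB0.le).1 hx
    have hq0 : 0 < x.1 := by
      have : (0 : ℝ) < x.1 := by linarith
      exact_mod_cast this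
    rw [Finset.mem_union, Finset.mem_filter, Finset.mem_biUnion]
    by_cases hc : Nat.Coprime x.2 x.1
    · exact Or.inl ⟨hx, hc⟩
    · refine Or.inr ⟨Nat.gcd x.2 x.1, Finset.mem_Icc.2 ⟨?_, ?_⟩, Finset.mem_filter.2
        ⟨hx, Nat.gcd_dvd_right _ _, Nat.gcd_dvd_left _ _⟩⟩
      · have h0 : 0 < Nat.gcd x.2 x.1 := Nat.gcd_pos_of_pos_right _ hq0
        have h1 : Nat.gcd x.2 x.1 ≠ 1 := hc
        omega
      · exact (Nat.gcd_le_right _ hq0).trans (Nat.le_floor hq2)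
  have hcard : ((fractionPairs u v B).card : ℝ) ≤
      (((fractionPairs u v B).filter fun x => Nat.Coprime x.2 x.1).card : ℝ) +
        ∑ d ∈ Finset.Icc 2 ⌊B⌋₊,
          (((fractionPairs u v B).filter fun x => d ∣ x.1 ∧ d ∣ x.2).card : ℝ) := by
    exact_mod_cast (Finset.card_le_card hsub).trans ((Finset.card_union_le _ _).trans
      (Nat.add_le_add_left Finset.card_biUnion_le _))
  have hbad : ∑ d ∈ Finset.Icc 2 ⌊B⌋₊,
      (((fractionPairs u v B).filter fun x => d ∣ x.1 ∧ d ∣ x.2).card : ℝ) ≤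
      (v - u) * B ^ 2 / 3 * (13 / 20) + 2 * B * √B + B := by
    refine (Finset.sum_le_sum fun d hd => card_fractionPairs_dvd_le hu huv hv (by linarith)
      (by have := (Finset.mem_Icc.1 hd).1; omega)).trans ?_
    rw [Finset.sum_add_distrib, Finset.sum_add_distrib, ← Finset.mul_sum, ← Finset.mul_sum,
      Finset.sum_const, nsmul_eq_mul, mul_one]
    gcongr
    · exact sum_inv_sq_le _
    · exact sum_inv_le_sqrt hB0
    · rw [Nat.card_Icc]
      exact (Nat.cast_le.2 (by omega : ⌊B⌋₊ + 1 - 2 ≤ ⌊B⌋₊)).trans (Nat.floor_le hB0.le)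
  have htot := le_card_fractionPairs hu huv hv (by linarith) hδB
  have hBs : B ≤ B * √B := by nlinarith
  have hmain : 1440 * (B * √B) ≤ (v - u) * B ^ 2 := by
    have : (v - u) * B ^ 2 = ((v - u) * √B) * (B * √B) := by
      calc (v - u) * B ^ 2 = (v - u) * B * (√B * √B) := by rw [hsq]; ring
        _ = _ := by ring
    rw [this]
    gcongr
  linarith

/-- Every interval contains a proportion of order `B ^ 2` of reduced fractions whose
denominators lie in `[2B/3, B]`. -/
lemma exists_finset_rat_denominators {u v B : ℝ} (hu : 0 ≤ u) (huv : u < v) (hv : v ≤ 1)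
    (hB : (1440 / (v - u)) ^ 2 ≤ B) :
    ∃ R : Finset ℚ, (v - u) * B ^ 2 / 360 ≤ (R.card : ℝ) ∧
      ∀ r ∈ R, u < (r : ℝ) ∧ (r : ℝ) < v ∧ 2 / 3 * B ≤ r.den ∧ (r.den : ℝ) ≤ B := by
  have hδ : 0 < v - u := by linarith
  have hB0 : 0 < B := lt_of_lt_of_le (by positivity) hB
  have hpos : ∀ x ∈ fractionPairs u v B, 0 < x.1 := by
    intro x hx
    obtain ⟨⟨hq1, -⟩, -⟩ := (mem_fractionPairs hu hB0.le).1 hx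
    have : (0 : ℝ) < x.1 := by linarith
    exact_mod_cast this
  have hnd : ∀ x ∈ (fractionPairs u v B).filter fun x => Nat.Coprime x.2 x.1,
      ((x.2 : ℚ) / x.1).num = x.2 ∧ ((x.2 : ℚ) / x.1).den = x.1 := by
    intro x hx
    obtain ⟨hx, hc⟩ := Finset.mem_filter.1 hx
    have hx1 := hpos x hx
    constructor
    · have := Rat.num_div_eq_of_coprime (a := (x.2 : ℤ)) (b := (x.1 : ℤ))
        (by exact_mod_cast hx1) (by simpa using hc)
      simpa using this
    · have := Rat.den_div_eq_of_coprime (a := (x.2 : ℤ)) (b := (x.1 : ℤ))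
        (by exact_mod_cast hx1) (by simpa using hc)
      simpa using this
  refine ⟨((fractionPairs u v B).filter fun x => Nat.Coprime x.2 x.1).image
    fun x => (x.2 : ℚ) / x.1, ?_, ?_⟩
  · rw [Finset.card_image_of_injOn]
    · exact le_card_coprime_fractionPairs hu huv hv hB
    · rintro ⟨q, p⟩ hx ⟨q', p'⟩ hy hxy
      obtain ⟨hn, hd⟩ := hnd _ hx
      obtain ⟨hn', hd'⟩ := hnd _ hy
      have e1 : q = q' := hd.symm.trans ((congrArg Rat.den hxy).trans hd')
      have e2 : (p : ℤ) = p' := hn.symm.trans ((congrArg Rat.num hxy).trans hn')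
      have e3 : p = p' := by exact_mod_cast e2
      rw [e1, e3]
  · intro r hr
    obtain ⟨x, hx, rfl⟩ := Finset.mem_image.1 hr
    have hd := (hnd x hx).2
    have hx' := (Finset.mem_filter.1 hx).1
    obtain ⟨⟨hq1, hq2⟩, hp1, hp2⟩ := (mem_fractionPairs hu hB0.le).1 hx'
    have hx1 : (0 : ℝ) < x.1 := by exact_mod_cast hpos x hx'
    simp only [hd]
    push_cast
    exact ⟨(lt_div_iff₀ hx1).2 hp1, (div_lt_iff₀ hx1).2 hp2, hq1, hq2⟩

end Counting

section Denominators

lemma Bbig_succ_le {f ϑ : ℝ → ℝ} (hf_gt : ∀ x : ℝ, 0 < x → 2 < f x)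
    (hf_mono : MonotoneOn f (Set.Ioi (0 : ℝ))) (hϑ_gt : ∀ x : ℝ, 0 < x → 1 < ϑ x)
    (hϑ_mono : MonotoneOn ϑ (Set.Ioi (0 : ℝ))) (j : ℕ) :
    Bbig f ϑ (j + 1) ≤ 2 * Bbig f ϑ j := by
  have h1 := hf_gt (2 ^ j) (by positivity)
  have h2 := hϑ_gt (2 ^ j) (by positivity)
  have h3 : 0 < √(ϑ (2 ^ j)) := Real.sqrt_pos.2 (by linarith)
  have h4 : 0 < f (2 ^ j) := by linarith
  have hle : (2 : ℝ) ^ j ≤ 2 ^ (j + 1) := pow_le_pow_right₀ (by norm_num) (by omega)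
  have hf' := hf_mono (Set.mem_Ioi.2 (by positivity)) (Set.mem_Ioi.2 (by positivity)) hle
  have hϑ' := hϑ_mono (Set.mem_Ioi.2 (by positivity)) (Set.mem_Ioi.2 (by positivity)) hle
  unfold Bbig
  rw [← mul_div_assoc, ← pow_succ']
  have h5 : 0 ≤ f (2 ^ (j + 1)) := h4.le.trans hf'
  gcongr

lemma tendsto_Bbig_atTop {f ϑ : ℝ → ℝ} (hf_gt : ∀ x : ℝ, 0 < x → 2 < f x)
    (hf_O : ∃ C : ℝ, 0 < C ∧ ∀ᶠ x : ℝ in atTop,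
      f x ≤ C * x ^ ((1 : ℝ) / 3) / (Real.log x) ^ ((7 : ℝ) / 3))
    (hϑ_gt : ∀ x : ℝ, 0 < x → 1 < ϑ x)
    (hϑ_O : ∃ C : ℝ, 0 < C ∧ ∀ᶠ x : ℝ in atTop, ϑ x ≤ C * x ^ ((1 : ℝ) / 4)) :
    Tendsto (Bbig f ϑ) atTop atTop := by
  obtain ⟨C, hC, hf⟩ := hf_O
  obtain ⟨D, hD, hϑ⟩ := hϑ_O
  have hmain : Tendsto (fun x : ℝ => x / (f x * √(ϑ x))) atTop atTop := by
    have hpow : Tendsto (fun x : ℝ => x ^ ((5 : ℝ) / 12) / (C * D)) atTop atTop :=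
      (tendsto_rpow_atTop (by norm_num)).atTop_div_const (by positivity)
    refine tendsto_atTop_mono' _ ?_ hpow
    filter_upwards [hf, hϑ, eventually_gt_atTop 0,
      Real.tendsto_log_atTop.eventually_ge_atTop 1] with x h1 h2 h0 hlog
    have hf0 : 0 < f x := by linarith [hf_gt x h0]
    have hϑ1 := hϑ_gt x h0
    have hs0 : 0 < √(ϑ x) := Real.sqrt_pos.2 (by linarith)
    have hs : √(ϑ x) ≤ D * x ^ ((1 : ℝ) / 4) :=
      (Real.sqrt_le_iff.2 ⟨by linarith, by nlinarith⟩ : √(ϑ x) ≤ ϑ x).trans h2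
    have hf1 : f x ≤ C * x ^ ((1 : ℝ) / 3) :=
      h1.trans (div_le_self (by positivity) (Real.one_le_rpow hlog (by norm_num)))
    have hprod : f x * √(ϑ x) ≤ C * D * x ^ ((7 : ℝ) / 12) := by
      calc f x * √(ϑ x) ≤ (C * x ^ ((1 : ℝ) / 3)) * (D * x ^ ((1 : ℝ) / 4)) := by gcongr
        _ = C * D * (x ^ ((1 : ℝ) / 3) * x ^ ((1 : ℝ) / 4)) := by ring
        _ = _ := by rw [← Real.rpow_add h0]; norm_num
    rw [div_le_div_iff₀ (by positivity) (by positivity)]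
    calc x ^ ((5 : ℝ) / 12) * (f x * √(ϑ x))
        ≤ x ^ ((5 : ℝ) / 12) * (C * D * x ^ ((7 : ℝ) / 12)) := by gcongr
      _ = C * D * (x ^ ((5 : ℝ) / 12) * x ^ ((7 : ℝ) / 12)) := by ring
      _ = x * (C * D) := by
        rw [← Real.rpow_add h0]
        norm_num
        ring
  exact hmain.comp (tendsto_pow_atTop_atTop_of_one_lt (by norm_num : (1 : ℝ) < 2))

lemma exists_le_lt_two_mul {b : ℕ → ℝ} (hb : Tendsto b atTop atTop)
    (hstep : ∀ j, b (j + 1) ≤ 2 * b j) {x : ℝ} (hx : b 1 ≤ x) :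
    ∃ j, 1 ≤ j ∧ b j ≤ x ∧ x < 2 * b j := by
  classical
  have hex : ∃ j, x < b (j + 1) :=
    ((hb.comp (tendsto_add_atTop_nat 1)).eventually_gt_atTop x).exists
  have hspec := Nat.find_spec hex
  have h0 : Nat.find hex ≠ 0 := by
    intro h
    rw [h] at hspec
    linarith
  obtain ⟨k, hk⟩ := Nat.exists_eq_succ_of_ne_zero h0
  have hmin := Nat.find_min hex (m := k) (by omega)
  rw [hk] at hspec
  exact ⟨k + 1, by omega, not_lt.1 hmin, hspec.trans_le (hstep _)⟩

/-- For large `N`, an interval contains a proportion of order `N ^ 2` of the reduced fractions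
with denominator in `Mset f ϑ ∩ [N/3, N]`. -/
lemma exists_finset_rat_den_mem_Mset {f ϑ : ℝ → ℝ}
    (hb : Tendsto (Bbig f ϑ) atTop atTop) (hstep : ∀ j, Bbig f ϑ (j + 1) ≤ 2 * Bbig f ϑ j)
    {u v : ℝ} (hu : 0 ≤ u) (huv : u < v) (hv : v ≤ 1) :
    ∃ N₀ : ℕ, ∀ N : ℕ, N₀ ≤ N → ∃ R : Finset ℚ, (v - u) * (N : ℝ) ^ 2 / 1440 ≤ (R.card : ℝ) ∧
      ∀ r ∈ R, u < (r : ℝ) ∧ (r : ℝ) < v ∧ r.den ∈ Mset f ϑ ∧ (N : ℝ) / 3 ≤ r.den ∧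
        r.den ≤ N := by
  have hδ : 0 < v - u := by linarith
  refine ⟨⌈max (Bbig f ϑ 1) (2 * (1440 / (v - u)) ^ 2)⌉₊, fun N hN => ?_⟩
  have hN' := Nat.ceil_le.1 hN
  obtain ⟨j, hj, hjN, hNj⟩ := exists_le_lt_two_mul hb hstep ((le_max_left _ _).trans hN')
  have hbig := (le_max_right _ _).trans hN'
  obtain ⟨R, hR, hmem⟩ := exists_finset_rat_denominators hu huv hv
    (B := Bbig f ϑ j) (by linarith)
  refine ⟨R, le_trans ?_ hR, fun r hr => ?_⟩
  · have : (N : ℝ) ^ 2 ≤ (2 * Bbig f ϑ j) ^ 2 := by gcongr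
    nlinarith
  · obtain ⟨h1, h2, h3, h4⟩ := hmem r hr
    exact ⟨h1, h2, ⟨j, hj, h3, h4⟩, by linarith, by exact_mod_cast h4.trans hjN⟩

end Denominators

section Rationals

lemma height_eq_den {q : ℚ} (h0 : 0 < q) (h1 : q < 1) : height q = q.den := by
  have hn : 0 < q.num := Rat.num_pos.2 h0
  have hlt : q.num < q.den := Rat.num_lt_denom_iff.2 h1
  unfold height
  omega

lemma inv_sq_le_abs_sub {a b : ℚ} (hab : a ≠ b) {N : ℕ} (ha : a.den ≤ N) (hb : b.den ≤ N) :
    1 / (N : ℝ) ^ 2 ≤ |(a : ℝ) - b| := by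
  have hda : (0 : ℝ) < a.den := by exact_mod_cast a.den_pos
  have hdb : (0 : ℝ) < b.den := by exact_mod_cast b.den_pos
  have hz : a.num * b.den - b.num * a.den ≠ 0 := by
    intro h
    exact hab (Rat.eq_iff_mul_eq_mul.2 (by linarith))
  have h1 : (1 : ℝ) ≤ |(a.num : ℝ) * b.den - b.num * a.den| := by
    exact_mod_cast Int.one_le_abs hz
  have he : (a : ℝ) - b = ((a.num : ℝ) * b.den - b.num * a.den) / (a.den * b.den) := by
    rw [Rat.cast_def a, Rat.cast_def b, div_sub_div _ _ hda.ne' hdb.ne']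
    ring
  rw [he, abs_div, abs_of_pos (mul_pos hda hdb)]
  have : (a.den : ℝ) * b.den ≤ (N : ℝ) ^ 2 := by
    rw [pow_two]
    gcongr
  gcongr

lemma card_le_sq_of_den_le {s : Finset ℚ} {N : ℕ}
    (hs : ∀ r ∈ s, 0 < r ∧ r < 1 ∧ r.den ≤ N) : s.card ≤ N ^ 2 := by
  have hcard : (Finset.range N ×ˢ Finset.Icc 1 N).card = N ^ 2 := by
    rw [Finset.card_product, Finset.card_range, Nat.card_Icc, Nat.add_sub_cancel, pow_two]
  rw [← hcard]
  refine Finset.card_le_card_of_injOn (fun r => (r.num.toNat, r.den)) ?_ ?_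
  · intro r hr
    obtain ⟨h0, h1, h2⟩ := hs r hr
    have hn : 0 < r.num := Rat.num_pos.2 h0
    have hlt : r.num < r.den := Rat.num_lt_denom_iff.2 h1
    have := r.den_pos
    simp only [Finset.coe_product, Set.mem_prod, Finset.mem_coe, Finset.mem_range, Finset.mem_Icc]
    omega
  · intro r hr r' hr' h
    have hn : 0 < r.num := Rat.num_pos.2 (hs r hr).1
    have hn' : 0 < r'.num := Rat.num_pos.2 (hs r' hr').1
    simp only [Prod.mk.injEq] at h
    exact Rat.ext (by omega) h.2

end Rationals

theorem optimal_regular_system_of_restricted_rationals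
    (f : ℝ → ℝ)
    (hf_gt : ∀ x : ℝ, 0 < x → 2 < f x)
    (hf_mono : MonotoneOn f (Set.Ioi (0 : ℝ)))
    (hf_top : Tendsto f atTop atTop)
    (hf_O : ∃ C : ℝ, 0 < C ∧ ∀ᶠ x : ℝ in atTop,
      f x ≤ C * x ^ ((1 : ℝ) / 3) / (Real.log x) ^ ((7 : ℝ) / 3))
    (ϑ : ℝ → ℝ)
    (hϑ_gt : ∀ x : ℝ, 0 < x → 1 < ϑ x)
    (hϑ_mono : MonotoneOn ϑ (Set.Ioi (0 : ℝ)))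
    (hϑ_top : Tendsto ϑ atTop atTop)
    (hϑ_O : ∃ C : ℝ, 0 < C ∧ ∀ᶠ x : ℝ in atTop, ϑ x ≤ C * x ^ ((1 : ℝ) / 4))
    (hϑ_rat : Tendsto (fun j : ℕ => ϑ ((2 : ℝ) ^ (j + 1)) / ϑ ((2 : ℝ) ^ j)) atTop (nhds 1))
    (S : ℕ → ℚ)
    (hS_mem : ∀ i, 1 ≤ i → 0 < S i ∧ S i < 1 ∧ (S i).den ∈ Mset f ϑ)
    (hS_inj : ∀ i j, 1 ≤ i → 1 ≤ j → S i = S j → i = j)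
    (hS_surj : ∀ q : ℚ, 0 < q → q < 1 → q.den ∈ Mset f ϑ → ∃ i, 1 ≤ i ∧ S i = q)
    (hS_height : ∀ i, 1 ≤ i → height (S i) ≤ height (S (i + 1))) :
    ∃ c₁ : ℝ, 0 < c₁ ∧ ∃ c₂ : ℝ, 0 < c₂ ∧ ∃ c₃ : ℝ, 0 < c₃ ∧
      ∀ u v : ℝ, 0 ≤ u → u < v → v ≤ 1 →
        ∃ Q₀ : ℕ, ∀ Q : ℕ, Q₀ ≤ Q →
          ∃ (t : ℕ) (idx : Fin t → ℕ), StrictMono idx ∧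
            (∀ h, c₁ * (Q : ℝ) ≤ (idx h : ℝ)) ∧
            (∀ h, idx h ≤ Q) ∧
            (∀ h, (S (idx h) : ℝ) ∈ Set.Ioo u v) ∧
            (∀ h ℓ, h ≠ ℓ → c₂ / (Q : ℝ) ≤ |(S (idx h) : ℝ) - (S (idx ℓ) : ℝ)|) ∧
            c₃ * (v - u) * (Q : ℝ) ≤ (t : ℝ) ∧ (t : ℝ) ≤ (v - u) * (Q : ℝ) := by
  have hstep := Bbig_succ_le hf_gt hf_mono hϑ_gt hϑ_mono
  have hb := tendsto_Bbig_atTop hf_gt hf_O hϑ_gt hϑ_O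
  have hden : ∀ i, 1 ≤ i → height (S i) = (S i).den := fun i hi =>
    height_eq_den (hS_mem i hi).1 (hS_mem i hi).2.1
  have hmono : ∀ i k, 1 ≤ i → i ≤ k → (S i).den ≤ (S k).den := by
    intro i k hi hik
    induction k, hik using Nat.le_induction with
    | base => exact le_rfl
    | succ k hk ih =>
      rw [← hden k (by omega)] at ih
      rw [← hden (k + 1) (by omega)]
      exact ih.trans (hS_height k (by omega))
  have hidx_le : ∀ i N, 1 ≤ i → (S i).den ≤ N → i ≤ N ^ 2 := by
    intro i N hi hN
    have hcard : ((Finset.Icc 1 i).image S).card = i := by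
      rw [Finset.card_image_of_injOn, Nat.card_Icc, Nat.add_sub_cancel]
      intro a ha b hb' hab
      exact hS_inj a b (Finset.mem_Icc.1 ha).1 (Finset.mem_Icc.1 hb').1 hab
    refine hcard.symm.le.trans (card_le_sq_of_den_le fun r hr => ?_)
    obtain ⟨k, hk, rfl⟩ := Finset.mem_image.1 hr
    obtain ⟨hk1, hk2⟩ := Finset.mem_Icc.1 hk
    exact ⟨(hS_mem k hk1).1, (hS_mem k hk1).2.1, (hmono k i hk1 hk2).trans hN⟩
  have hcard_le : ∀ i, 1 ≤ i → ∀ R : Finset ℚ, (∀ r ∈ R, 0 < r ∧ r < 1 ∧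
      r.den ∈ Mset f ϑ ∧ r.den < (S i).den) → R.card ≤ i := by
    intro i hi R hR
    have hsub : R ⊆ (Finset.Icc 1 i).image S := by
      intro r hr
      obtain ⟨h0, h1, hM, hlt⟩ := hR r hr
      obtain ⟨k, hk, rfl⟩ := hS_surj r h0 h1 hM
      refine Finset.mem_image.2 ⟨k, Finset.mem_Icc.2 ⟨hk, ?_⟩, rfl⟩
      by_contra! hik
      exact absurd (hmono i k hi hik.le) (by omega)
    simpa using (Finset.card_le_card hsub).trans Finset.card_image_le
  obtain ⟨N₁, hN₁⟩ := exists_finset_rat_den_mem_Mset hb hstep le_rfl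
    (zero_lt_one' ℝ) le_rfl
  refine ⟨1 / 368640, by norm_num, 1, one_pos, 1 / 11520, by norm_num, ?_⟩
  intro u v hu huv hv
  obtain ⟨N₂, hN₂⟩ := exists_finset_rat_den_mem_Mset hb hstep hu huv hv
  have hδ : 0 < v - u := by linarith
  refine ⟨max ((4 * N₁ + N₂ + 4) ^ 2) ⌈11520 / (v - u)⌉₊, fun Q hQ => ?_⟩
  have hQδ : 11520 ≤ (v - u) * Q := by
    have := Nat.ceil_le.1 ((le_max_right _ _).trans hQ)
    rw [div_le_iff₀ hδ] at this
    linarith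
  set N := Nat.sqrt Q
  have hNlarge : 4 * N₁ + N₂ + 4 ≤ N := Nat.le_sqrt'.2 ((le_max_left _ _).trans hQ)
  have hNQ : N ^ 2 ≤ Q := Nat.sqrt_le' Q
  have hQN : Q < (N + 1) ^ 2 := Nat.lt_succ_sqrt' Q
  have hNQ' : (N : ℝ) ^ 2 ≤ Q := by exact_mod_cast hNQ
  have hN4 : (4 : ℝ) ≤ N := by exact_mod_cast (by omega : 4 ≤ N)
  have hQN' : (Q : ℝ) ≤ 4 * (N : ℝ) ^ 2 := by
    have : (Q : ℝ) < ((N : ℝ) + 1) ^ 2 := by exact_mod_cast hQN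
    nlinarith
  have hQ0 : (0 : ℝ) < Q := by nlinarith
  obtain ⟨R₁, hR₁, hmem₁⟩ := hN₁ (N / 4) (by omega)
  obtain ⟨R, hR, hmem⟩ := hN₂ N (by omega)
  have hex : ∀ r ∈ R, ∃ i, 1 ≤ i ∧ S i = r := by
    intro r hr
    obtain ⟨h1, h2, h3, -⟩ := hmem r hr
    exact hS_surj r (by exact_mod_cast hu.trans_lt h1) (by exact_mod_cast h2.trans_le hv) h3
  choose! g hg1 hgS using hex
  have hginj : Set.InjOn g R := fun a ha b hb' hab => by
    rw [← hgS a ha, ← hgS b hb', hab]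
  set t := ⌈1 / 11520 * (v - u) * (Q : ℝ)⌉₊
  have ht1 : 1 / 11520 * (v - u) * (Q : ℝ) ≤ t := Nat.le_ceil _
  have ht2 : (t : ℝ) < 1 / 11520 * (v - u) * Q + 1 := Nat.ceil_lt_add_one (by positivity)
  have htR : t ≤ (R.image g).card := by
    rw [Finset.card_image_of_injOn hginj]
    have : (t : ℝ) ≤ R.card := by nlinarith
    exact_mod_cast this
  obtain ⟨T, hTR, hT⟩ := Finset.exists_subset_card_eq htR
  have hTmem : ∀ h, ∃ r ∈ R, g r = T.orderEmbOfFin hT h := fun h =>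
    Finset.mem_image.1 (hTR (T.orderEmbOfFin_mem hT h))
  refine ⟨t, T.orderEmbOfFin hT, (T.orderEmbOfFin hT).strictMono, ?_, ?_, ?_, ?_, ?_, ?_⟩
  · intro h
    obtain ⟨r, hr, hgr⟩ := hTmem h
    rw [← hgr]
    have hle : R₁.card ≤ g r := by
      refine hcard_le (g r) (hg1 r hr) R₁ fun a ha => ?_
      obtain ⟨h1, h2, h3, -, h5⟩ := hmem₁ a ha
      refine ⟨by exact_mod_cast h1, by exact_mod_cast h2, h3, ?_⟩
      rw [hgS r hr]
      have h6 := (hmem r hr).2.2.2.1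
      have h7 : N ≤ 3 * r.den := by
        have : (N : ℝ) ≤ 3 * r.den := by linarith
        exact_mod_cast this
      omega
    have hle' : (R₁.card : ℝ) ≤ g r := by exact_mod_cast hle
    have hN8 : (N : ℝ) / 8 ≤ ((N / 4 : ℕ) : ℝ) := by
      have : (N : ℝ) ≤ 8 * ((N / 4 : ℕ) : ℝ) := by exact_mod_cast (by omega : N ≤ 8 * (N / 4))
      linarith
    have : ((N : ℝ) / 8) ^ 2 ≤ ((N / 4 : ℕ) : ℝ) ^ 2 := by gcongr
    nlinarith
  · intro h
    obtain ⟨r, hr, hgr⟩ := hTmem h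
    rw [← hgr]
    refine (hidx_le (g r) N (hg1 r hr) ?_).trans hNQ
    rw [hgS r hr]
    exact (hmem r hr).2.2.2.2
  · intro h
    obtain ⟨r, hr, hgr⟩ := hTmem h
    rw [← hgr, hgS r hr]
    exact ⟨(hmem r hr).1, (hmem r hr).2.1⟩
  · intro h ℓ hne
    obtain ⟨r, hr, hgr⟩ := hTmem h
    obtain ⟨s, hs, hgs⟩ := hTmem ℓ
    rw [← hgr, ← hgs, hgS r hr, hgS s hs]
    have hrs : r ≠ s := by
      rintro rfl
      exact hne ((T.orderEmbOfFin hT).injective (hgr.symm.trans hgs))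
    refine le_trans ?_ (inv_sq_le_abs_sub hrs (hmem r hr).2.2.2.2 (hmem s hs).2.2.2.2)
    gcongr
  · exact ht1
  · linarith
end

section
/- Let f : ℝ_{>0} → ℝ_{>2} be a function increasing monotonically to ∞ satisfying f(x) = O((log x)^{−7/3} x^{1/3}), and let ϑ : ℝ_{>0} → ℝ_{>1} be monotonically increasing to ∞ with ϑ(x) = O(x^{1/4}) and ϑ(2^{j+1})/ϑ(2^j) → 1 as j → ∞. For each j ∈ ℕ set B_j := 2^j / ( f(2^j) · √(ϑ(2^j)) ) and b_j := (2/3)·B_j, and let M := ∪_{j≥1} { n ∈ ℕ : b_j ≤ n ≤ B_j }. Then for all sufficiently large X, the number of distinct rationals in (0,1) whose denominator (in lowest terms) lies in M and whose height is at most X is strictly greater than (X/(5π))². -/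
open Filter MeasureTheory

/-- The terms of `∑_{d ∣ n} φ(n / d) = n` with `d ≠ 1` contribute at most `n / d` each. -/
lemma le_totient_add_sum_div {n N : ℕ} (hn : 0 < n) (hnN : n ≤ N) :
    (n : ℝ) ≤ Nat.totient n + ∑ d ∈ (Finset.Icc 2 N).filter (· ∣ n), (n : ℝ) / d := by
  have h1 : ∑ d ∈ n.divisors, Nat.totient (n / d) = n := by
    rw [Nat.sum_div_divisors n Nat.totient, Nat.sum_totient]
  have h2 : n.divisors = insert 1 ((Finset.Icc 2 N).filter (· ∣ n)) := by
    ext d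
    simp only [Nat.mem_divisors, Finset.mem_insert, Finset.mem_filter, Finset.mem_Icc]
    constructor
    · rintro ⟨hd, -⟩
      have := Nat.le_of_dvd hn hd
      have := Nat.pos_of_dvd_of_pos hd hn
      by_cases h : d = 1
      · exact Or.inl h
      · exact Or.inr ⟨⟨by omega, by omega⟩, hd⟩
    · rintro (rfl | ⟨-, hd⟩)
      · exact ⟨one_dvd _, hn.ne'⟩
      · exact ⟨hd, hn.ne'⟩
  rw [h2, Finset.sum_insert (by simp), Nat.div_one] at h1
  have h3 : ((∑ d ∈ (Finset.Icc 2 N).filter (· ∣ n), Nat.totient (n / d) : ℕ) : ℝ) ≤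
      ∑ d ∈ (Finset.Icc 2 N).filter (· ∣ n), (n : ℝ) / d := by
    rw [Nat.cast_sum]
    refine Finset.sum_le_sum fun d _ => ?_
    exact (Nat.cast_le.mpr (Nat.totient_le _)).trans Nat.cast_div_le
  have h4 : (n : ℝ) = Nat.totient n +
      ((∑ d ∈ (Finset.Icc 2 N).filter (· ∣ n), Nat.totient (n / d) : ℕ) : ℝ) := by
    exact_mod_cast h1.symm
  linarith

lemma sum_inv_sq_le_two_thirds (N : ℕ) :
    ∑ d ∈ Finset.Icc 2 N, (1 : ℝ) / (d : ℝ) ^ 2 ≤ 2 / 3 := by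
  have key : ∀ m : ℕ, ∑ d ∈ Finset.Icc 2 (m + 1), (1 : ℝ) / (d : ℝ) ^ 2 ≤
      2 / 3 - 2 / (2 * m + 3) := by
    intro m
    induction m with
    | zero => norm_num
    | succ m ih =>
      rw [Finset.sum_Icc_succ_top (by omega)]
      have : (1 : ℝ) / ((m + 1 + 1 : ℕ) : ℝ) ^ 2 ≤
          2 / (2 * m + 3) - 2 / (2 * (m + 1 : ℕ) + 3) := by
        push_cast
        rw [div_sub_div _ _ (by positivity) (by positivity), div_le_div_iff₀ (by positivity)
          (by positivity)]
        nlinarith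
      linarith
  rcases N with _ | m
  · norm_num
  · have h : (0 : ℝ) ≤ 2 / (2 * m + 3) := by positivity
    linarith [key m]

lemma sum_inv_le_one_add_log {B : ℝ} (hB : 1 ≤ B) :
    ∑ d ∈ Finset.Icc 2 ⌊B⌋₊, (1 : ℝ) / d ≤ 1 + Real.log B := by
  have h0 : 0 < ⌊B⌋₊ := Nat.floor_pos.mpr hB
  have h1 := harmonic_le_one_add_log ⌊B⌋₊
  rw [harmonic_eq_sum_Icc] at h1
  push_cast at h1
  have h2 : ∑ d ∈ Finset.Icc 2 ⌊B⌋₊, (1 : ℝ) / d ≤ ∑ d ∈ Finset.Icc 1 ⌊B⌋₊, ((d : ℝ))⁻¹ := by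
    simp only [one_div]
    exact Finset.sum_le_sum_of_subset_of_nonneg (Finset.Icc_subset_Icc_left (by norm_num))
      fun _ _ _ => by positivity
  have h3 : Real.log ⌊B⌋₊ ≤ Real.log B :=
    Real.log_le_log (by exact_mod_cast h0) (Nat.floor_le (by linarith))
  linarith

lemma card_filter_dvd_Ioc_floor_le {A B : ℝ} (hA : 0 ≤ A) (hAB : A ≤ B) (d : ℕ) :
    (((Finset.Ioc ⌊A⌋₊ ⌊B⌋₊).filter (d ∣ ·)).card : ℝ) ≤ (B - A) / d + 1 := by
  have hle : ⌊A⌋₊ ≤ ⌊B⌋₊ := Nat.floor_le_floor hAB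
  have h1 : ((Finset.Ioc 0 ⌊A⌋₊).filter (d ∣ ·)).card +
      ((Finset.Ioc ⌊A⌋₊ ⌊B⌋₊).filter (d ∣ ·)).card =
      ((Finset.Ioc 0 ⌊B⌋₊).filter (d ∣ ·)).card := by
    rw [← Finset.card_union_of_disjoint, ← Finset.filter_union,
      Finset.Ioc_union_Ioc_eq_Ioc (Nat.zero_le _) hle]
    exact Finset.disjoint_filter_filter (Finset.Ioc_disjoint_Ioc_of_le le_rfl)
  rw [Nat.Ioc_filter_dvd_card_eq_div, Nat.Ioc_filter_dvd_card_eq_div, ← Nat.floor_div_natCast,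
    ← Nat.floor_div_natCast] at h1
  have h2 : (⌊A / d⌋₊ : ℝ) + (((Finset.Ioc ⌊A⌋₊ ⌊B⌋₊).filter (d ∣ ·)).card : ℝ) =
      (⌊B / d⌋₊ : ℝ) := by exact_mod_cast h1
  have h3 := Nat.lt_floor_add_one (A / d)
  have h4 : (⌊B / d⌋₊ : ℝ) ≤ B / d := Nat.floor_le (by have := hA.trans hAB; positivity)
  rw [sub_div]
  linarith

lemma le_sum_totient_Ioc {B : ℝ} (hB : 6 ≤ B) :
    B ^ 2 / 36 - B * (2 + Real.log B) ≤
      ∑ n ∈ Finset.Ioc ⌊5 / 6 * B⌋₊ ⌊B⌋₊, (Nat.totient n : ℝ) := by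
  set S := Finset.Ioc ⌊5 / 6 * B⌋₊ ⌊B⌋₊ with hS
  have hB0 : 0 < B := by linarith
  have hmem : ∀ n ∈ S, 5 / 6 * B ≤ (n : ℝ) ∧ (n : ℝ) ≤ B := fun n hn => by
    rw [hS, Finset.mem_Ioc] at hn
    exact ⟨(Nat.lt_of_floor_lt hn.1).le, (Nat.le_floor_iff hB0.le).mp hn.2⟩
  have hcard : B / 6 - 1 ≤ (S.card : ℝ) := by
    have hle : ⌊5 / 6 * B⌋₊ ≤ ⌊B⌋₊ := Nat.floor_le_floor (by linarith)
    rw [hS, Nat.card_Ioc, Nat.cast_sub hle]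
    have h1 := Nat.lt_floor_add_one B
    have h2 : (⌊5 / 6 * B⌋₊ : ℝ) ≤ 5 / 6 * B := Nat.floor_le (by positivity)
    linarith
  have hsum : (B / 6 - 1) * (5 / 6 * B) ≤ ∑ n ∈ S, (n : ℝ) := by
    calc (B / 6 - 1) * (5 / 6 * B) ≤ S.card * (5 / 6 * B) := by gcongr
      _ = ∑ n ∈ S, (5 / 6 * B) := by simp
      _ ≤ _ := Finset.sum_le_sum fun n hn => (hmem n hn).1
  have hdiv : ∑ n ∈ S, ∑ d ∈ (Finset.Icc 2 ⌊B⌋₊).filter (· ∣ n), (n : ℝ) / d ≤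
      B ^ 2 / 6 * (2 / 3) + B * (1 + Real.log B) := by
    calc ∑ n ∈ S, ∑ d ∈ (Finset.Icc 2 ⌊B⌋₊).filter (· ∣ n), (n : ℝ) / d
        ≤ ∑ n ∈ S, ∑ d ∈ (Finset.Icc 2 ⌊B⌋₊).filter (· ∣ n), B / d :=
          Finset.sum_le_sum fun n hn => Finset.sum_le_sum fun d _ => by
            gcongr
            exact (hmem n hn).2
      _ = ∑ d ∈ Finset.Icc 2 ⌊B⌋₊, ∑ n ∈ S.filter (d ∣ ·), B / d := by
          simp only [Finset.sum_filter]
          exact Finset.sum_comm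
      _ = ∑ d ∈ Finset.Icc 2 ⌊B⌋₊, ((S.filter (d ∣ ·)).card : ℝ) * (B / d) := by simp
      _ ≤ ∑ d ∈ Finset.Icc 2 ⌊B⌋₊, ((B - 5 / 6 * B) / d + 1) * (B / d) :=
          Finset.sum_le_sum fun d _ => mul_le_mul_of_nonneg_right
            (card_filter_dvd_Ioc_floor_le (by positivity) (by linarith) d) (by positivity)
      _ = B ^ 2 / 6 * ∑ d ∈ Finset.Icc 2 ⌊B⌋₊, (1 : ℝ) / (d : ℝ) ^ 2 +
            B * ∑ d ∈ Finset.Icc 2 ⌊B⌋₊, (1 : ℝ) / d := by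
          rw [Finset.mul_sum, Finset.mul_sum, ← Finset.sum_add_distrib]
          refine Finset.sum_congr rfl fun d hd => ?_
          have : (d : ℝ) ≠ 0 := by
            have := (Finset.mem_Icc.mp hd).1
            positivity
          field_simp
          ring
      _ ≤ _ := by
          gcongr
          · exact sum_inv_sq_le_two_thirds _
          · exact sum_inv_le_one_add_log (by linarith)
  have htot : ∑ n ∈ S, (n : ℝ) ≤ ∑ n ∈ S, (Nat.totient n : ℝ) +
      ∑ n ∈ S, ∑ d ∈ (Finset.Icc 2 ⌊B⌋₊).filter (· ∣ n), (n : ℝ) / d := by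
    rw [← Finset.sum_add_distrib]
    refine Finset.sum_le_sum fun n hn => ?_
    have hn' := Finset.mem_Ioc.mp (hS ▸ hn)
    exact le_totient_add_sum_div (by omega) hn'.2
  nlinarith

/-- Each `n ≥ 2` in a set of admissible denominators contributes its `φ(n)` reduced fractions. -/
lemma sum_totient_le_ncard {M : Set ℕ} {X : ℝ} (S : Finset ℕ)
    (hS : ∀ n ∈ S, 2 ≤ n ∧ n ∈ M ∧ (n : ℝ) ≤ X) :
    ∑ n ∈ S, Nat.totient n ≤
      {q : ℚ | 0 < q ∧ q < 1 ∧ q.den ∈ M ∧ (height q : ℝ) ≤ X}.ncard := by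
  set T : Finset (Σ _ : ℕ, ℕ) := S.sigma fun n => (Finset.range n).filter n.Coprime with hT
  have hfrac : ∀ p ∈ T, p.1 ∈ S ∧ 0 < p.2 ∧ p.2 < p.1 ∧
      ((p.2 : ℚ) / p.1).num = p.2 ∧ ((p.2 : ℚ) / p.1).den = p.1 := by
    rintro ⟨n, a⟩ hp
    simp only [hT, Finset.mem_sigma, Finset.mem_filter, Finset.mem_range] at hp ⊢
    obtain ⟨hn, han, hco⟩ := hp
    have hn2 := (hS n hn).1
    have hn0 : (0 : ℤ) < n := by omega
    have hco' : Nat.Coprime (a : ℤ).natAbs (n : ℤ).natAbs := by simpa using hco.symm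
    refine ⟨hn, ?_, han, ?_, ?_⟩
    · rcases Nat.eq_zero_or_pos a with rfl | h
      · rw [Nat.coprime_zero_right] at hco
        omega
      · exact h
    · simpa using Rat.num_div_eq_of_coprime hn0 hco'
    · have := Rat.den_div_eq_of_coprime hn0 hco'
      rw [Int.cast_natCast, Int.cast_natCast] at this
      exact_mod_cast this
  have hfin : {q : ℚ | 0 < q ∧ q < 1 ∧ q.den ∈ M ∧ (height q : ℝ) ≤ X}.Finite := by
    refine Set.Finite.of_finite_image (f := fun q : ℚ => (q.num.natAbs, q.den))
      (((Set.finite_Iic ⌊X⌋₊).prod (Set.finite_Iic ⌊X⌋₊)).subset ?_) ?_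
    · rintro _ ⟨q, ⟨-, -, -, hq⟩, rfl⟩
      have hle : height q ≤ ⌊X⌋₊ := Nat.le_floor hq
      exact ⟨(le_max_left _ _).trans hle, (le_max_right _ _).trans hle⟩
    · rintro q ⟨hq, -⟩ r ⟨hr, -⟩ heq
      rw [Prod.mk.injEq] at heq
      have hq' := Rat.num_pos.mpr hq
      have hr' := Rat.num_pos.mpr hr
      exact Rat.ext (by omega) heq.2
  have himage : ((T.image fun p => (p.2 : ℚ) / p.1 : Finset ℚ) : Set ℚ) ⊆
      {q : ℚ | 0 < q ∧ q < 1 ∧ q.den ∈ M ∧ (height q : ℝ) ≤ X} := by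
    intro q hq
    simp only [Finset.coe_image, Set.mem_image, Finset.mem_coe] at hq
    obtain ⟨p, hp, rfl⟩ := hq
    obtain ⟨hpS, h0, hlt, hnum, hden⟩ := hfrac p hp
    obtain ⟨h2, hM, hX⟩ := hS _ hpS
    have h0' : (0 : ℚ) < p.2 := by exact_mod_cast h0
    have h1' : (0 : ℚ) < p.1 := by exact_mod_cast h0.trans hlt
    refine ⟨by positivity, ?_, by rwa [hden], ?_⟩
    · rw [div_lt_one h1']
      exact_mod_cast hlt
    · rw [height, hnum, hden, Int.natAbs_natCast, max_eq_right hlt.le]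
      exact hX
  have hinj : Set.InjOn (fun p : Σ _ : ℕ, ℕ => (p.2 : ℚ) / p.1) T := by
    rintro ⟨n, a⟩ hp ⟨m, b⟩ hp' heq
    obtain ⟨-, -, -, hnum, hden⟩ := hfrac _ hp
    obtain ⟨-, -, -, hnum', hden'⟩ := hfrac _ hp'
    simp only at heq hnum hden hnum' hden'
    rw [heq] at hnum hden
    obtain rfl : n = m := hden.symm.trans hden'
    obtain rfl : a = b := by exact_mod_cast hnum.symm.trans hnum'
    rfl
  calc ∑ n ∈ S, Nat.totient n = T.card := by
        rw [hT, Finset.card_sigma]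
        rfl
    _ = (T.image fun p => (p.2 : ℚ) / p.1).card := (Finset.card_image_of_injOn hinj).symm
    _ ≤ _ := by
        rw [← Set.ncard_coe_finset]
        exact Set.ncard_le_ncard himage hfin

/-- A sequence tending to `∞` that at most doubles at each step meets `(X / 2, X]` for large `X`. -/
lemma eventually_exists_mem_dyadic {u : ℕ → ℝ} (hu : Tendsto u atTop atTop)
    (hstep : ∀ j, u (j + 1) ≤ 2 * u j) :
    ∀ᶠ X : ℝ in atTop, ∃ j, 1 ≤ j ∧ u j ≤ X ∧ X < 2 * u j := by
  classical
  filter_upwards [eventually_ge_atTop (u 1)] with X hX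
  have hex : ∃ j, X < u (j + 1) :=
    (((tendsto_add_atTop_iff_nat 1).mpr hu).eventually_gt_atTop X).exists
  have hspec := Nat.find_spec hex
  have hpos : 1 ≤ Nat.find hex := by
    rw [Nat.one_le_iff_ne_zero]
    intro h
    rw [h] at hspec
    exact absurd hspec (not_lt.mpr hX)
  refine ⟨Nat.find hex, hpos, ?_, hspec.trans_le (hstep _)⟩
  have := Nat.find_min hex (Nat.sub_lt hpos one_pos)
  rwa [Nat.sub_add_cancel hpos, not_lt] at this

lemma eventually_lt_sq_sub_log :
    ∀ᶠ B : ℝ in atTop, 4 * B ^ 2 / 225 < B ^ 2 / 36 - B * (2 + Real.log B) := by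
  have hlog := Real.isLittleO_log_id_atTop.bound (show (0 : ℝ) < 1 / 200 by norm_num)
  filter_upwards [hlog, eventually_gt_atTop 1000] with B hB hlarge
  have h1 : Real.log B ≤ 1 / 200 * B := by
    refine (le_abs_self _).trans ?_
    simpa [abs_of_pos (show (0 : ℝ) < B by linarith)] using hB
  nlinarith

theorem counting_restricted_rationals_of_bounded_height
    (f : ℝ → ℝ)
    (hf_gt : ∀ x : ℝ, 0 < x → 2 < f x)
    (hf_mono : MonotoneOn f (Set.Ioi (0 : ℝ)))
    (hf_top : Tendsto f atTop atTop)
    (hf_O : ∃ C : ℝ, 0 < C ∧ ∀ᶠ x : ℝ in atTop,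
      f x ≤ C * x ^ ((1 : ℝ) / 3) / (Real.log x) ^ ((7 : ℝ) / 3))
    (ϑ : ℝ → ℝ)
    (hϑ_gt : ∀ x : ℝ, 0 < x → 1 < ϑ x)
    (hϑ_mono : MonotoneOn ϑ (Set.Ioi (0 : ℝ)))
    (hϑ_top : Tendsto ϑ atTop atTop)
    (hϑ_O : ∃ C : ℝ, 0 < C ∧ ∀ᶠ x : ℝ in atTop, ϑ x ≤ C * x ^ ((1 : ℝ) / 4))
    (hϑ_rat : Tendsto (fun j : ℕ => ϑ ((2 : ℝ) ^ (j + 1)) / ϑ ((2 : ℝ) ^ j)) atTop (nhds 1)) :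
    ∀ᶠ X : ℝ in atTop,
      (X / (5 * Real.pi)) ^ 2 <
        (({q : ℚ | 0 < q ∧ q < 1 ∧ q.den ∈ Mset f ϑ ∧ (height q : ℝ) ≤ X}.ncard : ℝ)) := by
  have hB := tendsto_Bbig_atTop hf_gt hf_O hϑ_gt hϑ_O
  have hdyadic := eventually_exists_mem_dyadic hB (Bbig_succ_le hf_gt hf_mono hϑ_gt hϑ_mono)
  have hhalf : Tendsto (fun X : ℝ => X / 2) atTop atTop := tendsto_id.atTop_div_const two_pos
  obtain ⟨B₀, hB₀⟩ := eventually_atTop.mp (eventually_lt_sq_sub_log.and (eventually_ge_atTop 6))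
  filter_upwards [hdyadic, hhalf.eventually_ge_atTop B₀, eventually_gt_atTop 0] with
    X ⟨j, hj, hjX, hXj⟩ hX hX0
  set B := Bbig f ϑ j with hBdef
  obtain ⟨hlarge, hB6⟩ := hB₀ B (by linarith)
  have hcount := sum_totient_le_ncard (M := Mset f ϑ) (X := X) (Finset.Ioc ⌊5 / 6 * B⌋₊ ⌊B⌋₊) (by
    intro n hn
    rw [Finset.mem_Ioc] at hn
    have h1 : 5 / 6 * B < n := Nat.lt_of_floor_lt hn.1
    have h2 : (n : ℝ) ≤ B := (Nat.le_floor_iff (by linarith)).mp hn.2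
    refine ⟨?_, ⟨j, hj, ?_, h2⟩, h2.trans hjX⟩
    · have : (2 : ℝ) ≤ n := by linarith
      exact_mod_cast this
    · rw [bsmall, ← hBdef]
      linarith)
  have hcount' := (Nat.cast_le (α := ℝ)).mpr hcount
  rw [Nat.cast_sum] at hcount'
  refine lt_of_lt_of_le ?_ ((le_sum_totient_Ioc hB6).trans hcount')
  refine lt_of_le_of_lt ?_ hlarge
  calc (X / (5 * Real.pi)) ^ 2 ≤ (2 * B / (5 * 3)) ^ 2 := by
        gcongr
        exact Real.pi_gt_three.le
    _ = 4 * B ^ 2 / 225 := by ring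
end
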